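/- Let κ = log(π/2)/2. For every ε > 0, the set of m ∈ S₂ such that |ρ_m(I) − σ(I)| < (log m)^{−κ+ε} for every arc I ⊆ S¹ has relative density 1 in S₂. -/

import Mathlib

/-!
Identify `Λ_m` with the Gaussian integers of norm `m`. The Fourier coefficients of `ρ_m` vanish
unless the frequency is a multiple of `4`, and the coefficient of frequency `4l` has absolute value
`EH.gl l m = |R l m| / R 0 m`, where `4 * R l m` is the sum of `(z / |z|) ^ (4l)` over `z` of norm
`m`. Unique factorization in `ℤ[i]` makes `R l` and `gl l` multiplicative; at a prime `p ≡ 1 mod 4`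
one has `R l p = 2 cos (4lθ_p)`. An arc has uniform measure proportional to its length
(`EH.unif_arc`), so an Erdős–Turán inequality (`EH.discrepancy`, `EH.disc_main`) bounds the
discrepancy over all arcs by `∑_{l ≤ H} gl l m / l` up to small errors.

A typical `m ∈ S₂` has about `(1/2) log log m` prime factors, and the mean of `|cos θ|` is `2/π`, so
`gl l m` should be about `(2/π) ^ ((1/2) log log m) = (log m) ^ (-κ)`. Three estimates make this
precise.

* The angles `4θ_p` are equidistributed. A lattice point count (`EH.sum_R_bound`) controls the
  Dirichlet series `LR` of `R l` up to `σ = 1`, and its Euler product (`EH.log_LR`) together with the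
  `3-4-1` inequality bounds it from below, losing a small power of `l` (`EH.LR_lower`). Hence the
  twisted prime sums are at most `θ log l + O(1)` up to `σ = 1`, for each `θ > 0` (`EH.PR_twist`),
  and polynomial approximation gives the mean `2/π` of `|cos|` over primes (`EH.sum_abs_R`).
* A Hall–Tenenbaum type bound for nonnegative multiplicative functions (`EH.sum_mult_le`) yields
  `∑_{m ≤ N} gl l m * (π/2) ^ ω(m) ≪ l ^ δ * N * (log N) ^ (-1/2 + δ)` (`EH.sum_gl`), and bounds the
  number of `m ∈ S₂` with fewer than `(y/2) log log N` prime factors, `y < 1`, by `N` times a power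
  of `log N` with exponent below `-1/2` (`EH.few_primes`). For the remaining `m`, Markov's
  inequality bounds the number of those whose sum `∑ gl l m / l` is large (`EH.many_primes`).
* There are `≫ N / √(log N)` sums of two squares up to `N` (`EH.count_lower`), so that the
  exceptional `m` have relative density zero (`EH.density_one`).
-/

open MeasureTheory ProbabilityTheory Real Filter

noncomputable section

abbrev En (n : ℕ) := EuclideanSpace ℝ (Fin n)

/-- The rescaled lattice points `Λ_m = {λ ∈ (1/√m)ℤⁿ : |λ| = 1}` on the unit sphere. -/
def Lam (n m : ℕ) : Set (En n) :=
  {x | ‖x‖ = 1 ∧ ∀ i, ∃ z : ℤ, x i = z / Real.sqrt m}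

/-- `r_n(m)`, the number of points of `Λ_m`. -/
def rcnt (n m : ℕ) : ℕ := Nat.card (Lam n m)

/-- The normalized counting (probability) measure `ρ_m` on `Λ_m`. -/
def rhoM (n m : ℕ) : Measure (En n) :=
  ((rcnt n m : ENNReal))⁻¹ • Measure.count.restrict (Lam n m)

/-- The uniform (normalized arc-length) probability measure on the unit circle,
defined via the `1`-dimensional Hausdorff measure. -/
def unifSphere (n : ℕ) : Measure (En n) :=
  (μH[(n : ℝ) - 1] (Metric.sphere (0 : En n) 1))⁻¹ •
    (μH[(n : ℝ) - 1]).restrict (Metric.sphere (0 : En n) 1)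

/-- Integers that are sums of two squares. -/
def S₂ : Set ℕ := {m | 1 ≤ m ∧ ∃ a b : ℤ, (m : ℤ) = a ^ 2 + b ^ 2}

/-- `A` has relative density one in `B`. -/
def HasRelDensityOne (A B : Set ℕ) : Prop :=
  Tendsto (fun N : ℕ =>
      (Nat.card ↥(A ∩ Set.Icc 1 N) : ℝ) / (Nat.card ↥(B ∩ Set.Icc 1 N) : ℝ))
    atTop (nhds 1)

/-- An arc of the unit circle. -/
def arc (a b : ℝ) : Set (En 2) :=
  (fun θ : ℝ => (EuclideanSpace.equiv (Fin 2) ℝ).symm ![Real.cos θ, Real.sin θ]) ''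
    Set.Icc a b

namespace EH

/-! ### Gaussian integers of a given norm and their angular sums -/

/-- The Gaussian integers of norm `n` (empty for `n = 0`). -/
def gs (n : ℕ) : Finset GaussianInt :=
  ((Finset.Icc (-(n : ℤ)) n ×ˢ Finset.Icc (-(n : ℤ)) n).image
    (fun ab => (⟨ab.1, ab.2⟩ : GaussianInt))).filter (fun z => z.norm = n ∧ n ≠ 0)

lemma gnorm_eq (z : GaussianInt) : z.norm = z.re * z.re + z.im * z.im := by
  rw [Zsqrtd.norm_def]; ring

lemma mem_gs {n : ℕ} {z : GaussianInt} : z ∈ gs n ↔ z.norm = n ∧ n ≠ 0 := by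
  unfold gs
  rw [Finset.mem_filter]
  constructor
  · exact fun h => h.2
  · intro h
    refine ⟨?_, h⟩
    rw [Finset.mem_image]
    have h1 := h.1
    rw [gnorm_eq] at h1
    refine ⟨(z.re, z.im), ?_, rfl⟩
    simp only [Finset.mem_product, Finset.mem_Icc]
    refine ⟨⟨?_, ?_⟩, ?_, ?_⟩ <;> nlinarith [mul_self_nonneg z.re, mul_self_nonneg z.im,
      mul_self_nonneg (z.re + 1), mul_self_nonneg (z.re - 1), mul_self_nonneg (z.im + 1),
      mul_self_nonneg (z.im - 1)]

lemma gs_ne_zero {n : ℕ} {z : GaussianInt} (h : z ∈ gs n) : z ≠ 0 := by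
  rintro rfl
  obtain ⟨h1, h2⟩ := mem_gs.1 h
  simp at h1
  exact h2 (by exact_mod_cast h1.symm)

lemma gs_zero : gs 0 = ∅ := by
  ext z; simp [mem_gs]

/-- The angular character `(z / |z|) ^ k`. -/
def ang (k : ℕ) (z : GaussianInt) : ℂ := ((z : ℂ) / ((‖(z : ℂ)‖ : ℝ) : ℂ)) ^ k

lemma ang_mul (k : ℕ) (z w : GaussianInt) : ang k (z * w) = ang k z * ang k w := by
  unfold ang
  rw [GaussianInt.toComplex_mul, norm_mul, ← mul_pow]
  push_cast
  rw [mul_div_mul_comm]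

lemma ang_zero (z : GaussianInt) : ang 0 z = 1 := by simp [ang]

lemma ang_norm_le (k : ℕ) (z : GaussianInt) : ‖ang k z‖ ≤ 1 := by
  unfold ang
  rw [norm_pow, norm_div]
  apply pow_le_one₀ (by positivity)
  simp only [Complex.norm_real, norm_norm]
  exact div_self_le_one _

lemma ang_star (k : ℕ) (z : GaussianInt) : ang k (star z) = (starRingEnd ℂ) (ang k z) := by
  unfold ang
  rw [GaussianInt.toComplex_star, map_pow, map_div₀, RCLike.norm_conj, Complex.conj_ofReal]

lemma ang_pow (k j : ℕ) (z : GaussianInt) : ang (k * j) z = ang k z ^ j := by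
  unfold ang; rw [pow_mul]

lemma norm_star_g (z : GaussianInt) : (star z).norm = z.norm := by
  simp [gnorm_eq]

lemma star_mem_gs {n : ℕ} {z : GaussianInt} (h : z ∈ gs n) : star z ∈ gs n := by
  rw [mem_gs, norm_star_g]; exact mem_gs.1 h

lemma gs_one : gs 1 = {1, -1, ⟨0, 1⟩, ⟨0, -1⟩} := by decide

lemma card_gs_one : (gs 1).card = 4 := by rw [gs_one]; decide

lemma gs_one_unit {e : GaussianInt} (h : e ∈ gs 1) : e * star e = 1 := by
  have := (mem_gs.1 h).1
  rw [← Zsqrtd.norm_eq_mul_conj, this]; simp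

lemma ang_unit (l : ℕ) {e : GaussianInt} (h : e ∈ gs 1) : ang (4 * l) e = 1 := by
  have h4 : ang 4 e = 1 := by
    rw [gs_one] at h
    simp only [Finset.mem_insert, Finset.mem_singleton] at h
    unfold ang
    rcases h with rfl | rfl | rfl | rfl <;> simp [GaussianInt.toComplex_def, Complex.I_pow_four, Even.neg_pow (show Even 4 by decide)]
  rw [ang_pow, h4, one_pow]

/-- `R l n = (1/4) ∑ (z/|z|)^{4l}` over Gaussian integers of norm `n`; `R 0 n = r₂(n)/4`. -/
def R (l n : ℕ) : ℝ := (∑ z ∈ gs n, (ang (4 * l) z).re) / 4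

/-- The angular sum is real, by conjugation symmetry. -/
lemma sum_ang_eq (l n : ℕ) : ∑ z ∈ gs n, ang (4 * l) z = ((4 * R l n : ℝ) : ℂ) := by
  have him : (∑ z ∈ gs n, ang (4 * l) z).im = 0 := by
    have : ∑ z ∈ gs n, ang (4 * l) z = ∑ z ∈ gs n, (starRingEnd ℂ) (ang (4 * l) z) := by
      apply Finset.sum_bij' (fun z _ => star z) (fun z _ => star z)
      · intro z _; exact star_star z
      · intro z _; exact star_star z
      · intro z _; rw [ang_star, Complex.conj_conj]
      · intro z hz; exact star_mem_gs hz
      · intro z hz; exact star_mem_gs hz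
    rw [← map_sum] at this
    exact Complex.conj_eq_iff_im.1 this.symm
  apply Complex.ext
  · simp only [R, Complex.ofReal_re, Complex.re_sum]; ring
  · rw [him, Complex.ofReal_im]

lemma R_zero_eq (n : ℕ) : R 0 n = ((gs n).card : ℝ) / 4 := by
  simp [R, ang_zero]

lemma R_zero_nonneg (n : ℕ) : 0 ≤ R 0 n := by rw [R_zero_eq]; positivity

lemma R_at_zero (l : ℕ) : R l 0 = 0 := by simp [R, gs_zero]

lemma abs_R_le (l n : ℕ) : |R l n| ≤ R 0 n := by
  rw [R_zero_eq, R, abs_div, abs_of_pos (by norm_num : (0 : ℝ) < 4)]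
  apply div_le_div_of_nonneg_right _ (by norm_num)
  refine (Finset.abs_sum_le_sum_abs _ _).trans ?_
  calc ∑ z ∈ gs n, |(ang (4 * l) z).re| ≤ ∑ z ∈ gs n, (1 : ℝ) :=
        Finset.sum_le_sum fun z _ => (Complex.abs_re_le_norm _).trans (ang_norm_le _ _)
    _ = _ := by simp

lemma R_one (l : ℕ) : R l 1 = 1 := by
  have : ∀ z ∈ gs 1, (ang (4 * l) z).re = 1 := fun z hz => by rw [ang_unit l hz]; rfl
  rw [R, Finset.sum_congr rfl this, Finset.sum_const, card_gs_one]; norm_num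

lemma gs_nonempty_iff {m : ℕ} : (gs m).Nonempty ↔ m ∈ S₂ := by
  constructor
  · rintro ⟨z, hz⟩
    obtain ⟨h1, h2⟩ := mem_gs.1 hz
    exact ⟨Nat.one_le_iff_ne_zero.2 h2, z.re, z.im, by rw [← h1, gnorm_eq]; ring⟩
  · rintro ⟨h1, a, b, h⟩
    exact ⟨⟨a, b⟩, mem_gs.2 ⟨by rw [gnorm_eq, h]; ring, by omega⟩⟩

lemma R_zero_pos_iff {m : ℕ} : 0 < R 0 m ↔ m ∈ S₂ := by
  rw [← gs_nonempty_iff, R_zero_eq, ← Finset.card_pos]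
  constructor
  · intro h
    have : (0 : ℝ) < (gs m).card := by linarith
    exact_mod_cast this
  · intro h
    have : (0 : ℝ) < (gs m).card := by exact_mod_cast h
    linarith

lemma mul_mem_gs {m n : ℕ} {z w : GaussianInt} (hz : z ∈ gs m) (hw : w ∈ gs n) :
    z * w ∈ gs (m * n) := by
  rw [mem_gs] at *
  refine ⟨?_, Nat.mul_ne_zero hz.2 hw.2⟩
  rw [Zsqrtd.norm_mul, hz.1, hw.1]; push_cast; rfl

/-- Factorization along a coprime factorization of the norm. -/
lemma exists_factor {m n : ℕ} (h : m.Coprime n) {u : GaussianInt} (hu : u ∈ gs (m * n)) :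
    ∃ z ∈ gs m, ∃ w ∈ gs n, z * w = u := by
  obtain ⟨h1, h2⟩ := mem_gs.1 hu
  have hd : u ∣ (m : GaussianInt) * (n : GaussianInt) := by
    refine ⟨star u, ?_⟩
    rw [← Zsqrtd.norm_eq_mul_conj, h1]; push_cast; rfl
  obtain ⟨z, w, ⟨z', hz⟩, ⟨w', hw⟩, rfl⟩ := exists_dvd_and_dvd_of_dvd_mul hd
  have hm : m ≠ 0 := left_ne_zero_of_mul h2
  have hn : n ≠ 0 := right_ne_zero_of_mul h2
  -- `z` divides `m`, so its norm divides `m ^ 2`, and coprimality forces the norm to be `m`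
  have nz : z.norm.natAbs ∣ m ^ 2 := by
    refine ⟨z'.norm.natAbs, ?_⟩
    rw [← Int.natAbs_mul, ← Zsqrtd.norm_mul, ← hz, Zsqrtd.norm_natCast, ← Nat.cast_mul,
      Int.natAbs_natCast, sq]
  have nw : w.norm.natAbs ∣ n ^ 2 := by
    refine ⟨w'.norm.natAbs, ?_⟩
    rw [← Int.natAbs_mul, ← Zsqrtd.norm_mul, ← hw, Zsqrtd.norm_natCast, ← Nat.cast_mul,
      Int.natAbs_natCast, sq]
  have hprod : z.norm.natAbs * w.norm.natAbs = m * n := by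
    rw [← Int.natAbs_mul, ← Zsqrtd.norm_mul, h1, Int.natAbs_natCast]
  have c1 : z.norm.natAbs.Coprime n := Nat.Coprime.coprime_dvd_left nz (h.pow_left 2)
  have c2 : w.norm.natAbs.Coprime m := Nat.Coprime.coprime_dvd_left nw (h.symm.pow_left 2)
  have d1 : z.norm.natAbs ∣ m := c1.dvd_of_dvd_mul_right ⟨_, hprod.symm⟩
  have d2 : w.norm.natAbs ∣ n := c2.dvd_of_dvd_mul_left ⟨z.norm.natAbs, by rw [← hprod]; ring⟩
  have d3 : m ∣ z.norm.natAbs := by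
    obtain ⟨k, hk⟩ := d2
    refine ⟨k, ?_⟩
    have hw0 : 0 < w.norm.natAbs := Nat.pos_of_ne_zero (by rintro h0; rw [h0] at hk; omega)
    apply Nat.eq_of_mul_eq_mul_right hw0
    rw [hprod]; conv_lhs => rw [hk]
    ring
  have e1 : z.norm.natAbs = m := Nat.dvd_antisymm d1 d3
  have e2 : w.norm.natAbs = n := by
    rw [e1] at hprod; exact Nat.eq_of_mul_eq_mul_left (Nat.pos_of_ne_zero hm) hprod
  refine ⟨z, mem_gs.2 ⟨?_, hm⟩, w, mem_gs.2 ⟨?_, hn⟩, rfl⟩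
  · rw [← e1]; exact (GaussianInt.abs_natCast_norm z).symm
  · rw [← e2]; exact (GaussianInt.abs_natCast_norm w).symm

lemma unit_of_dvd_norm_eq {m : ℕ} {z z' : GaussianInt} (hz : z ∈ gs m) (hz' : z' ∈ gs m)
    (h : z ∣ z') : ∃ e ∈ gs 1, z' = e * z := by
  obtain ⟨e, rfl⟩ := h
  refine ⟨e, mem_gs.2 ⟨?_, one_ne_zero⟩, mul_comm _ _⟩
  obtain ⟨a, b⟩ := mem_gs.1 hz
  obtain ⟨c, _⟩ := mem_gs.1 hz'
  rw [Zsqrtd.norm_mul, a] at c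
  have : (m : ℤ) ≠ 0 := by exact_mod_cast b
  simpa using mul_left_cancel₀ this (c.trans (mul_one (m : ℤ)).symm)

/-- Unique factorization up to the four units: the product map `gs m × gs n → gs (m * n)` is
four-to-one, which gives the multiplicativity of `R l`. -/
lemma fiber_card {m n : ℕ} (h : m.Coprime n) {u : GaussianInt} (hu : u ∈ gs (m * n)) :
    ((gs m ×ˢ gs n).filter (fun zw => zw.1 * zw.2 = u)).card = 4 := by
  obtain ⟨z₀, hz₀, w₀, hw₀, rfl⟩ := exists_factor h hu
  rw [← card_gs_one]
  symm
  -- the factorizations of `z₀ * w₀` are `(e * z₀, star e * w₀)` with `e` a unit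
  apply Finset.card_bij (fun e _ => (e * z₀, star e * w₀))
  · intro e he
    simp only [Finset.mem_filter, Finset.mem_product]
    refine ⟨⟨by simpa using mul_mem_gs he hz₀, by simpa using mul_mem_gs (star_mem_gs he) hw₀⟩, ?_⟩
    calc e * z₀ * (star e * w₀) = (e * star e) * (z₀ * w₀) := by ring
      _ = _ := by rw [gs_one_unit he, one_mul]
  · intro e _ e' _ hee
    exact mul_right_cancel₀ (gs_ne_zero hz₀) (Prod.mk.inj hee).1
  · rintro ⟨z, w⟩ hzw
    simp only [Finset.mem_filter, Finset.mem_product] at hzw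
    obtain ⟨⟨hz, hw⟩, heq⟩ := hzw
    have hc : IsCoprime z₀ w := by
      have : IsCoprime ((m : ℤ)) (n : ℤ) := Nat.isCoprime_iff_coprime.2 h
      obtain ⟨a, b, hab⟩ := this
      refine ⟨a * star z₀, b * star w, ?_⟩
      have e1 : (m : GaussianInt) = z₀ * star z₀ := by
        rw [← Zsqrtd.norm_eq_mul_conj, (mem_gs.1 hz₀).1]; push_cast; rfl
      have e2 : (n : GaussianInt) = w * star w := by
        rw [← Zsqrtd.norm_eq_mul_conj, (mem_gs.1 hw).1]; push_cast; rfl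
      have := congrArg (Int.cast : ℤ → GaussianInt) hab
      push_cast at this
      rw [e1, e2] at this
      rw [← this]; ring
    have hd : z₀ ∣ z := hc.dvd_of_dvd_mul_right ⟨w₀, heq⟩
    obtain ⟨e, he, rfl⟩ := unit_of_dvd_norm_eq hz₀ hz hd
    refine ⟨e, he, ?_⟩
    congr 1
    have : e * w = w₀ := by
      apply mul_left_cancel₀ (gs_ne_zero hz₀)
      rw [← heq]; ring
    rw [← this, ← mul_assoc, mul_comm (star e), gs_one_unit he, one_mul]

lemma R_mul (l : ℕ) {m n : ℕ} (h : m.Coprime n) : R l (m * n) = R l m * R l n := by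
  have key : (∑ z ∈ gs m, ang (4 * l) z) * (∑ w ∈ gs n, ang (4 * l) w)
      = 4 * ∑ u ∈ gs (m * n), ang (4 * l) u := by
    rw [Finset.sum_mul_sum, ← Finset.sum_product',
      ← Finset.sum_fiberwise_of_maps_to (t := gs (m * n)) (g := fun zw => zw.1 * zw.2)
        (fun zw hzw => mul_mem_gs (Finset.mem_product.1 hzw).1 (Finset.mem_product.1 hzw).2),
      Finset.mul_sum]
    apply Finset.sum_congr rfl
    intro u hu
    rw [Finset.sum_congr rfl (g := fun _ => ang (4 * l) u), Finset.sum_const, fiber_card h hu]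
    · simp
    · intro zw hzw
      rw [← (Finset.mem_filter.1 hzw).2, ang_mul]
  simp only [sum_ang_eq] at key
  have : (4 * R l m) * (4 * R l n) = 4 * (4 * R l (m * n)) := by exact_mod_cast key
  linarith

/-! ### Values at prime powers -/

lemma prime_of_norm_prime {p : ℕ} (hp : p.Prime) {q : GaussianInt} (hq : q.norm = p) : Prime q := by
  apply Irreducible.prime
  have hnu : ∀ x : GaussianInt, x.norm.natAbs = 1 ↔ IsUnit x := fun x => Zsqrtd.norm_eq_one_iff
  constructor
  · rw [← hnu, hq, Int.natAbs_natCast]; exact hp.one_lt.ne'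
  · intro a b hab
    have : a.norm.natAbs * b.norm.natAbs = p := by
      rw [← Int.natAbs_mul, ← Zsqrtd.norm_mul, ← hab, hq, Int.natAbs_natCast]
    rw [← hnu, ← hnu]
    rcases (Nat.dvd_prime hp).1 ⟨_, this.symm⟩ with h | h
    · exact Or.inl h
    · right
      rw [h] at this
      exact Nat.eq_of_mul_eq_mul_left hp.pos (this.trans (mul_one p).symm)

lemma split_or_inert {p : ℕ} (hp : p.Prime) :
    (∃ q : GaussianInt, q.norm = p) ∨ Prime (p : GaussianInt) := by
  have := Fact.mk hp
  by_cases hi : Irreducible (p : GaussianInt)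
  · exact Or.inr hi.prime
  · obtain ⟨a, b, h⟩ := GaussianInt.sq_add_sq_of_nat_prime_of_not_irreducible p hi
    refine Or.inl ⟨⟨a, b⟩, ?_⟩
    rw [gnorm_eq, ← h]; push_cast; ring

lemma dvd_norm_cases {q z : GaussianInt} (hq : Prime q) (h : q ∣ (z.norm : GaussianInt)) :
    q ∣ z ∨ star q ∣ z := by
  rw [Zsqrtd.norm_eq_mul_conj] at h
  rcases hq.dvd_or_dvd h with h | h
  · exact Or.inl h
  · right
    obtain ⟨c, hc⟩ := h
    refine ⟨star c, ?_⟩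
    rw [← star_star z, hc, star_mul, mul_comm]

/-- Gaussian integers of norm `p ^ j`, for `p` the norm of `q`. -/
lemma norm_pow_repr {p : ℕ} (hp : p.Prime) {q : GaussianInt} (hq : q.norm = p) (j : ℕ) :
    ∀ z ∈ gs (p ^ j), ∃ e ∈ gs 1, ∃ a ≤ j, z = e * (q ^ a * star q ^ (j - a)) := by
  induction j with
  | zero => intro z hz; exact ⟨z, by simpa using hz, 0, le_rfl, by simp⟩
  | succ j ih =>
    intro z hz
    have hqs : (star q).norm = p := by rw [norm_star_g, hq]
    have hp0 : (p : ℤ) ≠ 0 := by exact_mod_cast hp.ne_zero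
    obtain ⟨h1, _⟩ := mem_gs.1 hz
    have hdiv : q ∣ (z.norm : GaussianInt) := by
      rw [h1]
      refine dvd_trans ⟨star q, ?_⟩ (dvd_pow_self (p : GaussianInt) (Nat.succ_ne_zero j) |>.trans
        (by push_cast; exact dvd_rfl))
      rw [← Zsqrtd.norm_eq_mul_conj, hq]; push_cast; rfl
    have step : ∀ q' w : GaussianInt, q'.norm = p → z = q' * w → w ∈ gs (p ^ j) := by
      intro q' w hq' hz'
      rw [mem_gs]
      refine ⟨?_, pow_ne_zero _ hp.ne_zero⟩
      rw [hz', Zsqrtd.norm_mul, hq'] at h1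
      apply mul_left_cancel₀ hp0
      rw [h1]; push_cast; ring
    rcases dvd_norm_cases (prime_of_norm_prime hp hq) hdiv with ⟨w, hw⟩ | ⟨w, hw⟩
    · obtain ⟨e, he, a, ha, rfl⟩ := ih w (step q w hq hw)
      refine ⟨e, he, a + 1, by omega, ?_⟩
      rw [hw, Nat.add_sub_add_right]; ring
    · obtain ⟨e, he, a, ha, rfl⟩ := ih w (step _ w hqs hw)
      refine ⟨e, he, a, by omega, ?_⟩
      rw [hw, show j + 1 - a = (j - a) + 1 by omega]; ring

lemma inert_repr {p : ℕ} (hp : p.Prime) (hq : Prime (p : GaussianInt)) (j : ℕ) :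
    ∀ z ∈ gs (p ^ j), ∃ e ∈ gs 1, ∃ i, j = 2 * i ∧ z = e * (p : GaussianInt) ^ i := by
  induction j using Nat.strong_induction_on with
  | _ j ih =>
    intro z hz
    have hp0 : (p : ℤ) ≠ 0 := by exact_mod_cast hp.ne_zero
    rcases Nat.eq_zero_or_pos j with rfl | hj
    · exact ⟨z, by simpa using hz, 0, rfl, by simp⟩
    obtain ⟨h1, _⟩ := mem_gs.1 hz
    have hdiv : (p : GaussianInt) ∣ (z.norm : GaussianInt) := by
      rw [h1]; push_cast; exact dvd_pow_self _ hj.ne'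
    have hpz : (p : GaussianInt) ∣ z := by
      rcases dvd_norm_cases hq hdiv with h | h
      · exact h
      · simpa using h
    obtain ⟨w, hw⟩ := hpz
    have h2 : (p : ℤ) * p * w.norm = (p : ℤ) ^ j := by
      rw [hw, Zsqrtd.norm_mul, Zsqrtd.norm_natCast] at h1
      rw [h1]; push_cast; rfl
    have hj2 : 2 ≤ j := by
      by_contra hlt
      have : j = 1 := by omega
      subst this
      have h3 : (p : ℤ) * w.norm = 1 := by
        apply mul_left_cancel₀ hp0; rw [← mul_assoc, h2]; ring
      have := Int.eq_one_or_neg_one_of_mul_eq_one h3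
      have := hp.one_lt
      omega
    obtain ⟨i, rfl⟩ := Nat.exists_eq_add_of_le hj2
    have hwm : w ∈ gs (p ^ i) := by
      rw [mem_gs]
      refine ⟨?_, pow_ne_zero _ hp.ne_zero⟩
      apply mul_left_cancel₀ (mul_ne_zero hp0 hp0)
      rw [h2]; push_cast; ring
    obtain ⟨e, he, k, hk, rfl⟩ := ih i (by omega) w hwm
    exact ⟨e, he, k + 1, by omega, by rw [hw]; ring⟩

lemma R_zero_prime_pow_le {p : ℕ} (hp : p.Prime) (j : ℕ) : R 0 (p ^ j) ≤ j + 1 := by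
  rw [R_zero_eq]
  have key : (gs (p ^ j)).card ≤ 4 * (j + 1) := by
    rcases split_or_inert hp with ⟨q, hq⟩ | hq
    · calc (gs (p ^ j)).card ≤ ((gs 1 ×ˢ Finset.range (j + 1)).image
            (fun x => x.1 * (q ^ x.2 * star q ^ (j - x.2)))).card := by
            apply Finset.card_le_card
            intro z hz
            obtain ⟨e, he, a, ha, rfl⟩ := norm_pow_repr hp hq j z hz
            exact Finset.mem_image.2 ⟨(e, a), Finset.mem_product.2
              ⟨he, Finset.mem_range.2 (by simpa using Nat.lt_succ_of_le ha)⟩, rfl⟩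
        _ ≤ _ := Finset.card_image_le
        _ = _ := by rw [Finset.card_product, card_gs_one, Finset.card_range]
    · calc (gs (p ^ j)).card ≤ ((gs 1).image (fun x => x * (p : GaussianInt) ^ (j / 2))).card := by
            apply Finset.card_le_card
            intro z hz
            obtain ⟨e, he, i, hi, rfl⟩ := inert_repr hp hq j z hz
            exact Finset.mem_image.2 ⟨e, he, by rw [hi]; simp⟩
        _ ≤ (gs 1).card := Finset.card_image_le
        _ ≤ _ := by rw [card_gs_one]; omega
  have : ((gs (p ^ j)).card : ℝ) ≤ 4 * (j + 1) := by exact_mod_cast key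
  linarith

lemma R_inert {p : ℕ} (hp : p.Prime) (hq : Prime (p : GaussianInt)) (j : ℕ) :
    R 0 (p ^ j) ≤ 1 := by
  rw [R_zero_eq]
  have key : (gs (p ^ j)).card ≤ 4 := by
    calc (gs (p ^ j)).card ≤ ((gs 1).image (fun x => x * (p : GaussianInt) ^ (j / 2))).card := by
            apply Finset.card_le_card
            intro z hz
            obtain ⟨e, he, i, hi, rfl⟩ := inert_repr hp hq j z hz
            exact Finset.mem_image.2 ⟨e, he, by rw [hi]; simp⟩
        _ ≤ (gs 1).card := Finset.card_image_le
        _ = _ := card_gs_one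
  have : ((gs (p ^ j)).card : ℝ) ≤ 4 := by exact_mod_cast key
  linarith

lemma R_inert_prime {p : ℕ} (hp : p.Prime) (hq : Prime (p : GaussianInt)) : R 0 p = 0 := by
  rw [R_zero_eq]
  have : gs p = ∅ := by
    rw [Finset.eq_empty_iff_forall_notMem]
    intro z hz
    obtain ⟨e, he, i, hi, -⟩ := inert_repr hp hq 1 z (by simpa using hz)
    omega
  simp [this]

lemma ang_eq_exp (k : ℕ) {z : GaussianInt} (hz : z ≠ 0) :
    ang k z = Complex.exp ((k * Complex.arg (z : ℂ) : ℝ) * Complex.I) := by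
  have hz' : (z : ℂ) ≠ 0 := by simpa using hz
  have : (z : ℂ) / ((‖(z : ℂ)‖ : ℝ) : ℂ) = Complex.exp (Complex.arg (z : ℂ) * Complex.I) := by
    rw [div_eq_iff (by simpa using hz'), mul_comm]
    exact (Complex.norm_mul_exp_arg_mul_I _).symm
  rw [ang, this, ← Complex.exp_nat_mul]
  congr 1; push_cast; ring

lemma ang_re (k : ℕ) {z : GaussianInt} (hz : z ≠ 0) :
    (ang k z).re = Real.cos (k * Complex.arg (z : ℂ)) := by
  rw [ang_eq_exp k hz, Complex.exp_ofReal_mul_I_re]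

/-- For every prime `p` there is an angle `θ` governing all the `R l p`. -/
lemma exists_angle {p : ℕ} (hp : p.Prime) :
    ∃ θ : ℝ, ∀ l : ℕ, R l p = R 0 p * Real.cos (4 * l * θ) := by
  rcases split_or_inert hp with ⟨q, hq⟩ | hq
  · refine ⟨Complex.arg (q : ℂ), fun l => ?_⟩
    have hq0 : q ≠ 0 := by
      rintro rfl
      simp at hq; exact hp.ne_zero (by exact_mod_cast hq.symm)
    have hc : (ang (4 * l) q).re = Real.cos (4 * l * Complex.arg (q : ℂ)) := by
      rw [ang_re _ hq0]; push_cast; rfl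
    have : ∀ z ∈ gs p, (ang (4 * l) z).re = Real.cos (4 * l * Complex.arg (q : ℂ)) := by
      intro z hz
      obtain ⟨e, he, a, ha, rfl⟩ := norm_pow_repr hp hq 1 z (by simpa using hz)
      rw [ang_mul, ang_unit l he, one_mul]
      interval_cases a
      · simp [ang_star, hc]
      · simp [hc]
    rw [R, Finset.sum_congr rfl this, R_zero_eq, Finset.sum_const, nsmul_eq_mul]; ring
  · refine ⟨0, fun l => ?_⟩
    have h0 := R_inert_prime hp hq
    have := abs_R_le l p
    rw [h0] at this ⊢
    rw [zero_mul]
    exact abs_eq_zero.1 (le_antisymm this (abs_nonneg _))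

/-- At powers of `2` the even twists are trivial, as `(1 + i) / √2` is an eighth root of unity; this
keeps the Euler factor at `2` positive. -/
lemma R_two_pow (l j : ℕ) : R (2 * l) (2 ^ j) = R 0 (2 ^ j) := by
  have hn : (⟨1, 1⟩ : GaussianInt).norm = ((2 : ℕ) : ℤ) := by rw [gnorm_eq]; norm_num
  have h1 : ang 8 (⟨1, 1⟩ : GaussianInt) = 1 := by
    have : (⟨1, 1⟩ : GaussianInt) * ⟨1, 1⟩ = 2 * ⟨0, 1⟩ := by ext <;> norm_num
    have h2 : ang 2 (⟨1, 1⟩ : GaussianInt) = Complex.I := by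
      have hh : ‖(1 : ℂ) + Complex.I‖ ^ 2 = 2 := by
        rw [← Complex.normSq_eq_norm_sq]; norm_num [Complex.normSq_apply]
      have h3 : (((‖(1 : ℂ) + Complex.I‖ : ℝ) : ℂ)) ^ 2 = 2 := by exact_mod_cast hh
      rw [ang, GaussianInt.toComplex_def, div_pow]
      push_cast
      rw [one_mul, h3, add_sq, Complex.I_sq]; ring
    rw [show 8 = 2 * 4 from rfl, ang_pow, h2, Complex.I_pow_four]
  have h8 : ∀ z ∈ gs (2 ^ j), (ang (4 * (2 * l)) z).re = (ang (4 * 0) z).re := by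
    intro z hz
    obtain ⟨e, he, a, ha, rfl⟩ := norm_pow_repr Nat.prime_two hn j z hz
    have hpw : ∀ (w : GaussianInt) (i : ℕ), ang 8 w = 1 → ang 8 (w ^ i) = 1 := by
      intro w i hw
      induction i with
      | zero => simpa using ang_unit 2 (e := 1) (by decide)
      | succ i ih => rw [pow_succ, ang_mul, ih, hw, one_mul]
    have hs : ang 8 (star (⟨1, 1⟩ : GaussianInt)) = 1 := by rw [ang_star, h1]; simp
    rw [ang_mul, ang_unit _ he, one_mul, show 4 * (2 * l) = 8 * l by ring, ang_pow, ang_mul,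
      hpw _ _ h1, hpw _ _ hs]
    simp [ang_zero]
  rw [R, R, Finset.sum_congr rfl h8]

lemma R_zero_odd_prime {p : ℕ} (hp : p.Prime) (h2 : p ≠ 2) (hS : p ∈ S₂) : R 0 p = 2 := by
  apply le_antisymm
  · have := R_zero_prime_pow_le hp 1
    norm_num at this; exact this
  obtain ⟨q, hq⟩ := gs_nonempty_iff.2 hS
  have hqn := (mem_gs.1 hq).1
  have hodd : p % 2 = 1 := hp.eq_two_or_odd.resolve_left h2
  have hne : ∀ e ∈ gs 1, star q ≠ e * q := by
    intro e he h
    rw [gs_one] at he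
    simp only [Finset.mem_insert, Finset.mem_singleton] at he
    rw [gnorm_eq] at hqn
    have hre := congrArg Zsqrtd.re h
    have him := congrArg Zsqrtd.im h
    have hsq : ∀ a : ℤ, a * a ≠ p := by
      intro a ha
      have hpi : Prime (p : ℤ) := Nat.prime_iff_prime_int.1 hp
      rw [← ha] at hpi
      have := hpi.irreducible.isUnit_or_isUnit rfl
      rw [or_self] at this
      exact hpi.not_isUnit (this.mul this)
    rcases he with rfl | rfl | rfl | rfl <;> simp at hre him
    · have : q.im = 0 := by omega
      rw [this] at hqn; exact hsq q.re (by simpa using hqn)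
    · have : q.re = 0 := by omega
      rw [this] at hqn; exact hsq q.im (by simpa using hqn)
    · rw [hre] at hqn
      have : (p : ℤ) = 2 * (q.im * q.im) := by rw [← hqn]; ring
      omega
    · rw [hre] at hqn
      have : (p : ℤ) = 2 * (q.im * q.im) := by rw [← hqn]; ring
      omega
  have hinj : ∀ w : GaussianInt, w ≠ 0 → ((gs 1).image (fun e => e * w)).card = 4 := by
    intro w hw
    rw [Finset.card_image_of_injective _ (mul_left_injective₀ hw), card_gs_one]
  have hsub : (gs 1).image (fun e => e * q) ∪ (gs 1).image (fun e => e * star q) ⊆ gs p := by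
    intro z hz
    rcases Finset.mem_union.1 hz with hz | hz
    · obtain ⟨e, he, rfl⟩ := Finset.mem_image.1 hz
      simpa using mul_mem_gs he hq
    · obtain ⟨e, he, rfl⟩ := Finset.mem_image.1 hz
      simpa using mul_mem_gs he (star_mem_gs hq)
  have hdis : Disjoint ((gs 1).image (fun e => e * q)) ((gs 1).image (fun e => e * star q)) := by
    rw [Finset.disjoint_left]
    intro z hz hz'
    obtain ⟨e, he, rfl⟩ := Finset.mem_image.1 hz
    obtain ⟨e', he', h⟩ := Finset.mem_image.1 hz'
    apply hne (star e' * e) (by simpa using mul_mem_gs (star_mem_gs he') he)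
    calc star q = (e' * star e') * star q := by rw [gs_one_unit he', one_mul]
      _ = star e' * (e' * star q) := by ring
      _ = star e' * (e * q) := by rw [h]
      _ = _ := by ring
  have := Finset.card_le_card hsub
  rw [Finset.card_union_of_disjoint hdis, hinj q (gs_ne_zero hq),
    hinj _ (gs_ne_zero (star_mem_gs hq))] at this
  rw [R_zero_eq]
  have : (8 : ℝ) ≤ (gs p).card := by exact_mod_cast this
  linarith

/-- The indicator function of sums of two squares. -/
def sInd (n : ℕ) : ℝ := if 0 < R 0 n then 1 else 0

lemma sInd_nonneg (n : ℕ) : 0 ≤ sInd n := by unfold sInd; split_ifs <;> norm_num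

lemma sInd_le_one (n : ℕ) : sInd n ≤ 1 := by unfold sInd; split_ifs <;> norm_num

lemma sInd_one : sInd 1 = 1 := by simp [sInd, R_one]

lemma sInd_of_mem {n : ℕ} (h : n ∈ S₂) : sInd n = 1 := by
  rw [sInd, if_pos (R_zero_pos_iff.2 h)]

lemma sInd_of_notMem {n : ℕ} (h : n ∉ S₂) : sInd n = 0 := by
  rw [sInd, if_neg (fun h' => h (R_zero_pos_iff.1 h'))]

lemma sInd_mul {m n : ℕ} (h : m.Coprime n) : sInd (m * n) = sInd m * sInd n := by
  unfold sInd
  rw [R_mul 0 h]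
  have h1 := R_zero_nonneg m
  have h2 := R_zero_nonneg n
  by_cases hm : 0 < R 0 m
  · by_cases hn : 0 < R 0 n
    · simp [hm, hn]
    · have : R 0 n = 0 := le_antisymm (not_lt.1 hn) h2
      simp [this]
  · have : R 0 m = 0 := le_antisymm (not_lt.1 hm) h1
    simp [this]

/-- `sInd` as an arithmetic function. -/
def sA : ArithmeticFunction ℝ := ⟨sInd, by simp [sInd, R_at_zero]⟩

/-- `R l` as an arithmetic function. -/
def RA (l : ℕ) : ArithmeticFunction ℝ := ⟨R l, R_at_zero l⟩

lemma sA_mult : sA.IsMultiplicative := ⟨sInd_one, fun h => sInd_mul h⟩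

lemma RA_mult (l : ℕ) : (RA l).IsMultiplicative := ⟨R_one l, fun h => R_mul l h⟩

lemma conv_prime_pow {p : ℕ} (hp : p.Prime) (j : ℕ) : R 0 (p ^ j) ≤ (sA * sA) (p ^ j) := by
  have hs : ∀ n, sA n = sInd n := fun _ => rfl
  rw [ArithmeticFunction.mul_apply, Nat.sum_divisorsAntidiagonal (fun a b => sA a * sA b),
    Nat.sum_divisors_prime_pow hp]
  simp only [hs]
  rcases split_or_inert hp with ⟨q, hq⟩ | hq
  · have hall : ∀ i, sInd (p ^ i) = 1 := by
      intro i
      apply sInd_of_mem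
      rw [← gs_nonempty_iff]
      refine ⟨q ^ i, mem_gs.2 ⟨?_, pow_ne_zero _ hp.ne_zero⟩⟩
      induction i with
      | zero => simp
      | succ i ih => rw [pow_succ, Zsqrtd.norm_mul, ih, hq]; push_cast; ring
    refine (R_zero_prime_pow_le hp j).trans (le_of_eq ?_)
    rw [Finset.sum_congr rfl (g := fun _ => (1 : ℝ))]
    · simp
    · intro i hi
      have : i ≤ j := Nat.lt_succ_iff.1 (Finset.mem_range.1 hi)
      rw [Nat.pow_div this hp.pos, hall, hall, one_mul]
  · by_cases h : R 0 (p ^ j) = 0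
    · rw [h]
      exact Finset.sum_nonneg fun i _ => mul_nonneg (sInd_nonneg _) (sInd_nonneg _)
    · refine (R_inert hp hq j).trans ?_
      have h1 : sInd (p ^ j) = 1 := by
        rw [sInd, if_pos (lt_of_le_of_ne (R_zero_nonneg _) (Ne.symm h))]
      calc (1 : ℝ) = sInd (p ^ 0) * sInd (p ^ j / p ^ 0) := by simp [sInd_one, h1]
        _ ≤ _ := Finset.single_le_sum (f := fun i => sInd (p ^ i) * sInd (p ^ j / p ^ i))
            (fun i _ => mul_nonneg (sInd_nonneg _) (sInd_nonneg _)) (Finset.mem_range.2 (by omega))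

/-- `r₂(n)/4` is at most the number of factorizations of `n` into two sums of two squares. -/
lemma R_le_conv (n : ℕ) : R 0 n ≤ (sA * sA) n := by
  rcases Nat.eq_zero_or_pos n with rfl | hn
  · simp [R_at_zero]
  have h1 := (RA_mult 0).multiplicative_factorization (RA 0) hn.ne'
  have h2 := (sA_mult.mul sA_mult).multiplicative_factorization (sA * sA) hn.ne'
  have h3 : R 0 n = RA 0 n := rfl
  rw [h3, h1, h2]
  apply Finset.prod_le_prod
  · intro p _; exact R_zero_nonneg _
  · intro p hp
    exact conv_prime_pow (Nat.prime_of_mem_primeFactors (by simpa using hp)) _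

/-! ### Lattice points in a disc, twisted by an angular character -/

/-- The cell of `z`: the unit square with lower left corner `z`. -/
def cell (z : GaussianInt) : Set ℂ := {x | ⌊x.re⌋ = z.re ∧ ⌊x.im⌋ = z.im}

/-- Lower left corner of the cell containing `x`. -/
def fl (x : ℂ) : GaussianInt := ⟨⌊x.re⌋, ⌊x.im⌋⟩

lemma cell_eq (z : GaussianInt) : cell z = Complex.measurableEquivRealProd ⁻¹'
    (Set.Ico (z.re : ℝ) (z.re + 1) ×ˢ Set.Ico (z.im : ℝ) (z.im + 1)) := by
  ext x
  simp [cell, Complex.measurableEquivRealProd, Int.floor_eq_iff]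

lemma measurableSet_cell (z : GaussianInt) : MeasurableSet (cell z) := by
  rw [cell_eq]
  exact Complex.measurableEquivRealProd.measurable (measurableSet_Ico.prod measurableSet_Ico)

lemma volume_cell (z : GaussianInt) : volume (cell z) = 1 := by
  rw [cell_eq, Complex.volume_preserving_equiv_real_prod.measure_preimage
    (measurableSet_Ico.prod measurableSet_Ico).nullMeasurableSet,
    MeasureTheory.Measure.volume_eq_prod, Measure.prod_prod]
  simp

lemma mem_cell {x : ℂ} {z : GaussianInt} : x ∈ cell z ↔ fl x = z := by
  rw [Zsqrtd.ext_iff]; rfl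

lemma norm_sub_fl (x : ℂ) : ‖x - (fl x : ℂ)‖ ≤ 2 := by
  refine (Complex.norm_le_abs_re_add_abs_im _).trans ?_
  have h1 : (x - (fl x : ℂ)).re = Int.fract x.re := by
    simp [fl, GaussianInt.toComplex_def]
  have h2 : (x - (fl x : ℂ)).im = Int.fract x.im := by
    simp [fl, GaussianInt.toComplex_def]
  rw [h1, h2, abs_of_nonneg (Int.fract_nonneg _), abs_of_nonneg (Int.fract_nonneg _)]
  linarith [Int.fract_lt_one x.re, Int.fract_lt_one x.im]

lemma comp_fl_eq (g : GaussianInt → ℂ) (S : Finset GaussianInt) (hS : ∀ z, z ∉ S → g z = 0) :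
    (fun x => g (fl x)) = fun x => ∑ z ∈ S, (cell z).indicator (fun _ => g z) x := by
  funext x
  by_cases hx : fl x ∈ S
  · rw [Finset.sum_eq_single (fl x)]
    · rw [Set.indicator_of_mem (mem_cell.2 rfl)]
    · intro z _ hz
      exact Set.indicator_of_notMem (fun h => hz (mem_cell.1 h).symm) _
    · exact fun h => absurd hx h
  · rw [hS _ hx, Finset.sum_eq_zero]
    intro z hz
    exact Set.indicator_of_notMem (fun h => hx (mem_cell.1 h ▸ hz)) _

lemma integrable_comp_fl (g : GaussianInt → ℂ) (S : Finset GaussianInt)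
    (hS : ∀ z, z ∉ S → g z = 0) : Integrable (fun x => g (fl x)) := by
  rw [comp_fl_eq g S hS]
  apply integrable_finsetSum
  intro z _
  rw [integrable_indicator_iff (measurableSet_cell z)]
  exact integrableOn_const (by rw [volume_cell]; simp) (by simp)

lemma integral_comp_fl (g : GaussianInt → ℂ) (S : Finset GaussianInt)
    (hS : ∀ z, z ∉ S → g z = 0) : ∫ x, g (fl x) = ∑ z ∈ S, g z := by
  rw [comp_fl_eq g S hS, integral_finsetSum]
  · apply Finset.sum_congr rfl
    intro z _
    rw [integral_indicator (measurableSet_cell z), setIntegral_const]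
    simp [Measure.real, volume_cell]
  · intro z _
    rw [integrable_indicator_iff (measurableSet_cell z)]
    exact integrableOn_const (by rw [volume_cell]; simp) (by simp)

/-- The angular character on all of `ℂ`. -/
def ch (l : ℕ) (x : ℂ) : ℂ := (x / ((‖x‖ : ℝ) : ℂ)) ^ (4 * l)

lemma norm_unit_le (x : ℂ) : ‖x / ((‖x‖ : ℝ) : ℂ)‖ ≤ 1 := by
  rw [norm_div, Complex.norm_real, norm_norm]
  exact div_self_le_one _

lemma norm_ch_le (l : ℕ) (x : ℂ) : ‖ch l x‖ ≤ 1 := by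
  unfold ch
  rw [norm_pow]
  exact pow_le_one₀ (norm_nonneg _) (norm_unit_le x)

lemma measurable_ch (l : ℕ) : Measurable (ch l) := by
  unfold ch
  exact (measurable_id.div (Complex.measurable_ofReal.comp measurable_norm)).pow_const _

lemma pow_sub_pow_le {a b : ℂ} (ha : ‖a‖ ≤ 1) (hb : ‖b‖ ≤ 1) (n : ℕ) :
    ‖a ^ n - b ^ n‖ ≤ n * ‖a - b‖ := by
  induction n with
  | zero => simp
  | succ n ih =>
    have : a ^ (n + 1) - b ^ (n + 1) = a ^ n * (a - b) + (a ^ n - b ^ n) * b := by ring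
    rw [this]
    refine (norm_add_le _ _).trans ?_
    rw [norm_mul, norm_mul, norm_pow]
    have h1 : ‖a‖ ^ n ≤ 1 := pow_le_one₀ (norm_nonneg _) ha
    push_cast
    nlinarith [norm_nonneg (a - b), norm_nonneg (a ^ n - b ^ n), norm_nonneg b]

lemma unit_sub_le (x w : ℂ) (hx : x ≠ 0) :
    ‖x / ((‖x‖ : ℝ) : ℂ) - w / ((‖w‖ : ℝ) : ℂ)‖ ≤ 2 * ‖x - w‖ / ‖x‖ := by
  have hx0 : 0 < ‖x‖ := norm_pos_iff.2 hx
  rw [le_div_iff₀ hx0]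
  rcases eq_or_ne w 0 with rfl | hw
  · simp only [zero_div, sub_zero]
    nlinarith [norm_unit_le x]
  have hw0 : 0 < ‖w‖ := norm_pos_iff.2 hw
  have e : (x / ((‖x‖ : ℝ) : ℂ) - w / ((‖w‖ : ℝ) : ℂ)) * ((‖x‖ : ℝ) : ℂ)
      = (x - w) + (w / ((‖w‖ : ℝ) : ℂ)) * (((‖w‖ - ‖x‖ : ℝ)) : ℂ) := by
    have : ((‖x‖ : ℝ) : ℂ) ≠ 0 := by exact_mod_cast hx0.ne'
    have : ((‖w‖ : ℝ) : ℂ) ≠ 0 := by exact_mod_cast hw0.ne'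
    field_simp
    push_cast
    ring
  calc _ = ‖(x / ((‖x‖ : ℝ) : ℂ) - w / ((‖w‖ : ℝ) : ℂ)) * ((‖x‖ : ℝ) : ℂ)‖ := by
        rw [norm_mul, Complex.norm_real, norm_norm]
    _ ≤ ‖x - w‖ + ‖w / ((‖w‖ : ℝ) : ℂ)‖ * |‖w‖ - ‖x‖| := by
        rw [e]
        refine (norm_add_le _ _).trans ?_
        rw [norm_mul _ (((‖w‖ - ‖x‖ : ℝ)) : ℂ), Complex.norm_real, Real.norm_eq_abs]
    _ ≤ ‖x - w‖ + 1 * ‖x - w‖ := by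
        gcongr
        · exact norm_unit_le w
        · rw [abs_sub_comm]; exact abs_norm_sub_norm_le _ _
    _ = _ := by ring

/-- Rotation by `π / (4 l)` negates the character. -/
lemma integral_ch_zero {l : ℕ} (hl : 1 ≤ l) (ρ : ℝ) :
    ∫ x, (Metric.closedBall (0 : ℂ) ρ).indicator (ch l) x = 0 := by
  set u : Circle := Circle.exp (π / (4 * l)) with hu
  have hpow : (u : ℂ) ^ (4 * l) = -1 := by
    rw [hu, Circle.coe_exp, ← Complex.exp_nat_mul, ← Complex.exp_pi_mul_I]
    congr 1
    have : (l : ℂ) ≠ 0 := by exact_mod_cast (by omega : l ≠ 0)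
    push_cast; field_simp
  have hmp := (rotation u).measurePreserving
  have h1 := hmp.integral_comp' (f := (rotation u).toHomeomorph.toMeasurableEquiv)
    (fun x => (Metric.closedBall (0 : ℂ) ρ).indicator (ch l) x)
  have h2 : ∀ x : ℂ, (Metric.closedBall (0 : ℂ) ρ).indicator (ch l) (rotation u x)
      = - (Metric.closedBall (0 : ℂ) ρ).indicator (ch l) x := by
    intro x
    have hn : ‖rotation u x‖ = ‖x‖ := (rotation u).norm_map x
    have hc : ch l (rotation u x) = - ch l x := by
      unfold ch
      rw [hn, rotation_apply, mul_div_assoc, mul_pow, hpow]; ring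
    by_cases hx : x ∈ Metric.closedBall (0 : ℂ) ρ
    · have hx' : rotation u x ∈ Metric.closedBall (0 : ℂ) ρ := by
        rw [mem_closedBall_zero_iff, hn]; simpa using hx
      rw [Set.indicator_of_mem hx, Set.indicator_of_mem hx', hc]
    · have hx' : rotation u x ∉ Metric.closedBall (0 : ℂ) ρ := by
        rw [mem_closedBall_zero_iff, hn]; simpa using hx
      rw [Set.indicator_of_notMem hx, Set.indicator_of_notMem hx', neg_zero]
  have h3 : ∫ x, (Metric.closedBall (0 : ℂ) ρ).indicator (ch l) (rotation u x)
      = ∫ x, (Metric.closedBall (0 : ℂ) ρ).indicator (ch l) x := h1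
  simp_rw [h2] at h3
  rw [integral_neg] at h3
  have h4 : (2 : ℂ) * ∫ x, (Metric.closedBall (0 : ℂ) ρ).indicator (ch l) x = 0 := by
    linear_combination -h3
  simpa using h4

lemma vol_ball (r : ℝ) : volume.real (Metric.closedBall (0 : ℂ) r) = π * (max r 0) ^ 2 := by
  rw [Measure.real, Complex.volume_closedBall]
  simp [ENNReal.toReal_ofReal', mul_comm]

lemma ind_int (r c : ℝ) : Integrable (fun x => (Metric.closedBall (0 : ℂ) r).indicator (fun _ => c) x) := by
  rw [integrable_indicator_iff measurableSet_closedBall]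
  exact integrableOn_const (measure_closedBall_lt_top.ne) (by simp)

lemma ind_integral (r c : ℝ) :
    ∫ x, (Metric.closedBall (0 : ℂ) r).indicator (fun _ => c) x = c * (π * (max r 0) ^ 2) := by
  rw [integral_indicator measurableSet_closedBall, setIntegral_const, vol_ball, smul_eq_mul, mul_comm]

/-- Comparison of the character, cut off to a disc, with its value at the corner of the cell: the
error is trivial near the origin and near the boundary circle, and of size `l / √ρ` elsewhere. -/
lemma sub_fl_bound (l : ℕ) {ρ : ℝ} (hρ : 1 ≤ ρ) (x : ℂ) :
    ‖(Metric.closedBall (0 : ℂ) ρ).indicator (ch l) x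
      - (Metric.closedBall (0 : ℂ) ρ).indicator (ch l) (fl x : ℂ)‖ ≤
    (Metric.closedBall (0 : ℂ) (ρ + 2)).indicator (fun _ => (2 : ℝ)) x
      - (Metric.closedBall (0 : ℂ) (ρ - 3)).indicator (fun _ => (2 : ℝ)) x
      + (Metric.closedBall (0 : ℂ) √ρ).indicator (fun _ => (2 : ℝ)) x
      + (Metric.closedBall (0 : ℂ) (ρ + 2)).indicator (fun _ => 16 * l / √ρ) x := by
  have hd := norm_sub_fl x
  have hd1 : ‖x‖ ≤ ‖(fl x : ℂ)‖ + 2 := by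
    have := norm_sub_norm_le x (fl x : ℂ); linarith
  have hd2 : ‖(fl x : ℂ)‖ ≤ ‖x‖ + 2 := by
    have := norm_sub_norm_le (fl x : ℂ) x; rw [norm_sub_rev] at this; linarith
  have hsq : 0 < √ρ := Real.sqrt_pos.2 (by linarith)
  have hpos : (0 : ℝ) ≤ 16 * l / √ρ := by positivity
  have c1 := norm_ch_le l x
  have c2 := norm_ch_le l (fl x : ℂ)
  have c3 : ‖ch l x - ch l (fl x : ℂ)‖ ≤ 2 := (norm_sub_le _ _).trans (by linarith)
  have c4 : √ρ < ‖x‖ → ‖ch l x - ch l (fl x : ℂ)‖ ≤ 16 * l / √ρ := by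
    intro h
    have hx0 : x ≠ 0 := norm_pos_iff.1 (hsq.trans h)
    refine (pow_sub_pow_le (norm_unit_le _) (norm_unit_le _) _).trans ?_
    have := unit_sub_le x (fl x : ℂ) hx0
    have h5 : 2 * ‖x - (fl x : ℂ)‖ / ‖x‖ ≤ 4 / √ρ := by
      apply div_le_div₀ (by norm_num) (by linarith) hsq h.le
    push_cast
    calc (4 * l : ℝ) * _ ≤ 4 * l * (4 / √ρ) := by gcongr; exact this.trans h5
      _ = _ := by ring
  classical
  simp only [Set.indicator_apply, mem_closedBall_zero_iff]
  split_ifs <;> simp only [sub_zero, zero_sub, norm_neg, norm_zero, sub_self, zero_add, add_zero] <;> first | linarith | (have := c4 (by linarith); linarith)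

lemma ch_gauss (l : ℕ) (z : GaussianInt) : ch l (z : ℂ) = ang (4 * l) z := rfl

/-- The main lattice point estimate: the sums of `R l` exhibit cancellation when `l ≥ 1`. -/
lemma sum_R_bound : ∃ C : ℝ, 0 < C ∧ ∀ (l : ℕ) (y : ℝ), 1 ≤ y →
    |∑ n ∈ Finset.Icc 1 ⌊y⌋₊, R l n - (if l = 0 then π / 4 * y else 0)|
      ≤ C * (l + 1) * y ^ (3 / 4 : ℝ) := by
  refine ⟨1000, by norm_num, fun l y hy => ?_⟩
  set ρ := √y with hρ
  have hρ1 : 1 ≤ ρ := by rw [hρ]; exact Real.one_le_sqrt.2 hy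
  have hρy : ρ ^ 2 = y := Real.sq_sqrt (by linarith)
  set φ : ℂ → ℂ := (Metric.closedBall (0 : ℂ) ρ).indicator (ch l) with hφ
  set g : GaussianInt → ℂ := fun z => φ z with hg
  -- `φ` is the character cut off to the disc of radius `ρ = √y`; its sum over lattice points is
  -- the integral of the step function `φ ∘ fl`, which is compared with the integral of `φ`
  set S : Finset GaussianInt := insert 0 ((Finset.Icc 1 ⌊y⌋₊).biUnion gs) with hS
  have hn : ∀ z : GaussianInt, ‖(z : ℂ)‖ ≤ ρ ↔ (z.norm : ℝ) ≤ y := by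
    intro z
    have : ‖(z : ℂ)‖ ^ 2 = (z.norm : ℝ) := by
      rw [← Complex.normSq_eq_norm_sq]; simp
    rw [← this, ← hρy]
    exact (pow_le_pow_iff_left₀ (norm_nonneg _) (by linarith) two_ne_zero).symm
  have hmemS : ∀ z ∈ (Finset.Icc 1 ⌊y⌋₊).biUnion gs, ‖(z : ℂ)‖ ≤ ρ := by
    intro z hz
    simp only [Finset.mem_biUnion, Finset.mem_Icc, mem_gs] at hz
    obtain ⟨n, ⟨h1, h2⟩, h3, h4⟩ := hz
    rw [hn, h3]
    exact_mod_cast (Nat.le_floor_iff (by linarith)).1 h2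
  have hSz : ∀ z, z ∉ S → g z = 0 := by
    intro z hz
    simp only [hg, hφ]
    apply Set.indicator_of_notMem
    rw [mem_closedBall_zero_iff, hn]
    intro hle
    apply hz
    rw [hS, Finset.mem_insert]
    by_cases h0 : z = 0
    · exact Or.inl h0
    right
    have hnn : 0 < z.norm := GaussianInt.norm_pos.2 h0
    simp only [Finset.mem_biUnion, Finset.mem_Icc, mem_gs]
    refine ⟨z.norm.toNat, ⟨by omega, ?_⟩, by omega, by omega⟩
    rw [Nat.le_floor_iff (by linarith)]
    have : ((z.norm.toNat : ℤ) : ℝ) = z.norm := by rw [Int.toNat_of_nonneg hnn.le]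
    exact_mod_cast this ▸ hle
  have hint := integral_comp_fl g S hSz
  have hintg := integrable_comp_fl g S hSz
  have h0S : (0 : GaussianInt) ∉ (Finset.Icc 1 ⌊y⌋₊).biUnion gs := by
    simp only [Finset.mem_biUnion, not_exists, not_and]
    intro n hn h
    exact gs_ne_zero h rfl
  have hsum : ∑ z ∈ S, g z = g 0 + 4 * ((∑ n ∈ Finset.Icc 1 ⌊y⌋₊, R l n : ℝ) : ℂ) := by
    rw [hS, Finset.sum_insert h0S, Finset.sum_biUnion]
    · congr 1
      rw [Complex.ofReal_sum, Finset.mul_sum]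
      apply Finset.sum_congr rfl
      intro n hn
      have := sum_ang_eq l n
      push_cast at this
      rw [← this]
      apply Finset.sum_congr rfl
      intro z hz
      simp only [hg, hφ]
      rw [Set.indicator_of_mem, ch_gauss]
      rw [mem_closedBall_zero_iff]
      exact hmemS z (Finset.mem_biUnion.2 ⟨n, hn, hz⟩)
    · intro a _ b _ hab
      simp only [Function.onFun]
      rw [Finset.disjoint_left]
      intro z hz1 hz2
      rw [mem_gs] at hz1 hz2
      exact hab (by have := hz1.1.symm.trans hz2.1; exact_mod_cast this)
  have hg0 : ‖g 0‖ ≤ 1 := by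
    simp only [hg, hφ]
    exact (norm_indicator_le_norm_self _ _).trans (norm_ch_le _ _)
  have hφi : Integrable φ := by
    rw [hφ, integrable_indicator_iff measurableSet_closedBall]
    apply Measure.integrableOn_of_bounded (M := 1) (measure_closedBall_lt_top.ne)
      (measurable_ch l).aestronglyMeasurable
    exact Filter.Eventually.of_forall (norm_ch_le l)
  have hφint : ∫ x, φ x = ((if l = 0 then π * y else 0 : ℝ) : ℂ) := by
    split_ifs with h
    · have : φ = fun x => (((Metric.closedBall (0 : ℂ) ρ).indicator (fun _ => (1 : ℝ)) x : ℝ) : ℂ) := by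
        funext x
        by_cases hx : x ∈ Metric.closedBall (0 : ℂ) ρ <;> simp [hφ, hx, ch, h]
      simp_rw [this]
      rw [integral_complex_ofReal, ind_integral, max_eq_left (by linarith), hρy, one_mul]
    · rw [integral_ch_zero (by omega)]; simp
  have key : ‖(∫ x, φ x) - ∫ x, g (fl x)‖ ≤ 2 * (π * (ρ + 2) ^ 2) - 2 * (π * (max (ρ - 3) 0) ^ 2)
      + 2 * (π * ρ) + 16 * l / √ρ * (π * (ρ + 2) ^ 2) := by
    rw [← integral_sub hφi hintg]
    refine (norm_integral_le_integral_norm _).trans ?_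
    have hi := (((ind_int (ρ + 2) 2).sub (ind_int (ρ - 3) 2)).add (ind_int √ρ 2)).add
      (ind_int (ρ + 2) (16 * l / √ρ))
    refine (integral_mono (hφi.sub hintg).norm hi (fun x => sub_fl_bound l hρ1 x)).trans (le_of_eq ?_)
    simp only [Pi.add_apply, Pi.sub_apply]
    rw [integral_add, integral_add, integral_sub]
    · simp only [ind_integral]
      rw [max_eq_left (by linarith : (0:ℝ) ≤ ρ + 2), max_eq_left (Real.sqrt_nonneg _),
        Real.sq_sqrt (by linarith)]
    · exact ind_int _ _
    · exact ind_int _ _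
    · exact (ind_int _ _).sub (ind_int _ _)
    · exact ind_int _ _
    · exact ((ind_int _ _).sub (ind_int _ _)).add (ind_int _ _)
    · exact ind_int _ _
  have hy34 : y ^ (3 / 4 : ℝ) = ρ * √ρ := by
    rw [Real.sqrt_eq_rpow, hρ, Real.sqrt_eq_rpow, ← Real.rpow_mul (by linarith),
      ← Real.rpow_add (by linarith)]
    norm_num
  set s := √ρ with hs
  have hs1 : 1 ≤ s := Real.one_le_sqrt.2 hρ1
  have hss : s ^ 2 = ρ := Real.sq_sqrt (by linarith)
  have hmain : ‖((4 * (∑ n ∈ Finset.Icc 1 ⌊y⌋₊, R l n - (if l = 0 then π / 4 * y else 0)) : ℝ) : ℂ)‖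
      ≤ 1 + (2 * (π * (ρ + 2) ^ 2) - 2 * (π * (max (ρ - 3) 0) ^ 2)
      + 2 * (π * ρ) + 16 * l / s * (π * (ρ + 2) ^ 2)) := by
    have e : ((4 * (∑ n ∈ Finset.Icc 1 ⌊y⌋₊, R l n - (if l = 0 then π / 4 * y else 0)) : ℝ) : ℂ)
      = -g 0 + -((∫ x, φ x) - ∫ x, g (fl x)) := by
      rw [hint, hsum, hφint]
      split_ifs <;> push_cast <;> ring
    rw [e]
    refine (norm_add_le _ _).trans ?_
    rw [norm_neg, norm_neg]
    exact add_le_add hg0 key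
  rw [Complex.norm_real, Real.norm_eq_abs, abs_mul, abs_of_pos (by norm_num : (0:ℝ) < 4)] at hmain
  rw [hy34]
  have hπ : π ≤ 4 := Real.pi_le_four
  have hπ0 := Real.pi_pos
  -- the boundary annulus has area `O(ρ)`
  have b1 : 2 * (π * (ρ + 2) ^ 2) - 2 * (π * (max (ρ - 3) 0) ^ 2) ≤ 200 * ρ := by
    have : (ρ + 2) ^ 2 - (max (ρ - 3) 0) ^ 2 ≤ 25 * ρ := by
      rcases le_total ρ 3 with h | h
      · rw [max_eq_right (by linarith)]; nlinarith
      · rw [max_eq_left (by linarith)]; nlinarith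
    nlinarith
  have b2 : 16 * l / s * (π * (ρ + 2) ^ 2) ≤ 576 * l * (ρ * s) := by
    have : (ρ + 2) ^ 2 ≤ 9 * ρ ^ 2 := by nlinarith
    calc 16 * l / s * (π * (ρ + 2) ^ 2) ≤ 16 * l / s * (4 * (9 * ρ ^ 2)) := by gcongr
      _ = 576 * l * (ρ * s) := by
        have : s ≠ 0 := by positivity
        field_simp
        rw [← hss]; ring
  have b3 : ρ ≤ ρ * s := by nlinarith
  have hl : (0 : ℝ) ≤ l := Nat.cast_nonneg l
  have b4 : 0 ≤ l * (ρ * s) := by positivity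
  nlinarith

/-! ### The Dirichlet series of the twisted counts near `σ = 1` -/

/-- Partial sums of `R l`. -/
def AS (l : ℕ) (t : ℝ) : ℝ := ∑ n ∈ Finset.Icc 1 ⌊t⌋₊, R l n

/-- The Dirichlet series of `R l` at a real point. -/
def LR (l : ℕ) (σ : ℝ) : ℝ := ∑' n : ℕ, R l n * (n : ℝ) ^ (-σ)

lemma abs_AS_le (l : ℕ) (t : ℝ) : |AS l t| ≤ AS 0 t :=
  (Finset.abs_sum_le_sum_abs _ _).trans (Finset.sum_le_sum fun n _ => abs_R_le l n)

lemma measurable_AS (l : ℕ) : Measurable (AS l) :=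
  (measurable_from_nat (f := fun k : ℕ => ∑ n ∈ Finset.Icc 1 k, R l n)).comp Nat.measurable_floor

lemma AS_bounds : ∃ C : ℝ, 1 ≤ C ∧ (∀ t, 1 ≤ t → AS 0 t ≤ C * t) ∧
    ∀ l : ℕ, 1 ≤ l → ∀ t : ℝ, 1 ≤ t → |AS l t| ≤ C * l * t ^ (3 / 4 : ℝ) := by
  obtain ⟨C, hC, h⟩ := sum_R_bound
  refine ⟨2 * C + 1, by linarith, fun t ht => ?_, fun l hl t ht => ?_⟩
  · have := h 0 t ht
    have h1 : t ^ (3 / 4 : ℝ) ≤ t := by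
      conv_rhs => rw [← Real.rpow_one t]
      exact Real.rpow_le_rpow_of_exponent_le ht (by norm_num)
    have h2 := (abs_le.1 this).2
    have h3 : π ≤ 4 := Real.pi_le_four
    unfold AS
    simp only [Nat.cast_zero, zero_add, mul_one, if_true] at h2
    nlinarith
  · have := h l t ht
    rw [if_neg (by omega), sub_zero] at this
    refine this.trans ?_
    have : (0 : ℝ) ≤ t ^ (3 / 4 : ℝ) := by positivity
    have hl' : (1 : ℝ) ≤ l := by exact_mod_cast hl
    have h5 : C * ((l : ℝ) + 1) ≤ (2 * C + 1) * l := by nlinarith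
    exact mul_le_mul_of_nonneg_right h5 this

/-- Interpolation between the trivial bound and the lattice point estimate, trading the power
of `l` for the power saved in `t`. -/
lemma AS_interp {θ : ℝ} (hθ : 0 < θ) (hθ1 : θ ≤ 1) : ∃ C : ℝ, 0 < C ∧ ∀ l : ℕ, 1 ≤ l →
    ∀ t : ℝ, 1 ≤ t → |AS l t| ≤ C * (l : ℝ) ^ θ * t ^ (1 - θ / 4) := by
  obtain ⟨C, hC, h0, h1⟩ := AS_bounds
  refine ⟨C, by linarith, fun l hl t ht => ?_⟩
  have hl' : (1 : ℝ) ≤ l := by exact_mod_cast hl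
  have a1 := (abs_AS_le l t).trans (h0 t ht)
  have a2 := h1 l hl t ht
  have a0 := abs_nonneg (AS l t)
  have ht0 : 0 < t := by linarith
  calc |AS l t| = |AS l t| ^ (1 - θ) * |AS l t| ^ θ := by
        rw [← Real.rpow_add_of_nonneg a0 (by linarith) hθ.le]; simp
    _ ≤ (C * t) ^ (1 - θ) * (C * l * t ^ (3 / 4 : ℝ)) ^ θ := by gcongr
    _ = (C ^ (1 - θ) * C ^ θ) * (l : ℝ) ^ θ * (t ^ (1 - θ) * t ^ (3 / 4 * θ)) := by
        rw [Real.mul_rpow (by linarith) ht0.le, Real.mul_rpow (by positivity) (by positivity),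
          Real.mul_rpow (by linarith) (by linarith), ← Real.rpow_mul ht0.le]
        ring
    _ = _ := by
        rw [← Real.rpow_add (by linarith), ← Real.rpow_add ht0]
        norm_num
        left; ring_nf

lemma R_bigO (l : ℕ) : (fun n : ℕ ↦ ∑ k ∈ Finset.Icc 1 n, ‖((R l k : ℝ) : ℂ)‖)
    =O[atTop] fun n : ℕ ↦ (n : ℝ) ^ (1 : ℝ) := by
  obtain ⟨C, hC, h0, -⟩ := AS_bounds
  refine Asymptotics.IsBigO.of_bound C ?_
  filter_upwards [eventually_ge_atTop 1] with n hn
  have hn' : (1 : ℝ) ≤ n := by exact_mod_cast hn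
  rw [Real.rpow_one, Real.norm_of_nonneg (Finset.sum_nonneg fun _ _ => norm_nonneg _),
    Real.norm_of_nonneg (by linarith)]
  refine le_trans ?_ (h0 n hn')
  unfold AS
  rw [Nat.floor_natCast]
  refine Finset.sum_le_sum fun k _ => ?_
  rw [Complex.norm_real]; exact abs_R_le l k

lemma R_term (l : ℕ) (σ : ℝ) (n : ℕ) :
    LSeries.term (fun n => ((R l n : ℝ) : ℂ)) (σ : ℂ) n = ((R l n * (n : ℝ) ^ (-σ) : ℝ) : ℂ) := by
  rcases eq_or_ne n 0 with rfl | hn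
  · simp [R_at_zero]
  · rw [LSeries.term_of_ne_zero hn, Real.rpow_neg (by positivity)]
    push_cast
    rw [Complex.ofReal_cpow (by positivity)]
    simp [div_eq_mul_inv]

lemma summable_R (l : ℕ) {σ : ℝ} (hσ : 1 < σ) : Summable fun n : ℕ => R l n * (n : ℝ) ^ (-σ) := by
  have := LSeriesSummable_of_sum_norm_bigO (s := (σ : ℂ)) (R_bigO l) zero_le_one (by simpa using hσ)
  unfold LSeriesSummable at this
  rw [funext (R_term l σ)] at this
  exact_mod_cast this

lemma LR_integral (l : ℕ) {σ : ℝ} (hσ : 1 < σ) :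
    LR l σ = ∫ t in Set.Ioi (1 : ℝ), AS l t * (σ * t ^ (-(σ + 1))) := by
  have := LSeries_eq_mul_integral' (s := (σ : ℂ)) _ zero_le_one (by simpa using hσ) (R_bigO l)
  unfold LSeries at this
  rw [tsum_congr (R_term l σ), ← Complex.ofReal_tsum] at this
  have e : ∫ t in Set.Ioi (1 : ℝ), (∑ k ∈ Finset.Icc 1 ⌊t⌋₊, ((R l k : ℝ) : ℂ)) * (t : ℂ) ^ (-((σ : ℂ) + 1))
      = ((∫ t in Set.Ioi (1 : ℝ), AS l t * t ^ (-(σ + 1)) : ℝ) : ℂ) := by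
    rw [← integral_complex_ofReal]
    apply setIntegral_congr_fun measurableSet_Ioi
    intro t ht
    have ht0 : (0 : ℝ) ≤ t := by linarith [Set.mem_Ioi.1 ht]
    simp only [AS]
    push_cast
    rw [Complex.ofReal_cpow ht0]
    push_cast; rfl
  rw [e, ← Complex.ofReal_mul, Complex.ofReal_inj] at this
  unfold LR
  rw [this, ← integral_const_mul]
  apply integral_congr_ae
  filter_upwards with t
  ring

lemma int_rpow {a : ℝ} (ha : 0 < a) :
    IntegrableOn (fun t : ℝ => t ^ (-(1 + a))) (Set.Ioi 1) ∧
      ∫ t in Set.Ioi (1 : ℝ), t ^ (-(1 + a)) = 1 / a := by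
  refine ⟨integrableOn_Ioi_rpow_of_lt (by linarith) one_pos, ?_⟩
  rw [integral_Ioi_rpow_of_lt (by linarith) one_pos]
  simp

lemma abs_int_le {g : ℝ → ℝ} {K a : ℝ} (ha : 0 < a)
    (h : ∀ t, 1 < t → |g t| ≤ K * t ^ (-(1 + a))) :
    |∫ t in Set.Ioi (1 : ℝ), g t| ≤ K / a := by
  obtain ⟨h1, h2⟩ := int_rpow ha
  have := norm_integral_le_of_norm_le (f := g) (h1.const_mul K)
    ((ae_restrict_iff' measurableSet_Ioi).2 (Filter.Eventually.of_forall h))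
  rw [integral_const_mul, h2] at this
  rw [← Real.norm_eq_abs]
  calc _ ≤ _ := this
    _ = _ := by ring

/-- The trivial size of the untwisted series near its pole. -/
lemma LR_zero_le : ∃ C : ℝ, 0 < C ∧ ∀ σ : ℝ, 1 < σ → σ ≤ 2 → LR 0 σ ≤ C / (σ - 1) := by
  obtain ⟨C, hC, h0, -⟩ := AS_bounds
  refine ⟨2 * C, by linarith, fun σ h1 h2 => ?_⟩
  rw [LR_integral 0 h1]
  refine (le_abs_self _).trans (abs_int_le (by linarith) fun t ht => ?_)
  have ht0 : 0 < t := by linarith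
  rw [abs_mul, abs_of_nonneg (by positivity : 0 ≤ σ * t ^ (-(σ + 1)))]
  have e : t ^ (-(1 + (σ - 1))) = t * t ^ (-(σ + 1)) := by
    nth_rewrite 2 [← Real.rpow_one t]
    rw [← Real.rpow_add ht0]; ring_nf
  rw [e]
  have := (abs_AS_le 0 t).trans (h0 t ht.le)
  calc |AS 0 t| * (σ * t ^ (-(σ + 1))) ≤ (C * t) * (2 * t ^ (-(σ + 1))) := by gcongr
    _ = _ := by ring

lemma AS_integrable (l : ℕ) {σ : ℝ} (hσ : 1 < σ) :
    IntegrableOn (fun t => AS l t * (σ * t ^ (-(σ + 1)))) (Set.Ioi 1) := by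
  obtain ⟨C, hC, h0, -⟩ := AS_bounds
  obtain ⟨h1, -⟩ := int_rpow (a := σ - 1) (by linarith)
  refine Integrable.mono' (h1.const_mul (C * σ)) ?_ ?_
  · exact ((measurable_AS l).mul (by fun_prop)).aestronglyMeasurable
  · refine (ae_restrict_iff' measurableSet_Ioi).2 (Filter.Eventually.of_forall fun t ht => ?_)
    have ht' : 1 < t := ht
    have ht0 : 0 < t := by linarith
    rw [Real.norm_eq_abs, abs_mul, abs_of_nonneg (by positivity : 0 ≤ σ * t ^ (-(σ + 1)))]
    have e : t ^ (-(1 + (σ - 1))) = t * t ^ (-(σ + 1)) := by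
      nth_rewrite 2 [← Real.rpow_one t]
      rw [← Real.rpow_add ht0]; ring_nf
    rw [e]
    have := (abs_AS_le l t).trans (h0 t ht'.le)
    calc |AS l t| * (σ * t ^ (-(σ + 1))) ≤ (C * t) * (σ * t ^ (-(σ + 1))) := by gcongr
      _ = _ := by ring

lemma weight_lipschitz {t σ σ' : ℝ} (ht : 1 < t) (h1 : 1 < σ) (h2 : σ ≤ σ') (h3 : σ' ≤ 2) :
    |σ' * t ^ (-(σ' + 1)) - σ * t ^ (-(σ + 1))| ≤ (σ' - σ) * (t ^ (-2 : ℝ) * (1 + 2 * Real.log t)) := by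
  have ht0 : 0 < t := by linarith
  have hlog : 0 ≤ Real.log t := Real.log_nonneg ht.le
  have e1 : t ^ (-(σ' + 1)) ≤ t ^ (-(σ + 1)) := Real.rpow_le_rpow_of_exponent_le ht.le (by linarith)
  have e2 : t ^ (-(σ + 1)) ≤ t ^ (-2 : ℝ) := Real.rpow_le_rpow_of_exponent_le ht.le (by linarith)
  have e0 : 0 < t ^ (-(σ + 1)) := by positivity
  have e0' : 0 < t ^ (-(σ' + 1)) := by positivity
  have e3 : t ^ (-(σ + 1)) - t ^ (-(σ' + 1)) ≤ t ^ (-(σ + 1)) * ((σ' - σ) * Real.log t) := by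
    have : t ^ (-(σ' + 1)) = t ^ (-(σ + 1)) * Real.exp (-((σ' - σ) * Real.log t)) := by
      have h : Real.exp (-((σ' - σ) * Real.log t)) = t ^ (σ - σ') := by
        rw [Real.rpow_def_of_pos ht0]; ring_nf
      rw [h, ← Real.rpow_add ht0]; ring_nf
    rw [this]
    have := Real.add_one_le_exp (-((σ' - σ) * Real.log t))
    nlinarith
  have hx : 0 ≤ (σ' - σ) * Real.log t := mul_nonneg (by linarith) hlog
  rw [abs_le]
  constructor
  · nlinarith [mul_le_mul_of_nonneg_right e2 hx, mul_nonneg (sub_nonneg.2 h2) e0'.le,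
      mul_nonneg (sub_nonneg.2 h2) (by positivity : 0 ≤ t ^ (-2 : ℝ)), mul_nonneg hx (by positivity : 0 ≤ t ^ (-2 : ℝ))]
  · nlinarith [mul_le_mul_of_nonneg_left (e1.trans e2) (sub_nonneg.2 h2), mul_nonneg hx (by positivity : 0 ≤ t ^ (-2 : ℝ))]

/-- For `l ≥ 1` the series stays bounded and Lipschitz up to `σ = 1`, with an arbitrarily small
power loss in `l`. -/
lemma LR_twist {θ : ℝ} (hθ : 0 < θ) (hθ1 : θ ≤ 1) : ∃ C : ℝ, 0 < C ∧ ∀ l : ℕ, 1 ≤ l →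
    (∀ σ : ℝ, 1 < σ → σ ≤ 2 → |LR l σ| ≤ C * (l : ℝ) ^ θ) ∧
    ∀ σ σ' : ℝ, 1 < σ → σ ≤ σ' → σ' ≤ 2 → |LR l σ' - LR l σ| ≤ C * (l : ℝ) ^ θ * (σ' - σ) := by
  obtain ⟨K, hK, h⟩ := AS_interp hθ hθ1
  have hc1 : 0 < 2 * K / (θ / 4) := by positivity
  have hc2 : 0 < K * (1 + 16 / θ) / (θ / 8) := by positivity
  refine ⟨2 * K / (θ / 4) + K * (1 + 16 / θ) / (θ / 8), by positivity, fun l hl => ⟨fun σ h1 h2 => ?_,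
    fun σ σ' h1 h2 h3 => ?_⟩⟩
  · have hb : |LR l σ| ≤ 2 * K * (l : ℝ) ^ θ / (θ / 4) := by
      rw [LR_integral l h1]
      refine abs_int_le (by positivity) fun t ht => ?_
      have ht0 : 0 < t := by linarith
      rw [abs_mul, abs_of_nonneg (by positivity : 0 ≤ σ * t ^ (-(σ + 1)))]
      have e : t ^ (-(1 + θ / 4)) = t ^ (1 - θ / 4) * t ^ (-2 : ℝ) := by
        rw [← Real.rpow_add ht0]; ring_nf
      rw [e]
      calc |AS l t| * (σ * t ^ (-(σ + 1)))
          ≤ (K * (l : ℝ) ^ θ * t ^ (1 - θ / 4)) * (2 * t ^ (-2 : ℝ)) := by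
            gcongr
            · exact h l hl t ht.le
            · exact ht.le
            · linarith
        _ = _ := by ring
    calc _ ≤ _ := hb
      _ = 2 * K / (θ / 4) * (l : ℝ) ^ θ := by ring
      _ ≤ _ := by gcongr; linarith
  · have hb : |LR l σ' - LR l σ| ≤ K * (l : ℝ) ^ θ * (σ' - σ) * (1 + 16 / θ) / (θ / 8) := by
      rw [LR_integral l h1, LR_integral l (h1.trans_le h2),
        ← integral_sub (AS_integrable l (h1.trans_le h2)) (AS_integrable l h1)]
      refine abs_int_le (by positivity) fun t ht => ?_
      have ht0 : 0 < t := by linarith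
      rw [← mul_sub, abs_mul]
      have e : t ^ (-(1 + θ / 8)) = t ^ (1 - θ / 4) * (t ^ (-2 : ℝ) * t ^ (θ / 8)) := by
        rw [← Real.rpow_add ht0, ← Real.rpow_add ht0]; ring_nf
      have hlog : Real.log t ≤ t ^ (θ / 8) / (θ / 8) := Real.log_le_rpow_div ht0.le (by positivity)
      have ht1 : 1 ≤ t ^ (θ / 8) := Real.one_le_rpow ht.le (by positivity)
      have hw : 1 + 2 * Real.log t ≤ (1 + 16 / θ) * t ^ (θ / 8) := by
        have : 2 * (t ^ (θ / 8) / (θ / 8)) = 16 / θ * t ^ (θ / 8) := by field_simp; ring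
        linarith
      rw [e]
      have hs : 0 ≤ σ' - σ := by linarith
      calc |AS l t| * |σ' * t ^ (-(σ' + 1)) - σ * t ^ (-(σ + 1))|
          ≤ (K * (l : ℝ) ^ θ * t ^ (1 - θ / 4)) * ((σ' - σ) * (t ^ (-2 : ℝ) * ((1 + 16 / θ) * t ^ (θ / 8)))) := by
            refine mul_le_mul (h l hl t ht.le) ((weight_lipschitz ht h1 h2 h3).trans ?_) (abs_nonneg _) (by positivity)
            gcongr
        _ = _ := by ring
    calc _ ≤ _ := hb
      _ = K * (1 + 16 / θ) / (θ / 8) * (l : ℝ) ^ θ * (σ' - σ) := by ring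
      _ ≤ _ := by
        have hs : 0 ≤ σ' - σ := by linarith
        gcongr; linarith

/-! ### Euler products and the prime sums -/

lemma geo_hasSum {x : ℝ} (h0 : 0 ≤ x) (h1 : x < 1) :
    HasSum (fun e : ℕ => ((e : ℝ) + 1) * x ^ e) (1 / (1 - x) ^ 2) := by
  have := hasSum_choose_mul_geometric_of_norm_lt_one (𝕜 := ℝ) 1 (r := x)
    (by rw [Real.norm_of_nonneg h0]; exact h1)
  simpa using this

lemma tail_bound {a : ℕ → ℝ} {x : ℝ} (h0 : 0 ≤ x) (h1 : x < 1)
    (ha : ∀ e, |a e| ≤ ((e : ℝ) + 1) * x ^ e) :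
    Summable a ∧ |∑' e, a (e + 2)| ≤ 1 / (1 - x) ^ 2 - 1 - 2 * x := by
  have hg := geo_hasSum h0 h1
  have hs : Summable a := Summable.of_norm_bounded hg.summable (fun e => by simpa using ha e)
  refine ⟨hs, ?_⟩
  have h2 := (hasSum_nat_add_iff' 2).2 hg
  have := tsum_of_norm_bounded (f := fun e => a (e + 2)) h2 (fun e => by
    have := ha (e + 2)
    simpa using this)
  rw [Real.norm_eq_abs] at this
  refine this.trans (le_of_eq ?_)
  simp [Finset.sum_range_succ]
  ring

/-- Logarithm of an Euler factor whose coefficients are bounded like those of a divisor function.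
The range `x ≤ 1 / 5` covers the primes from `5` on. -/
lemma local_small {a : ℕ → ℝ} {x : ℝ} (h0 : 0 ≤ x) (h1 : x ≤ 1 / 5) (ha0 : a 0 = 1)
    (ha : ∀ e, |a e| ≤ ((e : ℝ) + 1) * x ^ e) :
    0 < ∑' e, a e ∧ |Real.log (∑' e, a e) - a 1| ≤ 30 * x ^ 2 := by
  obtain ⟨hs, ht⟩ := tail_bound h0 (by linarith) ha
  have hsplit := hs.sum_add_tsum_nat_add 2
  simp only [Finset.sum_range_succ, Finset.sum_range_zero, zero_add, ha0] at hsplit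
  set T := ∑' e, a (e + 2)
  set F := ∑' e, a e
  have h2 : 1 / (1 - x) ^ 2 - 1 - 2 * x ≤ 5 * x ^ 2 := by
    have h3 : (0 : ℝ) < (1 - x) ^ 2 := by nlinarith
    have : 1 / (1 - x) ^ 2 ≤ 1 + 2 * x + 5 * x ^ 2 := by
      rw [div_le_iff₀ h3]
      nlinarith [mul_nonneg h0 h0, mul_nonneg (mul_nonneg h0 h0) h0, mul_nonneg (mul_nonneg h0 h0) (sub_nonneg.2 h1),
        mul_nonneg (mul_nonneg (mul_nonneg h0 h0) h0) h0]
    linarith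
  have hT := abs_le.1 (ht.trans h2)
  have h1' := ha 1
  norm_num at h1'
  have hA := abs_le.1 h1'
  have hx2 : x ^ 2 ≤ 1 / 25 := by nlinarith
  have hF : 2 / 5 ≤ F := by nlinarith
  have hF0 : 0 < F := by linarith
  refine ⟨hF0, ?_⟩
  have l1 := Real.log_le_sub_one_of_pos hF0
  have l2 := Real.one_sub_inv_le_log_of_pos hF0
  have hu : |F - 1| ≤ 3 * x := by rw [abs_le]; constructor <;> nlinarith
  have hu2 : (F - 1) ^ 2 ≤ 9 * x ^ 2 := by
    rw [← sq_abs]; nlinarith [abs_nonneg (F - 1)]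
  have l3 : F - 1 - 25 * x ^ 2 ≤ 1 - F⁻¹ := by
    have : 1 - F⁻¹ - (F - 1) = - (F - 1) ^ 2 / F := by field_simp; ring
    have h5 : (F - 1) ^ 2 / F ≤ 25 * x ^ 2 := by
      rw [div_le_iff₀ hF0]; nlinarith [sq_nonneg x]
    rw [neg_div] at this
    linarith
  rw [abs_le]; constructor <;> nlinarith

/-- The terms of the Euler factor. -/
lemma term_bound (l : ℕ) {p : ℕ} (hp : p.Prime) {σ : ℝ} (hσ : 1 < σ) (e : ℕ) :
    ((p ^ e : ℕ) : ℝ) ^ (-σ) ≤ ((p : ℝ)⁻¹) ^ e ∧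
    |R l (p ^ e) * ((p ^ e : ℕ) : ℝ) ^ (-σ)| ≤ ((e : ℝ) + 1) * ((p : ℝ)⁻¹) ^ e := by
  have h1 : (1 : ℝ) ≤ ((p ^ e : ℕ) : ℝ) := by exact_mod_cast Nat.one_le_pow _ _ hp.pos
  have h2 : ((p ^ e : ℕ) : ℝ) ^ (-σ) ≤ ((p : ℝ)⁻¹) ^ e := by
    calc ((p ^ e : ℕ) : ℝ) ^ (-σ) ≤ ((p ^ e : ℕ) : ℝ) ^ (-1 : ℝ) :=
          Real.rpow_le_rpow_of_exponent_le h1 (by linarith)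
      _ = _ := by rw [Real.rpow_neg_one]; push_cast; rw [inv_pow]
  refine ⟨h2, ?_⟩
  rw [abs_mul, abs_of_nonneg (by positivity : 0 ≤ ((p ^ e : ℕ) : ℝ) ^ (-σ))]
  have := (abs_R_le l (p ^ e)).trans (R_zero_prime_pow_le hp e)
  gcongr

lemma three_inert : Prime ((3 : ℕ) : GaussianInt) := by
  rcases split_or_inert Nat.prime_three with ⟨q, hq⟩ | h
  · exfalso
    rw [gnorm_eq] at hq
    have h1 : q.re ≤ 1 := by push_cast at hq; nlinarith [mul_self_nonneg q.im]
    have h2 : -1 ≤ q.re := by push_cast at hq; nlinarith [mul_self_nonneg q.im]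
    have h3 : q.im ≤ 1 := by push_cast at hq; nlinarith [mul_self_nonneg q.re]
    have h4 : -1 ≤ q.im := by push_cast at hq; nlinarith [mul_self_nonneg q.re]
    generalize q.re = a at *
    generalize q.im = b at *
    interval_cases a <;> interval_cases b <;> simp at hq
  · exact h

/-- Every Euler factor of an even twist is positive and has the expected logarithm. The primes
`2` and `3` need separate care, as the general bound does not exclude a zero there. -/
lemma local_factor (l : ℕ) {p : ℕ} (hp : p.Prime) {σ : ℝ} (hσ : 1 < σ) :
    0 < ∑' e : ℕ, R (2 * l) (p ^ e) * ((p ^ e : ℕ) : ℝ) ^ (-σ) ∧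
    |Real.log (∑' e : ℕ, R (2 * l) (p ^ e) * ((p ^ e : ℕ) : ℝ) ^ (-σ)) - R (2 * l) p * (p : ℝ) ^ (-σ)|
      ≤ 30 * ((p : ℝ)⁻¹) ^ 2 := by
  set a : ℕ → ℝ := fun e => R (2 * l) (p ^ e) * ((p ^ e : ℕ) : ℝ) ^ (-σ) with ha
  have ha0 : a 0 = 1 := by simp [ha, R_one]
  have ha1 : R (2 * l) p * (p : ℝ) ^ (-σ) = a 1 := by simp [ha]
  have hb : ∀ e, |a e| ≤ ((e : ℝ) + 1) * ((p : ℝ)⁻¹) ^ e := fun e => (term_bound _ hp hσ e).2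
  rw [ha1]
  by_cases h5 : 5 ≤ p
  · have : (p : ℝ)⁻¹ ≤ 1 / 5 := by
      rw [one_div]; apply inv_anti₀ (by norm_num); exact_mod_cast h5
    exact local_small (by positivity) this ha0 hb
  have hp2 := hp.two_le
  have hx1 : (p : ℝ)⁻¹ < 1 := inv_lt_one_of_one_lt₀ (by exact_mod_cast hp.one_lt)
  obtain ⟨hs, ht⟩ := tail_bound (by positivity) hx1 hb
  have h23 : p = 2 ∨ p = 3 := by
    have : p ≠ 4 := by rintro rfl; norm_num at hp
    omega
  have hsplit := hs.sum_add_tsum_nat_add 2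
  simp only [Finset.sum_range_succ, Finset.sum_range_zero, zero_add, ha0] at hsplit
  have hb1 := hb 1
  -- at `2` the coefficients are nonnegative; `3` is inert, so there the coefficients are at most `1`
  -- in absolute value and the first one vanishes
  rcases h23 with rfl | rfl
  · have hnn : ∀ e, 0 ≤ a e := fun e => by
      simp only [ha, R_two_pow]
      exact mul_nonneg (R_zero_nonneg _) (by positivity)
    have hT : 0 ≤ ∑' e, a (e + 2) := tsum_nonneg fun e => hnn _
    rw [abs_of_nonneg hT] at ht
    have h1 := hnn 1
    rw [abs_of_nonneg h1] at hb1
    norm_num at ht hb1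
    set F := ∑' e, a e
    have hF1 : 1 ≤ F := by linarith
    have hF2 : F ≤ 4 := by linarith
    refine ⟨by linarith, ?_⟩
    have l1 := Real.log_le_sub_one_of_pos (by linarith : 0 < F)
    have l2 := Real.log_nonneg hF1
    rw [abs_le]; norm_num; constructor <;> linarith
  · have hR1 : ∀ e, |R (2 * l) (3 ^ e)| ≤ 1 := fun e =>
      (abs_R_le _ _).trans (R_inert Nat.prime_three three_inert e)
    have ha1' : a 1 = 0 := by
      have := (abs_R_le (2 * l) 3).trans (R_inert_prime Nat.prime_three three_inert).le
      have h0 : R (2 * l) 3 = 0 := abs_nonpos_iff.1 this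
      simp [ha, h0]
    have hT : |∑' e, a (e + 2)| ≤ 1 / 6 := by
      have hg : HasSum (fun e : ℕ => ((3 : ℝ)⁻¹) ^ 2 * ((3 : ℝ)⁻¹) ^ e) (((3 : ℝ)⁻¹) ^ 2 * (1 - (3 : ℝ)⁻¹)⁻¹) :=
        (hasSum_geometric_of_lt_one (by norm_num) (by norm_num)).mul_left _
      have := tsum_of_norm_bounded (f := fun e => a (e + 2)) hg (fun e => by
        have t1 := (term_bound (2 * l) Nat.prime_three hσ (e + 2)).1
        have t2 := hR1 (e + 2)
        rw [Real.norm_eq_abs, ha, abs_mul, abs_of_nonneg (by positivity : 0 ≤ ((3 ^ (e + 2) : ℕ) : ℝ) ^ (-σ))]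
        calc _ ≤ 1 * ((((3 : ℕ) : ℝ))⁻¹) ^ (e + 2) := by gcongr
          _ = _ := by rw [one_mul, pow_add, mul_comm]; norm_num)
      rw [Real.norm_eq_abs] at this
      refine this.trans (by norm_num)
    rw [ha1'] at hsplit ⊢
    rw [abs_le] at hT
    set F := ∑' e, a e
    have hF1 : 5 / 6 ≤ F := by linarith
    have hF2 : F ≤ 2 := by linarith
    have hF0 : 0 < F := by linarith
    refine ⟨hF0, ?_⟩
    have l1 := Real.log_le_sub_one_of_pos hF0
    have l2 := Real.one_sub_inv_le_log_of_pos hF0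
    have l3 : F⁻¹ ≤ 2 := by
      rw [show (2 : ℝ) = (1 / 2)⁻¹ by norm_num]; apply inv_anti₀ <;> linarith
    rw [abs_le]; norm_num; constructor <;> linarith

/-- The sum of `R l p / p ^ σ` over primes. -/
def PR (l : ℕ) (σ : ℝ) : ℝ := ∑' p : Nat.Primes, R l p * ((p : ℕ) : ℝ) ^ (-σ)

lemma summable_PR (l : ℕ) {σ : ℝ} (hσ : 1 < σ) :
    Summable fun p : Nat.Primes => R l p * ((p : ℕ) : ℝ) ^ (-σ) :=
  (summable_R l hσ).comp_injective (Subtype.val_injective (p := Nat.Prime))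

lemma summable_inv_sq : Summable fun p : Nat.Primes => 30 * (((p : ℕ) : ℝ)⁻¹) ^ 2 := by
  have h := (Nat.Primes.summable_rpow (r := -2)).2 (by norm_num)
  refine (h.mul_left 30).congr fun p => ?_
  rw [Real.rpow_neg (by positivity)]; norm_num

/-- The Euler product, up to a bounded error: `log L(σ)` is the prime sum. -/
lemma log_LR : ∃ C : ℝ, 0 ≤ C ∧ ∀ (l : ℕ) (σ : ℝ), 1 < σ →
    0 < LR (2 * l) σ ∧ |Real.log (LR (2 * l) σ) - PR (2 * l) σ| ≤ C := by
  refine ⟨∑' p : Nat.Primes, 30 * (((p : ℕ) : ℝ)⁻¹) ^ 2, tsum_nonneg fun p => by positivity,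
    fun l σ hσ => ?_⟩
  set f : ℕ → ℝ := fun n => R (2 * l) n * (n : ℝ) ^ (-σ) with hf
  have hprod := EulerProduct.eulerProduct_hasProd (f := f) (by simp [hf, R_one])
    (fun {m n} h => by
      simp only [hf]
      rw [R_mul _ h, Nat.cast_mul, Real.mul_rpow (by positivity) (by positivity)]; ring)
    (summable_R (2 * l) hσ).norm (by simp [hf, R_at_zero])
  set F : Nat.Primes → ℝ := fun p => ∑' e : ℕ, f ((p : ℕ) ^ e) with hF
  have hloc : ∀ p : Nat.Primes, 0 < F p ∧ |Real.log (F p) - f p| ≤ 30 * (((p : ℕ) : ℝ)⁻¹) ^ 2 :=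
    fun p => local_factor l p.2 hσ
  have hd : Summable fun p : Nat.Primes => Real.log (F p) - f p :=
    Summable.of_norm_bounded summable_inv_sq fun p => by
      rw [Real.norm_eq_abs]; exact (hloc p).2
  have hP := summable_PR (2 * l) hσ
  have hlog : Summable fun p : Nat.Primes => Real.log (F p) := by
    refine (hd.add hP).congr fun p => ?_
    simp [hf]
  have h1 := Real.hasProd_of_hasSum_log (fun p => (hloc p).1) hlog.hasSum
  have h2 : LR (2 * l) σ = Real.exp (∑' p, Real.log (F p)) := hprod.unique h1
  rw [h2, Real.log_exp]
  refine ⟨Real.exp_pos _, ?_⟩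
  rw [PR, ← hlog.tsum_sub hP]
  exact tsum_of_norm_bounded summable_inv_sq.hasSum fun p => by
    rw [Real.norm_eq_abs]; exact (hloc p).2

/-- The untwisted prime sum. -/
lemma PR_zero_le : ∃ C : ℝ, 0 ≤ C ∧ ∀ σ : ℝ, 1 < σ → σ ≤ 2 →
    PR 0 σ ≤ Real.log (1 / (σ - 1)) + C := by
  obtain ⟨C, hC, h⟩ := log_LR
  obtain ⟨D, hD, h'⟩ := LR_zero_le
  refine ⟨|Real.log D| + C, by positivity, fun σ h1 h2 => ?_⟩
  obtain ⟨a1, a2⟩ := h 0 σ h1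
  rw [mul_zero] at a1 a2
  have a3 := Real.log_le_log a1 (h' σ h1 h2)
  rw [div_eq_mul_one_div, Real.log_mul hD.ne' (by have : 0 < σ - 1 := by linarith
                                                  positivity)] at a3
  have := (abs_le.1 a2).1
  linarith [le_abs_self (Real.log D)]

/-- The inequality `3 + 4 cos t + cos 2t ≥ 0`, summed over primes. -/
lemma three_four_one (l : ℕ) {σ : ℝ} (hσ : 1 < σ) :
    0 ≤ 3 * PR 0 σ + 4 * PR (2 * l) σ + PR (4 * l) σ := by
  have s0 := (summable_PR 0 hσ).mul_left 3
  have s1 := (summable_PR (2 * l) hσ).mul_left 4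
  have s2 := summable_PR (4 * l) hσ
  unfold PR
  rw [← tsum_mul_left, ← tsum_mul_left, ← s0.tsum_add s1, ← (s0.add s1).tsum_add s2]
  refine tsum_nonneg fun p => ?_
  obtain ⟨θ, hθ⟩ := exists_angle p.2
  rw [hθ (2 * l), hθ (4 * l)]
  have hc : Real.cos (4 * ((4 * l : ℕ) : ℝ) * θ) = 2 * Real.cos (4 * ((2 * l : ℕ) : ℝ) * θ) ^ 2 - 1 := by
    rw [← Real.cos_two_mul]; push_cast; ring_nf
  rw [hc]
  set c := Real.cos (4 * ((2 * l : ℕ) : ℝ) * θ)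
  have h0 := R_zero_nonneg p
  have hp : (0 : ℝ) ≤ ((p : ℕ) : ℝ) ^ (-σ) := by positivity
  have e : 3 * (R 0 p * ((p : ℕ) : ℝ) ^ (-σ)) + 4 * (R 0 p * c * ((p : ℕ) : ℝ) ^ (-σ))
      + R 0 p * (2 * c ^ 2 - 1) * ((p : ℕ) : ℝ) ^ (-σ)
      = R 0 p * ((p : ℕ) : ℝ) ^ (-σ) * (2 * (c + 1) ^ 2) := by ring
  rw [e]; positivity

/-- The non-vanishing of the twisted series near `σ = 1`, quantitatively in `l`: the `3-4-1`
inequality gives it for `σ - 1` at least a power of `l ^ (-θ)`, and the Lipschitz bound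
carries it down to `1`. -/
lemma LR_lower {θ : ℝ} (hθ : 0 < θ) (hθ1 : θ ≤ 1) : ∃ c C : ℝ, 0 < c ∧ 0 < C ∧ ∀ l : ℕ, 1 ≤ l →
    ∀ σ : ℝ, 1 < σ → σ ≤ 2 →
      c * ((l : ℝ) ^ (-θ)) ^ 7 ≤ LR (2 * l) σ ∧ LR (2 * l) σ ≤ C * (l : ℝ) ^ θ := by
  obtain ⟨E, hE, hlog⟩ := log_LR
  obtain ⟨C0, hC0, hzero⟩ := LR_zero_le
  obtain ⟨C1, hC1, htw⟩ := LR_twist hθ hθ1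
  -- with `w = l ^ (-θ)`, the `3-4-1` inequality gives `LR (2 * l) s ^ 4 ≥ c4 * (s - 1) ^ 3 * w`, and
  -- the Lipschitz constant is about `C1 / w`; the threshold `s - 1 = q ^ 4 * w ^ 8` balances the two
  set c4 : ℝ := Real.exp (-(8 * E)) / (4 * C0 ^ 3 * C1) with hc4
  have hc4p : 0 < c4 := by positivity
  set k : ℝ := min 1 c4 with hk
  have hkp : 0 < k := lt_min one_pos hc4p
  have hk1 : k ≤ 1 := min_le_left _ _
  have hkc : k ≤ c4 := min_le_right _ _
  set q : ℝ := min 1 (k / (4 * C1)) with hq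
  have hqp : 0 < q := lt_min one_pos (by positivity)
  have hq1 : q ≤ 1 := min_le_left _ _
  have hqk : q * (4 * C1) ≤ k := (le_div_iff₀ (by positivity)).1 (min_le_right _ _)
  refine ⟨k * q ^ 3 / 2, 2 * C1, by positivity, by positivity, fun l hl σ h1 h2 => ?_⟩
  have hl1 : (1 : ℝ) ≤ l := by exact_mod_cast hl
  have hl0 : (0 : ℝ) < l := by linarith
  set w : ℝ := (l : ℝ) ^ (-θ) with hw
  have hwp : 0 < w := by positivity
  have hw1 : w ≤ 1 := Real.rpow_le_one_of_one_le_of_nonpos hl1 (by linarith)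
  have hwi : (l : ℝ) ^ θ = w⁻¹ := by rw [hw, Real.rpow_neg hl0.le, inv_inv]
  have hpow : ∀ a : ℝ, 1 ≤ a → (a * l) ^ θ ≤ a * w⁻¹ := by
    intro a ha
    rw [Real.mul_rpow (by linarith) hl0.le, hwi]
    gcongr
    calc a ^ θ ≤ a ^ (1 : ℝ) := Real.rpow_le_rpow_of_exponent_le ha hθ1
      _ = a := Real.rpow_one a
  have hp2 := hpow 2 (by norm_num)
  have hp4 := hpow 4 (by norm_num)
  obtain ⟨b2, d2⟩ := htw (2 * l) (by omega)
  obtain ⟨b4, -⟩ := htw (4 * l) (by omega)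
  push_cast at b2 b4 d2
  -- the lower bound in the range where `3-4-1` suffices
  have main : ∀ s : ℝ, 1 < s → s ≤ 2 → q ^ 4 * w ^ 8 ≤ s - 1 → k * q ^ 3 * w ^ 7 ≤ LR (2 * l) s := by
    intro s hs1 hs2 hs
    have hsp : 0 < s - 1 := by linarith
    obtain ⟨p0, l0⟩ := hlog 0 s hs1
    obtain ⟨p2, l2⟩ := hlog l s hs1
    obtain ⟨p4, l4⟩ := hlog (2 * l) s hs1
    have t := three_four_one l hs1
    rw [mul_zero] at p0 l0
    rw [show 2 * (2 * l) = 4 * l by ring] at p4 l4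
    have hsum : -(8 * E) ≤ Real.log (LR 0 s ^ 3 * LR (2 * l) s ^ 4 * LR (4 * l) s) := by
      rw [Real.log_mul (by positivity) p4.ne', Real.log_mul (by positivity) (by positivity),
        Real.log_pow, Real.log_pow]
      push_cast
      linarith [(abs_le.1 l0).1, (abs_le.1 l2).1, (abs_le.1 l4).1]
    rw [Real.le_log_iff_exp_le (by positivity)] at hsum
    have u0 : LR 0 s ≤ C0 / (s - 1) := hzero s hs1 hs2
    have u4 : LR (4 * l) s ≤ C1 * (4 * w⁻¹) :=
      (le_abs_self _).trans ((b4 s hs1 hs2).trans (by gcongr))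
    have hup : Real.exp (-(8 * E)) ≤ (C0 / (s - 1)) ^ 3 * LR (2 * l) s ^ 4 * (C1 * (4 * w⁻¹)) := by
      refine hsum.trans ?_
      gcongr
    have hL4 : c4 * (s - 1) ^ 3 * w ≤ LR (2 * l) s ^ 4 := by
      have e : (C0 / (s - 1)) ^ 3 * LR (2 * l) s ^ 4 * (C1 * (4 * w⁻¹))
          = LR (2 * l) s ^ 4 * ((4 * C0 ^ 3 * C1) / ((s - 1) ^ 3 * w)) := by
        field_simp
      rw [e] at hup
      rw [hc4, div_mul_eq_mul_div, div_mul_eq_mul_div, div_le_iff₀ (by positivity)]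
      have h6 := mul_le_mul_of_nonneg_right hup (by positivity : 0 ≤ (s - 1) ^ 3 * w)
      have e2 : LR (2 * l) s ^ 4 * ((4 * C0 ^ 3 * C1) / ((s - 1) ^ 3 * w)) * ((s - 1) ^ 3 * w)
          = LR (2 * l) s ^ 4 * (4 * C0 ^ 3 * C1) := by field_simp
      rw [e2] at h6
      linarith
    have h7 : (k * q ^ 3 * w ^ 7) ^ 4 ≤ LR (2 * l) s ^ 4 := by
      refine le_trans ?_ hL4
      calc (k * q ^ 3 * w ^ 7) ^ 4 = k * (q ^ 4 * w ^ 8) ^ 3 * w * (k ^ 3 * w ^ 3) := by ring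
        _ ≤ c4 * (s - 1) ^ 3 * w * 1 := by
          gcongr
          exact mul_le_one₀ (pow_le_one₀ hkp.le hk1) (by positivity) (pow_le_one₀ hwp.le hw1)
        _ = _ := by ring
    exact (pow_le_pow_iff_left₀ (by positivity) p2.le (by norm_num)).1 h7
  constructor
  · rcases le_total (q ^ 4 * w ^ 8) (σ - 1) with h | h
    · refine le_trans ?_ (main σ h1 h2 h)
      have : 0 < k * q ^ 3 * w ^ 7 := by positivity
      linarith
    -- closer to `1`, compare with the value at `1 + q ^ 4 * w ^ 8` by the Lipschitz bound
    · have hd0 : 0 < q ^ 4 * w ^ 8 := by positivity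
      have hd1 : q ^ 4 * w ^ 8 ≤ 1 :=
        mul_le_one₀ (pow_le_one₀ hqp.le hq1) (by positivity) (pow_le_one₀ hwp.le hw1)
      have h3 := main (1 + q ^ 4 * w ^ 8) (by linarith) (by linarith) (by linarith)
      have h4 := d2 σ (1 + q ^ 4 * w ^ 8) h1 (by linarith) (by linarith)
      have h5 : C1 * (2 * (l : ℝ)) ^ θ * (1 + q ^ 4 * w ^ 8 - σ) ≤ k * q ^ 3 * w ^ 7 / 2 := by
        calc C1 * (2 * (l : ℝ)) ^ θ * (1 + q ^ 4 * w ^ 8 - σ)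
            ≤ C1 * (2 * w⁻¹) * (q ^ 4 * w ^ 8) := by
              gcongr <;> linarith
          _ = (q * (4 * C1)) * (q ^ 3 * w ^ 7) / 2 := by field_simp; ring
          _ ≤ k * (q ^ 3 * w ^ 7) / 2 := by gcongr
          _ = _ := by ring
      have h6 := (abs_le.1 (h4.trans h5)).2
      linarith
  · rw [hwi]
    calc LR (2 * l) σ ≤ C1 * (2 * w⁻¹) :=
          (le_abs_self _).trans ((b2 σ h1 h2).trans (by gcongr))
      _ = _ := by ring

/-- Equidistribution of Gaussian primes in the form used below: nontrivial twists of the prime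
sum are bounded up to `σ = 1`, with a loss of `θ log l` only. -/
lemma PR_twist {θ : ℝ} (hθ : 0 < θ) : ∃ C : ℝ, 0 ≤ C ∧ ∀ l : ℕ, 1 ≤ l →
    ∀ σ : ℝ, 1 < σ → σ ≤ 2 → |PR (2 * l) σ| ≤ θ * Real.log l + C := by
  set η := min 1 (θ / 7) with hη
  have hηp : 0 < η := lt_min one_pos (by positivity)
  have hη7 : 7 * η ≤ θ := by
    have : η ≤ θ / 7 := min_le_right _ _
    linarith
  obtain ⟨c, C, hc, hC, h⟩ := LR_lower hηp (min_le_left _ _)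
  obtain ⟨E, hE, hlog⟩ := log_LR
  refine ⟨|Real.log c| + |Real.log C| + E, by positivity, fun l hl σ h1 h2 => ?_⟩
  have hl1 : (1 : ℝ) ≤ l := by exact_mod_cast hl
  have hl0 : (0 : ℝ) < l := by linarith
  have hll : 0 ≤ Real.log l := Real.log_nonneg hl1
  obtain ⟨a1, a2⟩ := h l hl σ h1 h2
  obtain ⟨p, b⟩ := hlog l σ h1
  have a1' := Real.log_le_log (by positivity) a1
  have a2' := Real.log_le_log p a2
  rw [Real.log_mul hc.ne' (by positivity), Real.log_pow, Real.log_rpow hl0] at a1'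
  rw [Real.log_mul hC.ne' (by positivity), Real.log_rpow hl0] at a2'
  push_cast at a1'
  have hx := mul_le_mul_of_nonneg_right hη7 hll
  have hy : η * Real.log l ≤ 7 * η * Real.log l := by nlinarith [mul_nonneg hηp.le hll]
  rw [abs_le] at b ⊢
  constructor
  · linarith [neg_abs_le (Real.log c), abs_nonneg (Real.log C)]
  · linarith [le_abs_self (Real.log C), abs_nonneg (Real.log c)]

/-! ### The mean of `|R k p|` over primes -/

/-- The angle of a Gaussian prime above `p`. -/
def pang (p : Nat.Primes) : ℝ := (exists_angle p.2).choose

lemma R_pang (l : ℕ) (p : Nat.Primes) : R l p = R 0 p * Real.cos (4 * l * pang p) :=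
  (exists_angle p.2).choose_spec l

/-- The prime sum of a test function evaluated at the angles `4 k θ_p`. -/
def SG (g : ℝ → ℝ) (k : ℕ) (σ : ℝ) : ℝ :=
  ∑' p : Nat.Primes, g (4 * k * pang p) * (R 0 p * ((p : ℕ) : ℝ) ^ (-σ))

/-- The mean of a `π`-periodic function. -/
def avg (g : ℝ → ℝ) : ℝ := (∫ u in (0 : ℝ)..π, g u) / π

/-- The prime angles `4 k θ_p` equidistribute with respect to the test function `g`, with the
uniformity in `k` provided by `PR_twist`. -/
def Equi (g : ℝ → ℝ) : Prop := Continuous g ∧ (∃ B, ∀ u, |g u| ≤ B) ∧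
  ∀ θ : ℝ, 0 < θ → ∃ C : ℝ, 0 ≤ C ∧ ∀ k : ℕ, 1 ≤ k → ∀ σ : ℝ, 1 < σ → σ ≤ 2 →
    |SG g k σ - avg g * PR 0 σ| ≤ θ * Real.log k + C

lemma summable_SG {g : ℝ → ℝ} {B : ℝ} (hB : ∀ u, |g u| ≤ B) (k : ℕ) {σ : ℝ} (hσ : 1 < σ) :
    Summable fun p : Nat.Primes => g (4 * k * pang p) * (R 0 p * ((p : ℕ) : ℝ) ^ (-σ)) := by
  refine Summable.of_norm_bounded ((summable_PR 0 hσ).mul_left B) fun p => ?_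
  have h0 : 0 ≤ R 0 p * ((p : ℕ) : ℝ) ^ (-σ) := mul_nonneg (R_zero_nonneg _) (by positivity)
  rw [norm_mul, Real.norm_of_nonneg h0]
  exact mul_le_mul_of_nonneg_right (hB _) h0

lemma Equi.add {f g : ℝ → ℝ} (hf : Equi f) (hg : Equi g) : Equi (fun u => f u + g u) := by
  obtain ⟨cf, ⟨B, hB⟩, hf⟩ := hf
  obtain ⟨cg, ⟨D, hD⟩, hg⟩ := hg
  refine ⟨cf.add cg, ⟨B + D, fun u => (abs_add_le _ _).trans (add_le_add (hB u) (hD u))⟩, fun θ hθ => ?_⟩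
  obtain ⟨C, hC, h1⟩ := hf (θ / 2) (by positivity)
  obtain ⟨C', hC', h2⟩ := hg (θ / 2) (by positivity)
  refine ⟨C + C', by positivity, fun k hk σ hσ hσ2 => ?_⟩
  have e1 : SG (fun u => f u + g u) k σ = SG f k σ + SG g k σ := by
    unfold SG
    rw [← (summable_SG hB k hσ).tsum_add (summable_SG hD k hσ)]
    exact tsum_congr fun p => by ring
  have e2 : avg (fun u => f u + g u) = avg f + avg g := by
    unfold avg
    rw [intervalIntegral.integral_add (cf.intervalIntegrable _ _) (cg.intervalIntegrable _ _), add_div]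
  rw [e1, e2]
  have a1 := abs_le.1 (h1 k hk σ hσ hσ2)
  have a2 := abs_le.1 (h2 k hk σ hσ hσ2)
  rw [abs_le]; constructor <;> linarith

lemma Equi.smul {f : ℝ → ℝ} (hf : Equi f) (c : ℝ) : Equi (fun u => c * f u) := by
  obtain ⟨cf, ⟨B, hB⟩, hf⟩ := hf
  refine ⟨continuous_const.mul cf, ⟨|c| * B, fun u => ?_⟩, fun θ hθ => ?_⟩
  · rw [abs_mul]; exact mul_le_mul_of_nonneg_left (hB u) (abs_nonneg c)
  obtain ⟨C, hC, h1⟩ := hf (θ / (|c| + 1)) (by positivity)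
  refine ⟨|c| * C, by positivity, fun k hk σ hσ hσ2 => ?_⟩
  have e1 : SG (fun u => c * f u) k σ = c * SG f k σ := by
    unfold SG
    rw [← tsum_mul_left]
    exact tsum_congr fun p => by ring
  have e2 : avg (fun u => c * f u) = c * avg f := by
    unfold avg
    rw [intervalIntegral.integral_const_mul, mul_div_assoc]
  have hk0 : 0 ≤ Real.log k := Real.log_nonneg (by exact_mod_cast hk)
  rw [e1, e2, mul_assoc, ← mul_sub, abs_mul]
  calc |c| * _ ≤ |c| * (θ / (|c| + 1) * Real.log k + C) := by gcongr; exact h1 k hk σ hσ hσ2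
    _ = (|c| / (|c| + 1)) * (θ * Real.log k) + |c| * C := by ring
    _ ≤ 1 * (θ * Real.log k) + |c| * C := by
      gcongr
      rw [div_le_one (by positivity)]; linarith
    _ = _ := by ring

lemma equi_one : Equi (fun _ => 1) := by
  refine ⟨continuous_const, ⟨1, by simp⟩, fun θ hθ => ⟨0, le_rfl, fun k hk σ h1 h2 => ?_⟩⟩
  have hk0 : 0 ≤ Real.log k := Real.log_nonneg (by exact_mod_cast hk)
  have : SG (fun _ => 1) k σ - avg (fun _ => 1) * PR 0 σ = 0 := by
    have h : avg (fun _ => 1) = 1 := by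
      simp [avg, Real.pi_ne_zero]
    simp [h, SG, PR]
  rw [this, abs_zero]; positivity

lemma equi_cos {j : ℕ} (hj : 1 ≤ j) : Equi (fun u => Real.cos (2 * j * u)) := by
  refine ⟨by fun_prop, ⟨1, fun u => Real.abs_cos_le_one _⟩, fun θ hθ => ?_⟩
  obtain ⟨C, hC, h⟩ := PR_twist hθ
  have hj0 : 0 ≤ Real.log j := Real.log_nonneg (by exact_mod_cast hj)
  refine ⟨θ * Real.log j + C, by positivity, fun k hk σ h1 h2 => ?_⟩
  have hj' : (j : ℝ) ≠ 0 := by exact_mod_cast (by omega : j ≠ 0)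
  have e : avg (fun u => Real.cos (2 * j * u)) = 0 := by
    unfold avg
    rw [intervalIntegral.integral_comp_mul_left (fun x => Real.cos x) (by positivity), integral_cos]
    have : Real.sin (2 * j * π) = 0 := by
      have := Real.sin_nat_mul_pi (2 * j)
      push_cast at this; exact this
    simp [this]
  have e2 : SG (fun u => Real.cos (2 * j * u)) k σ = PR (2 * (j * k)) σ := by
    unfold SG PR
    refine tsum_congr fun p => ?_
    rw [R_pang (2 * (j * k)) p]
    push_cast
    rw [show 2 * (j : ℝ) * (4 * k * pang p) = 4 * (2 * (j * k)) * pang p by ring]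
    ring
  rw [e, e2, zero_mul, sub_zero]
  have := h (j * k) (Nat.mul_pos hj hk) σ h1 h2
  have hk' : (k : ℝ) ≠ 0 := by exact_mod_cast (by omega : k ≠ 0)
  rw [Nat.cast_mul, Real.log_mul hj' hk'] at this
  linarith

lemma equi_pow (n : ℕ) : ∀ j : ℕ, Equi (fun u => Real.cos (2 * u) ^ n * Real.cos (2 * j * u)) := by
  induction n with
  | zero =>
    intro j
    rcases Nat.eq_zero_or_pos j with rfl | hj
    · simpa using equi_one
    · simpa using equi_cos hj
  | succ n ih =>
    intro j
    rcases Nat.eq_zero_or_pos j with rfl | hj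
    · have := ih 1
      refine (congrArg Equi ?_).mp this
      funext u
      simp [pow_succ]
    · have := ((ih (j + 1)).add (ih (j - 1))).smul (1 / 2)
      refine (congrArg Equi ?_).mp this
      funext u
      rw [Nat.cast_sub hj]
      push_cast
      rw [show 2 * ((j : ℝ) + 1) * u = 2 * j * u + 2 * u by ring,
        show 2 * ((j : ℝ) - 1) * u = 2 * j * u - 2 * u by ring, Real.cos_add, Real.cos_sub]
      ring

lemma equi_poly (Q : Polynomial ℝ) : Equi (fun u => Q.eval (Real.cos (2 * u))) := by
  induction Q using Polynomial.induction_on' with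
  | add p q hp hq => simpa using hp.add hq
  | monomial n a => simpa using (equi_pow n 0).smul a

lemma integral_abs_cos : ∫ u in (0 : ℝ)..π, |Real.cos u| = 2 := by
  have hi : ∀ a b : ℝ, IntervalIntegrable (fun u => |Real.cos u|) volume a b :=
    fun a b => (Real.continuous_cos.abs).intervalIntegrable _ _
  have hpi := Real.pi_pos
  rw [← intervalIntegral.integral_add_adjacent_intervals (hi 0 (π / 2)) (hi (π / 2) π)]
  have e1 : ∫ u in (0 : ℝ)..(π / 2), |Real.cos u| = ∫ u in (0 : ℝ)..(π / 2), Real.cos u := by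
    apply intervalIntegral.integral_congr
    intro u hu
    rw [Set.uIcc_of_le (by positivity)] at hu
    exact abs_of_nonneg (Real.cos_nonneg_of_neg_pi_div_two_le_of_le (by linarith [hu.1]) hu.2)
  have e2 : ∫ u in (π / 2)..π, |Real.cos u| = ∫ u in (π / 2)..π, -Real.cos u := by
    apply intervalIntegral.integral_congr
    intro u hu
    rw [Set.uIcc_of_le (by linarith)] at hu
    exact abs_of_nonpos (Real.cos_nonpos_of_pi_div_two_le_of_le hu.1 (by linarith [hu.2]))
  rw [e1, e2, intervalIntegral.integral_neg, integral_cos, integral_cos]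
  simp; norm_num

/-- On average over primes `|R k p|` is at most `2/π` times `R 0 p`, since the mean of `|cos|` is
`2/π`. The term `δ log k` makes the bound uniform in `k`. -/
lemma sum_abs_R {δ : ℝ} (hδ : 0 < δ) : ∃ C : ℝ, 0 ≤ C ∧ ∀ k : ℕ, 1 ≤ k →
    ∀ σ : ℝ, 1 < σ → σ ≤ 2 → ∑' p : Nat.Primes, |R k p| * ((p : ℕ) : ℝ) ^ (-σ) ≤
      (2 / π + δ) * Real.log (1 / (σ - 1)) + δ * Real.log k + C := by
  -- `|cos u| = √((1 + cos 2u) / 2)` is approximated by a polynomial in `cos 2u`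
  obtain ⟨Q, hQ⟩ := exists_polynomial_near_of_continuousOn (-1) 1 (fun x => √((1 + x) / 2))
    (by fun_prop) (δ / 2) (by positivity)
  have hQ' : ∀ u, |Q.eval (Real.cos (2 * u)) - (|Real.cos u|)| ≤ δ / 2 := by
    intro u
    have := hQ (Real.cos (2 * u)) ⟨Real.neg_one_le_cos _, Real.cos_le_one _⟩
    have e : (1 + Real.cos (2 * u)) / 2 = Real.cos u ^ 2 := by rw [Real.cos_sq]; ring
    simp only [e, Real.sqrt_sq_eq_abs] at this
    exact this.le
  obtain ⟨cQ, ⟨B, hB⟩, hE⟩ := equi_poly Q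
  obtain ⟨C, hC, h⟩ := hE δ hδ
  obtain ⟨C0, hC0, h0⟩ := PR_zero_le
  have havg : avg (fun u => Q.eval (Real.cos (2 * u))) ≤ 2 / π + δ / 2 := by
    unfold avg
    have hpi := Real.pi_pos
    rw [div_le_iff₀ hpi]
    have h1 : (2 / π + δ / 2) * π = ∫ u in (0 : ℝ)..π, (|Real.cos u| + δ / 2) := by
      rw [intervalIntegral.integral_add ((Real.continuous_cos.abs).intervalIntegrable _ _)
        (by simp), integral_abs_cos]
      simp; field_simp
    rw [h1]
    apply intervalIntegral.integral_mono_on hpi.le (cQ.intervalIntegrable _ _)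
      ((Real.continuous_cos.abs.add continuous_const).intervalIntegrable _ _)
    intro u _
    change _ ≤ |Real.cos u| + δ / 2
    linarith [(abs_le.1 (hQ' u)).2]
  refine ⟨C + (2 / π + δ) * C0, by positivity, fun k hk σ h1 h2 => ?_⟩
  have hs := summable_SG hB k h1
  have hs2 := (summable_PR 0 h1).mul_left (δ / 2)
  have hP0 : 0 ≤ PR 0 σ := tsum_nonneg fun p => mul_nonneg (R_zero_nonneg _) (by positivity)
  have hle : ∑' p : Nat.Primes, |R k p| * ((p : ℕ) : ℝ) ^ (-σ)
      ≤ SG (fun u => Q.eval (Real.cos (2 * u))) k σ + δ / 2 * PR 0 σ := by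
    unfold SG PR
    rw [← tsum_mul_left, ← hs.tsum_add hs2]
    refine Summable.tsum_le_tsum (fun p => ?_) ?_ (hs.add hs2)
    · have hn : 0 ≤ R 0 p * ((p : ℕ) : ℝ) ^ (-σ) := mul_nonneg (R_zero_nonneg _) (by positivity)
      rw [R_pang k p, abs_mul, abs_of_nonneg (R_zero_nonneg p)]
      have := (abs_le.1 (hQ' (4 * k * pang p))).1
      nlinarith
    · have := (summable_PR k h1).abs
      refine this.congr fun p => ?_
      rw [abs_mul, abs_of_nonneg (by positivity : 0 ≤ ((p : ℕ) : ℝ) ^ (-σ))]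
  have h3 := (abs_le.1 (h k hk σ h1 h2)).2
  have h4 := mul_le_mul_of_nonneg_right havg hP0
  have h5 : (2 / π + δ) * PR 0 σ ≤ (2 / π + δ) * (Real.log (1 / (σ - 1)) + C0) :=
    mul_le_mul_of_nonneg_left (h0 σ h1 h2) (by positivity)
  linarith

/-! ### An upper bound for sums of multiplicative functions -/

/-- The function equal to `log n` at prime powers and to `0` elsewhere. -/
def ppLog : ArithmeticFunction ℝ := ⟨fun n => if IsPrimePow n then Real.log n else 0, by simp⟩

lemma ppLog_apply (n : ℕ) : ppLog n = if IsPrimePow n then Real.log n else 0 := rfl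

lemma ppLog_nonneg (n : ℕ) : 0 ≤ ppLog n := by
  rw [ppLog_apply]; split_ifs
  · exact Real.log_natCast_nonneg n
  · exact le_rfl

/-- Splitting `log n` over the prime powers exactly dividing `n`. -/
lemma mul_log_le_conv {f : ArithmeticFunction ℝ} (hf : f.IsMultiplicative) (h0 : ∀ n, 0 ≤ f n)
    (n : ℕ) (hn : n ≠ 0) : f n * Real.log n ≤ (f * f.pmul ppLog) n := by
  rw [Real.log_nat_eq_sum_factorization, Finsupp.sum, Nat.support_factorization, Finset.mul_sum,
    ArithmeticFunction.mul_apply]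
  set i : ℕ → ℕ × ℕ := fun p => (n / p ^ n.factorization p, p ^ n.factorization p) with hi
  have hinj : Set.InjOn i n.primeFactors := by
    intro p hp q hq h
    have hp' := Nat.prime_of_mem_primeFactors hp
    have hq' := Nat.prime_of_mem_primeFactors hq
    have h2 : p ^ n.factorization p = q ^ n.factorization q := congrArg Prod.snd h
    have hvp : n.factorization p ≠ 0 :=
      (hp'.factorization_pos_of_dvd hn (Nat.dvd_of_mem_primeFactors hp)).ne'
    have : p ∣ q ^ n.factorization q := h2 ▸ dvd_pow_self p hvp
    exact (Nat.prime_dvd_prime_iff_eq hp' hq').1 (hp'.dvd_of_dvd_pow this)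
  calc ∑ p ∈ n.primeFactors, f n * (n.factorization p * Real.log p)
      = ∑ p ∈ n.primeFactors, f (i p).1 * f.pmul ppLog (i p).2 := by
        refine Finset.sum_congr rfl fun p hp => ?_
        have hp' := Nat.prime_of_mem_primeFactors hp
        have hvp : n.factorization p ≠ 0 :=
          (hp'.factorization_pos_of_dvd hn (Nat.dvd_of_mem_primeFactors hp)).ne'
        have e1 : f n = f (p ^ n.factorization p) * f (n / p ^ n.factorization p) := by
          rw [← hf.map_mul_of_coprime, Nat.ordProj_mul_ordCompl_eq_self]
          exact (Nat.coprime_ordCompl hp' hn).pow_left _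
        have e2 : ppLog (i p).2 = n.factorization p * Real.log p := by
          rw [ppLog_apply, if_pos (hp'.isPrimePow.pow hvp)]
          simp [hi]
        rw [ArithmeticFunction.pmul_apply, e2, e1]
        simp only [hi]
        ring
    _ = ∑ x ∈ n.primeFactors.image i, f x.1 * f.pmul ppLog x.2 := by
        rw [Finset.sum_image hinj]
    _ ≤ ∑ x ∈ n.divisorsAntidiagonal, f x.1 * f.pmul ppLog x.2 := by
        refine Finset.sum_le_sum_of_subset_of_nonneg ?_ fun x _ _ =>
          mul_nonneg (h0 _) (mul_nonneg (h0 _) (ppLog_nonneg _))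
        intro x hx
        obtain ⟨p, -, rfl⟩ := Finset.mem_image.1 hx
        rw [Nat.mem_divisorsAntidiagonal]
        exact ⟨(mul_comm _ _).trans (Nat.ordProj_mul_ordCompl_eq_self n p), hn⟩

lemma mul_log_le {f : ArithmeticFunction ℝ} (hf : f.IsMultiplicative) (h0 : ∀ n, 0 ≤ f n) {B : ℝ}
    (hB : ∀ p j : ℕ, p.Prime → f (p ^ j) ≤ B) (n : ℕ) (hn : n ≠ 0) :
    f n * Real.log n ≤ B * (f * ppLog) n := by
  refine (mul_log_le_conv hf h0 n hn).trans ?_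
  rw [ArithmeticFunction.mul_apply, ArithmeticFunction.mul_apply, Finset.mul_sum]
  refine Finset.sum_le_sum fun x _ => ?_
  rw [ArithmeticFunction.pmul_apply, mul_left_comm]
  by_cases hx : IsPrimePow x.2
  · obtain ⟨p, j, hp, -, hpj⟩ := (isPrimePow_nat_iff _).1 hx
    exact mul_le_mul_of_nonneg_right (hpj ▸ hB p j hp) (mul_nonneg (h0 _) (ppLog_nonneg _))
  · simp [ppLog_apply, hx]

lemma ppLog_le {x : ℝ} {n : ℕ} (hx : (n : ℝ) ≤ x) (hn : n ≠ 0) : ppLog n ≤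
    (if n.Prime then Real.log n else 0) +
      Real.log x / Real.log 2 * (if ¬ n.Prime then ArithmeticFunction.vonMangoldt n else 0) := by
  have hn1 : (1 : ℝ) ≤ n := by exact_mod_cast Nat.one_le_iff_ne_zero.2 hn
  rw [ppLog_apply]
  have hl2 := Real.log_pos one_lt_two
  have hlx : 0 ≤ Real.log x := Real.log_nonneg (hn1.trans hx)
  by_cases hp : n.Prime
  · simp [hp, hp.isPrimePow]
  · by_cases hpp : IsPrimePow n
    · simp only [hp, hpp, if_true, if_false, not_false_eq_true, zero_add]
      rw [ArithmeticFunction.vonMangoldt_apply, if_pos hpp]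
      have h2 : Real.log 2 ≤ Real.log n.minFac := by
        apply Real.log_le_log (by norm_num)
        exact_mod_cast (Nat.minFac_prime hpp.ne_one).two_le
      have h3 : Real.log n ≤ Real.log x := Real.log_le_log (by linarith) hx
      rw [div_mul_eq_mul_div, le_div_iff₀ hl2]
      exact mul_le_mul h3 h2 hl2.le hlx
    · simp only [hp, hpp, if_false, not_false_eq_true, if_true, zero_add]
      exact mul_nonneg (by positivity) ArithmeticFunction.vonMangoldt_nonneg

/-- Chebyshev's upper bound, including prime powers with full weight `log`. -/
lemma sum_ppLog : ∃ C : ℝ, 0 < C ∧ ∀ x : ℕ, ∑ n ∈ Finset.Ioc 0 x, ppLog n ≤ C * x := by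
  obtain ⟨D, hD⟩ := Chebyshev.psi_sub_theta_le_mul_sqrt
  have hl2 := Real.log_pos one_lt_two
  refine ⟨Real.log 4 + 2 * |D| / Real.log 2, ?_, fun x => ?_⟩
  · have := Real.log_pos (by norm_num : (1 : ℝ) < 4)
    positivity
  rcases Nat.eq_zero_or_pos x with rfl | hx
  · simp
  have hx1 : (1 : ℝ) ≤ x := by exact_mod_cast hx
  have hlx : 0 ≤ Real.log x := Real.log_nonneg hx1
  have h1 : ∑ n ∈ Finset.Ioc 0 x, ppLog n ≤
      Chebyshev.theta x + Real.log x / Real.log 2 * (Chebyshev.psi x - Chebyshev.theta x) := by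
    rw [Chebyshev.psi_sub_theta_eq_sum_not_prime, Chebyshev.theta, Nat.floor_natCast,
      Finset.sum_filter, Finset.sum_filter, Finset.mul_sum, ← Finset.sum_add_distrib]
    refine Finset.sum_le_sum fun n hn => ppLog_le ?_ ?_
    · exact_mod_cast (Finset.mem_Ioc.1 hn).2
    · exact (Finset.mem_Ioc.1 hn).1.ne'
  have h2 := Chebyshev.theta_le_log4_mul_x (x := (x : ℝ)) (by positivity)
  have h3 : Chebyshev.psi x - Chebyshev.theta x ≤ |D| * √x :=
    (hD x).trans (mul_le_mul_of_nonneg_right (le_abs_self D) (Real.sqrt_nonneg _))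
  have h4 : Real.log x ≤ 2 * √x := by
    have : Real.log x = 2 * Real.log (√x) := by
      rw [Real.log_sqrt (by positivity)]; ring
    have h := Real.log_le_sub_one_of_pos (Real.sqrt_pos.2 (by linarith : (0 : ℝ) < x))
    linarith
  have h5 : Real.log x / Real.log 2 * (Chebyshev.psi x - Chebyshev.theta x)
      ≤ 2 * √x / Real.log 2 * (|D| * √x) := by
    refine mul_le_mul (by gcongr) h3 (sub_nonneg.2 (Chebyshev.theta_le_psi _)) (by positivity)
  have h6 : 2 * √x / Real.log 2 * (|D| * √x) = 2 * |D| / Real.log 2 * x := by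
    have := Real.mul_self_sqrt (by positivity : (0 : ℝ) ≤ x)
    linear_combination (2 * |D| / Real.log 2) * this
  linarith

/-- Summing a convolution over hyperbolic fibres when one factor has linearly bounded sums. -/
lemma sum_conv_le {f g : ArithmeticFunction ℝ} (h0 : ∀ n, 0 ≤ f n) {C : ℝ}
    (hC : ∀ x : ℕ, ∑ n ∈ Finset.Ioc 0 x, g n ≤ C * x) (hC0 : 0 < C) (N : ℕ) :
    ∑ n ∈ Finset.Ioc 0 N, (f * g) n ≤ C * N * ∑ n ∈ Finset.Ioc 0 N, f n / n := by
  rw [ArithmeticFunction.sum_Ioc_mul_eq_sum_sum, Finset.mul_sum]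
  refine Finset.sum_le_sum fun n hn => ?_
  have hn0 : 0 < (n : ℝ) := by exact_mod_cast (Finset.mem_Ioc.1 hn).1
  calc f n * ∑ m ∈ Finset.Ioc 0 (N / n), g m ≤ f n * (C * (N / n : ℕ)) := by
        gcongr; exacts [h0 n, hC _]
    _ ≤ f n * (C * (N / n)) := by
        gcongr; exacts [h0 n, Nat.cast_div_le]
    _ = C * N * (f n / n) := by ring

lemma sum_primes_le {F : ℕ → ℝ} {s : Finset ℕ} (hs : ∀ p ∈ s, p.Prime) (h0 : ∀ n, 0 ≤ F n)
    (hF : Summable fun p : Nat.Primes => F p) : ∑ p ∈ s, F p ≤ ∑' p : Nat.Primes, F p := by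
  let t : Finset Nat.Primes := s.subtype Nat.Prime
  have h := hF.sum_le_tsum t (fun i _ => h0 i)
  have e : ∑ p ∈ s.subtype Nat.Prime, F p = ∑ p ∈ s, F p := by
    rw [Finset.sum_subtype_eq_sum_filter (s := s) (p := Nat.Prime) F, Finset.filter_true_of_mem hs]
  rw [← e]
  exact h

/-- The logarithmic mean of a multiplicative function is bounded by its Euler product at
`σ = 1 + 1 / log N`. -/
lemma sum_div_le_exp {B : ℝ} (hB0 : 0 ≤ B) : ∃ C : ℝ, 0 < C ∧ ∀ f : ArithmeticFunction ℝ,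
    f.IsMultiplicative → (∀ n, 0 ≤ f n) → (∀ p j : ℕ, p.Prime → f (p ^ j) ≤ B) → ∀ N : ℕ, 2 ≤ N →
    ∑ n ∈ Finset.Ioc 0 N, f n / n ≤
      C * Real.exp (∑' p : Nat.Primes, f p * ((p : ℕ) : ℝ) ^ (-(1 + 1 / Real.log N))) := by
  set S : ℝ := ∑' p : Nat.Primes, 30 * (((p : ℕ) : ℝ)⁻¹) ^ 2 with hS
  refine ⟨Real.exp 1 * Real.exp (B * S), by positivity, fun f hf h0 hB N hN => ?_⟩
  have hN1 : (1 : ℝ) < N := by exact_mod_cast hN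
  have hL : 0 < Real.log N := Real.log_pos hN1
  set σ := 1 + 1 / Real.log N with hσd
  have hσ : 1 < σ := by rw [hσd]; have : 0 < 1 / Real.log N := by positivity
                        linarith
  set a : ℕ → ℝ := fun n => f n * (n : ℝ) ^ (-σ) with ha
  have ha0 : ∀ n, 0 ≤ a n := fun n => mul_nonneg (h0 n) (by positivity)
  -- Rankin: `1 / n ≤ e * n ^ (-σ)` for `n ≤ N`, as `σ - 1 = 1 / log N`
  have step1 : ∑ n ∈ Finset.Ioc 0 N, f n / n ≤ Real.exp 1 * ∑ n ∈ Finset.Ioc 0 N, a n := by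
    rw [Finset.mul_sum]
    refine Finset.sum_le_sum fun n hn => ?_
    obtain ⟨hn0, hnN⟩ := Finset.mem_Ioc.1 hn
    have hn0' : 0 < (n : ℝ) := by exact_mod_cast hn0
    have hle : Real.log n ≤ Real.log N := Real.log_le_log hn0' (by exact_mod_cast hnN)
    have e : ((n : ℝ))⁻¹ ≤ Real.exp 1 * (n : ℝ) ^ (-σ) := by
      rw [Real.rpow_def_of_pos hn0', ← Real.exp_add]
      nth_rewrite 1 [← Real.exp_log hn0']
      rw [← Real.exp_neg, Real.exp_le_exp, hσd]
      have : Real.log n * (1 / Real.log N) ≤ 1 := by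
        rw [mul_one_div, div_le_one hL]; exact hle
      linarith
    calc f n / n = f n * ((n : ℝ))⁻¹ := by ring
      _ ≤ f n * (Real.exp 1 * (n : ℝ) ^ (-σ)) := mul_le_mul_of_nonneg_left e (h0 n)
      _ = _ := by simp only [ha]; ring
  have hgeo : ∀ p : ℕ, p.Prime → ∀ e, a (p ^ e) ≤ B * ((p : ℝ)⁻¹) ^ e := by
    intro p hp e
    exact mul_le_mul (hB p e hp) (term_bound 0 hp hσ e).1 (by positivity) hB0
  have hpinv : ∀ p : ℕ, p.Prime → 0 < ((p : ℝ))⁻¹ ∧ ((p : ℝ))⁻¹ ≤ 1 / 2 := by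
    intro p hp
    have : (2 : ℝ) ≤ p := by exact_mod_cast hp.two_le
    exact ⟨by positivity, by rw [one_div]; gcongr⟩
  have hsg : ∀ p : ℕ, p.Prime → Summable fun e : ℕ => B * ((p : ℝ)⁻¹) ^ e := by
    intro p hp
    exact (summable_geometric_of_lt_one (hpinv p hp).1.le (by linarith [(hpinv p hp).2])).mul_left _
  have hsa : ∀ p : ℕ, p.Prime → Summable fun e : ℕ => a (p ^ e) := fun p hp =>
    Summable.of_nonneg_of_le (fun e => ha0 _) (hgeo p hp) (hsg p hp)
  have hprod := (EulerProduct.summable_and_hasSum_smoothNumbers_prod_primesBelow_tsum (f := a)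
    (by simp [ha, hf.map_one])
    (fun {m n} h => by
      simp only [ha, hf.map_mul_of_coprime h, Nat.cast_mul]
      rw [Real.mul_rpow (by positivity) (by positivity)]; ring)
    (fun {p} hp => by simpa only [Real.norm_of_nonneg (ha0 _)] using hsa p hp) (N + 1)).2
  have step2 : ∑ n ∈ Finset.Ioc 0 N, a n ≤ ∏ p ∈ (N + 1).primesBelow, ∑' e : ℕ, a (p ^ e) := by
    rw [← hprod.tsum_eq]
    have hmem : ∀ n ∈ Finset.Ioc 0 N, n ∈ (N + 1).smoothNumbers := by
      intro n hn
      obtain ⟨hn0, hnN⟩ := Finset.mem_Ioc.1 hn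
      exact Nat.mem_smoothNumbers_of_lt hn0 (by omega)
    rw [← Finset.sum_attach]
    have := hprod.summable.sum_le_tsum
      ((Finset.Ioc 0 N).attach.map ⟨fun n => (⟨n.1, hmem n.1 n.2⟩ : (N + 1).smoothNumbers),
        fun x y h => Subtype.ext (by simpa using h)⟩) (fun i _ => ha0 _)
    rw [Finset.sum_map] at this
    exact this
  have hloc : ∀ p : ℕ, p.Prime → ∑' e : ℕ, a (p ^ e) ≤
      Real.exp (a p + B * (30 * ((p : ℝ)⁻¹) ^ 2)) := by
    intro p hp
    obtain ⟨hx0, hx1⟩ := hpinv p hp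
    set x := ((p : ℝ))⁻¹
    have hsplit := (hsa p hp).sum_add_tsum_nat_add 2
    simp only [Finset.sum_range_succ, Finset.sum_range_zero, zero_add, pow_zero, pow_one] at hsplit
    have ht : ∑' e : ℕ, a (p ^ (e + 2)) ≤ B * (30 * x ^ 2) := by
      have h1 : ∑' e : ℕ, a (p ^ (e + 2)) ≤ ∑' e : ℕ, B * x ^ (e + 2) :=
        Summable.tsum_le_tsum (fun e => hgeo p hp (e + 2)) ((summable_nat_add_iff 2).2 (hsa p hp))
          ((summable_nat_add_iff 2).2 (hsg p hp))
      have h2 : ∑' e : ℕ, B * x ^ (e + 2) = B * x ^ 2 * (1 - x)⁻¹ := by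
        rw [← tsum_geometric_of_lt_one hx0.le (by linarith), ← tsum_mul_left]
        exact tsum_congr fun e => by ring
      have h3 : (1 - x)⁻¹ ≤ 30 := by
        rw [inv_le_comm₀ (by linarith) (by norm_num)]; linarith
      rw [h2] at h1
      have : B * x ^ 2 * (1 - x)⁻¹ ≤ B * x ^ 2 * 30 :=
        mul_le_mul_of_nonneg_left h3 (by positivity)
      linarith
    have ha1 : a 1 = 1 := by simp [ha, hf.map_one]
    have := Real.add_one_le_exp (a p + B * (30 * x ^ 2))
    linarith
  have hsum1 : Summable fun p : Nat.Primes => f p * ((p : ℕ) : ℝ) ^ (-σ) := by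
    refine Summable.of_nonneg_of_le (fun p => ha0 p) (fun p => ?_)
      ((Nat.Primes.summable_rpow (r := -σ)).2 (by linarith) |>.mul_left B)
    have := hB p 1 p.2
    rw [pow_one] at this
    gcongr
  have step3 : ∏ p ∈ (N + 1).primesBelow, ∑' e : ℕ, a (p ^ e) ≤
      Real.exp (∑' p : Nat.Primes, f p * ((p : ℕ) : ℝ) ^ (-σ) + B * S) := by
    calc _ ≤ ∏ p ∈ (N + 1).primesBelow, Real.exp (a p + B * (30 * ((p : ℝ)⁻¹) ^ 2)) :=
          Finset.prod_le_prod (fun p _ => tsum_nonneg fun e => ha0 _)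
            (fun p hp => hloc p (Nat.prime_of_mem_primesBelow hp))
      _ = Real.exp (∑ p ∈ (N + 1).primesBelow, (a p + B * (30 * ((p : ℝ)⁻¹) ^ 2))) := by
          rw [Real.exp_sum]
      _ ≤ _ := by
          have hadd : ∑' p : Nat.Primes, (f p * ((p : ℕ) : ℝ) ^ (-σ) +
              B * (30 * (((p : ℕ) : ℝ)⁻¹) ^ 2)) =
              ∑' p : Nat.Primes, f p * ((p : ℕ) : ℝ) ^ (-σ) + B * S := by
            rw [hS, ← tsum_mul_left]
            exact hsum1.tsum_add (summable_inv_sq.mul_left B)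
          rw [Real.exp_le_exp, ← hadd]
          exact sum_primes_le (F := fun p => a p + B * (30 * ((p : ℝ)⁻¹) ^ 2))
            (fun p hp => Nat.prime_of_mem_primesBelow hp)
            (fun p => add_nonneg (ha0 p) (by positivity))
            (hsum1.add (summable_inv_sq.mul_left B))
  calc _ ≤ Real.exp 1 * ∑ n ∈ Finset.Ioc 0 N, a n := step1
    _ ≤ Real.exp 1 * Real.exp (∑' p : Nat.Primes, f p * ((p : ℕ) : ℝ) ^ (-σ) + B * S) := by
        gcongr; exact step2.trans step3
    _ = _ := by rw [Real.exp_add]; ring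

/-- The Hall–Tenenbaum type bound: the sum of a nonnegative multiplicative function which is
bounded on prime powers is at most `N / log N` times its Euler product at `σ = 1 + 1 / log N`. -/
lemma sum_mult_le {B : ℝ} (hB0 : 0 ≤ B) : ∃ C : ℝ, 0 < C ∧ ∀ f : ArithmeticFunction ℝ,
    f.IsMultiplicative → (∀ n, 0 ≤ f n) → (∀ p j : ℕ, p.Prime → f (p ^ j) ≤ B) → ∀ N : ℕ, 2 ≤ N →
    ∑ n ∈ Finset.Ioc 0 N, f n ≤ C * (N / Real.log N) *
      Real.exp (∑' p : Nat.Primes, f p * ((p : ℕ) : ℝ) ^ (-(1 + 1 / Real.log N))) := by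
  obtain ⟨C1, hC1, h1⟩ := sum_div_le_exp hB0
  obtain ⟨C2, hC2, h2⟩ := sum_ppLog
  refine ⟨(B * C2 + 1) * C1, by positivity, fun f hf h0 hB N hN => ?_⟩
  have hN1 : (1 : ℝ) < N := by exact_mod_cast hN
  have hL : 0 < Real.log N := Real.log_pos hN1
  set E := Real.exp (∑' p : Nat.Primes, f p * ((p : ℕ) : ℝ) ^ (-(1 + 1 / Real.log N)))
  have hE := h1 f hf h0 hB N hN
  have key : (∑ n ∈ Finset.Ioc 0 N, f n) * Real.log N ≤
      (B * C2 + 1) * N * ∑ n ∈ Finset.Ioc 0 N, f n / n := by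
    have hA : (∑ n ∈ Finset.Ioc 0 N, f n) * Real.log N ≤
        ∑ n ∈ Finset.Ioc 0 N, (B * (f * ppLog) n + N * (f n / n)) := by
      rw [Finset.sum_mul]
      refine Finset.sum_le_sum fun n hn => ?_
      obtain ⟨hn0, hnN⟩ := Finset.mem_Ioc.1 hn
      have hn0' : 0 < (n : ℝ) := by exact_mod_cast hn0
      have := mul_log_le hf h0 hB n hn0.ne'
      -- `log (N / n) ≤ N / n`
      have h3 : Real.log N ≤ Real.log n + N / n := by
        have := Real.log_le_sub_one_of_pos (x := (N : ℝ) / n) (by positivity)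
        rw [Real.log_div (by positivity) (by positivity)] at this
        linarith
      have h4 := mul_le_mul_of_nonneg_left h3 (h0 n)
      have h5 : f n * ((N : ℝ) / n) = N * (f n / n) := by ring
      linarith
    rw [Finset.sum_add_distrib, ← Finset.mul_sum, ← Finset.mul_sum] at hA
    have hBm := mul_le_mul_of_nonneg_left (sum_conv_le h0 h2 hC2 N) hB0
    nlinarith
  rw [show (B * C2 + 1) * C1 * (N / Real.log N) * E
    = ((B * C2 + 1) * N * (C1 * E)) / Real.log N by ring, le_div_iff₀ hL]
  exact key.trans (mul_le_mul_of_nonneg_left hE (by positivity))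

/-! ### Convolutions of the representation function with prime powers -/

lemma R_le_R_mul {p : ℕ} (hp : p ∈ S₂) (n : ℕ) : R 0 n ≤ R 0 (p * n) := by
  obtain ⟨q, hq⟩ := gs_nonempty_iff.2 hp
  rw [R_zero_eq, R_zero_eq]
  have hq0 : q ≠ 0 := gs_ne_zero hq
  have : (gs n).card ≤ (gs (p * n)).card := by
    refine Finset.card_le_card_of_injOn (fun z => q * z) (fun z hz => mul_mem_gs hq hz) ?_
    intro z _ w _ h
    exact mul_left_cancel₀ hq0 h
  have h : ((gs n).card : ℝ) ≤ (gs (p * n)).card := by exact_mod_cast this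
  linarith

lemma R_prime_le_pow {p : ℕ} (hp : p ∈ S₂) (j : ℕ) : R 0 p ≤ R 0 (p ^ (j + 1)) := by
  induction j with
  | zero => simp
  | succ j ih => exact ih.trans (by rw [pow_succ' p (j + 1)]; exact R_le_R_mul hp _)

/-- The function `R 0 p * log p` supported on primes. -/
def RpLog : ArithmeticFunction ℝ := ⟨fun n => if n.Prime then R 0 n * Real.log n else 0, by simp⟩

lemma RpLog_apply (n : ℕ) : RpLog n = if n.Prime then R 0 n * Real.log n else 0 := rfl

lemma RpLog_nonneg (n : ℕ) : 0 ≤ RpLog n := by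
  rw [RpLog_apply]; split_ifs
  · exact mul_nonneg (R_zero_nonneg _) (Real.log_natCast_nonneg n)
  · exact le_rfl

/-- `R 0 * log` dominates its convolution with the primes, since `R 0` does not decrease under
multiplication by a prime that is a sum of two squares. -/
lemma conv_RpLog_le (n : ℕ) (hn : n ≠ 0) : (RA 0 * RpLog) n ≤ R 0 n * Real.log n := by
  rw [ArithmeticFunction.mul_apply, Nat.sum_divisorsAntidiagonal' (fun a b => RA 0 a * RpLog b),
    Real.log_nat_eq_sum_factorization, Finsupp.sum, Nat.support_factorization, Finset.mul_sum]
  have e : n.primeFactors = n.divisors.filter Nat.Prime := by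
    ext p; simp [Nat.mem_primeFactors, hn, and_comm]
  rw [e, Finset.sum_filter]
  refine Finset.sum_le_sum fun p hpd => ?_
  rw [RpLog_apply]
  split_ifs with hp
  · have hpn := Nat.dvd_of_mem_divisors hpd
    obtain ⟨v, hv⟩ : ∃ v, n.factorization p = v + 1 :=
      ⟨_, (Nat.succ_pred (hp.factorization_pos_of_dvd hn hpn).ne').symm⟩
    set m := n / p ^ n.factorization p with hm
    have hcop : p.Coprime m := Nat.coprime_ordCompl hp hn
    have hnm : n = p ^ (v + 1) * m := by
      rw [← hv]; exact (Nat.ordProj_mul_ordCompl_eq_self n p).symm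
    have hdiv : n / p = p ^ v * m := by
      rw [hnm, pow_succ', mul_assoc, Nat.mul_div_cancel_left _ hp.pos]
    change R 0 (n / p) * _ ≤ _
    have hl : 0 ≤ Real.log p := Real.log_natCast_nonneg p
    rcases (R_zero_nonneg p).eq_or_lt with h0 | h0
    · rw [← h0]
      have := R_zero_nonneg n
      have : 0 ≤ R 0 n * (n.factorization p * Real.log p) := by positivity
      simpa using this
    · have hS := R_zero_pos_iff.1 h0
      have h1 := R_zero_prime_pow_le hp v
      have h2 := R_prime_le_pow hS v
      have h3 := R_zero_nonneg m
      have h4 : R 0 (p ^ v) * R 0 p ≤ (v + 1) * R 0 (p ^ (v + 1)) :=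
        mul_le_mul h1 h2 h0.le (by positivity)
      have hR : R 0 n = R 0 (p ^ (v + 1)) * R 0 m :=
        (congrArg (R 0) hnm).trans (R_mul 0 (hcop.pow_left _))
      rw [hdiv, R_mul 0 (hcop.pow_left _), hv, hR]
      push_cast
      have := mul_le_mul_of_nonneg_right h4 (mul_nonneg h3 hl)
      linarith
  · simp

/-- The function `m ↦ m ^ (-1/4)`. -/
def quarter : ArithmeticFunction ℝ := ⟨fun m => if m = 0 then 0 else (m : ℝ) ^ (-(1 / 4) : ℝ), by simp⟩

lemma quarter_apply {m : ℕ} (hm : m ≠ 0) : quarter m = (m : ℝ) ^ (-(1 / 4) : ℝ) := if_neg hm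

lemma quarter_nonneg (m : ℕ) : 0 ≤ quarter m := by
  rcases eq_or_ne m 0 with rfl | h
  · simp
  · rw [quarter_apply h]; positivity

/-- A function with linearly growing partial sums satisfies `∑ a n (N / n) ^ (3/4) = O(N)`:
the weight is dominated by the convolution with `m ↦ m ^ (-1/4)`. -/
lemma sum_weight : ∃ K : ℝ, 0 < K ∧ ∀ (a : ArithmeticFunction ℝ) (C : ℝ), 0 < C → (∀ n, 0 ≤ a n) →
    (∀ x : ℕ, ∑ n ∈ Finset.Ioc 0 x, a n ≤ C * x) → ∀ N : ℕ,
    ∑ n ∈ Finset.Ioc 0 N, a n * ((N : ℝ) / n) ^ (3 / 4 : ℝ) ≤ K * C * N := by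
  have hs : Summable fun n : ℕ => (n : ℝ) ^ (-(5 / 4) : ℝ) :=
    Real.summable_nat_rpow.2 (by norm_num)
  have hS0 : 0 ≤ ∑' n : ℕ, (n : ℝ) ^ (-(5 / 4) : ℝ) := tsum_nonneg fun n => by positivity
  refine ⟨2 * (∑' n : ℕ, (n : ℝ) ^ (-(5 / 4) : ℝ) + 1), by positivity, fun a C hC h0 h N => ?_⟩
  have h1 : ∑ n ∈ Finset.Ioc 0 N, a n * ((N : ℝ) / n) ^ (3 / 4 : ℝ) ≤
      2 * ∑ n ∈ Finset.Ioc 0 N, (a * quarter) n := by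
    rw [ArithmeticFunction.sum_Ioc_mul_eq_sum_sum, Finset.mul_sum]
    refine Finset.sum_le_sum fun n hn => ?_
    obtain ⟨hn0, hnN⟩ := Finset.mem_Ioc.1 hn
    have hn0' : 0 < (n : ℝ) := by exact_mod_cast hn0
    set y := N / n with hy
    have hy1 : 1 ≤ y := (Nat.one_le_div_iff hn0).2 hnN
    have hy1' : (1 : ℝ) ≤ y := by exact_mod_cast hy1
    have h2 : (N : ℝ) / n ≤ 2 * y := by
      rw [div_le_iff₀ hn0']
      have : N < n * (y + 1) := Nat.lt_mul_div_succ N hn0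
      have : (N : ℝ) < n * (y + 1) := by exact_mod_cast this
      nlinarith
    have h3 : ((N : ℝ) / n) ^ (3 / 4 : ℝ) ≤ 2 * (y : ℝ) ^ (3 / 4 : ℝ) := by
      calc ((N : ℝ) / n) ^ (3 / 4 : ℝ) ≤ (2 * y : ℝ) ^ (3 / 4 : ℝ) :=
            Real.rpow_le_rpow (by positivity) h2 (by norm_num)
        _ = 2 ^ (3 / 4 : ℝ) * (y : ℝ) ^ (3 / 4 : ℝ) := Real.mul_rpow (by norm_num) (by positivity)
        _ ≤ 2 ^ (1 : ℝ) * (y : ℝ) ^ (3 / 4 : ℝ) := by gcongr <;> norm_num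
        _ = _ := by rw [Real.rpow_one]
    have h4 : (y : ℝ) ^ (3 / 4 : ℝ) ≤ ∑ m ∈ Finset.Ioc 0 y, quarter m := by
      calc (y : ℝ) ^ (3 / 4 : ℝ) = ∑ m ∈ Finset.Ioc 0 y, (y : ℝ) ^ (-(1 / 4) : ℝ) := by
            rw [Finset.sum_const, Nat.card_Ioc, Nat.sub_zero, nsmul_eq_mul]
            nth_rewrite 2 [← Real.rpow_one (y : ℝ)]
            rw [← Real.rpow_add (by linarith)]; norm_num
        _ ≤ _ := Finset.sum_le_sum fun m hm => by
            obtain ⟨hm0, hmy⟩ := Finset.mem_Ioc.1 hm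
            rw [quarter_apply hm0.ne']
            exact Real.rpow_le_rpow_of_nonpos (by exact_mod_cast hm0) (by exact_mod_cast hmy)
              (by norm_num)
    have := mul_le_mul_of_nonneg_left (h3.trans (mul_le_mul_of_nonneg_left h4 (by norm_num))) (h0 n)
    linarith
  have h2 := sum_conv_le quarter_nonneg h hC N
  rw [mul_comm] at h2
  have h3 : ∑ n ∈ Finset.Ioc 0 N, quarter n / n ≤ ∑' n : ℕ, (n : ℝ) ^ (-(5 / 4) : ℝ) := by
    refine le_trans (Finset.sum_le_sum fun n hn => ?_)
      (hs.sum_le_tsum (Finset.Ioc 0 N) (fun n _ => by positivity))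
    have hn0 := (Finset.mem_Ioc.1 hn).1
    have hn0' : 0 < (n : ℝ) := by exact_mod_cast hn0
    rw [quarter_apply hn0.ne', div_eq_mul_inv, ← Real.rpow_neg_one, ← Real.rpow_add hn0']
    norm_num
  have h4 : C * N * ∑ n ∈ Finset.Ioc 0 N, quarter n / n ≤
      C * N * (∑' n : ℕ, (n : ℝ) ^ (-(5 / 4) : ℝ) + 1) :=
    mul_le_mul_of_nonneg_left (by linarith) (by positivity)
  linarith

lemma sum_div_eq (a : ℕ → ℝ) (N : ℕ) : ∑ n ∈ Finset.Ioc 0 N, a n / n =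
    (∑ n ∈ Finset.Ioc 0 N, a n) / (N + 1) +
      ∑ m ∈ Finset.Ioc 0 N, (∑ n ∈ Finset.Ioc 0 m, a n) / (m * (m + 1)) := by
  induction N with
  | zero => simp
  | succ N ih =>
    have hI : Finset.Ioc 0 (N + 1) = insert (N + 1) (Finset.Ioc 0 N) := by
      ext; simp; omega
    have e : ∀ g : ℕ → ℝ, ∑ n ∈ Finset.Ioc 0 (N + 1), g n = ∑ n ∈ Finset.Ioc 0 N, g n + g (N + 1) := by
      intro g; rw [hI, Finset.sum_insert (by simp), add_comm]
    rw [e, e (fun m => (∑ n ∈ Finset.Ioc 0 m, a n) / (m * (m + 1))), ih, e a]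
    push_cast
    field_simp
    ring

lemma log_le_quarter {x : ℝ} (hx : 0 < x) : Real.log x ≤ 4 * x ^ (1 / 4 : ℝ) := by
  have := Real.log_le_rpow_div hx.le (by norm_num : (0 : ℝ) < 1 / 4)
  linarith

/-- The restriction of `R 0 * ppLog` to prime powers that are not prime. -/
def RnLog : ArithmeticFunction ℝ :=
  ⟨fun n => if n.Prime then 0 else R 0 n * ppLog n, by simp⟩

lemma RnLog_apply (n : ℕ) : RnLog n = if n.Prime then 0 else R 0 n * ppLog n := rfl

lemma RnLog_nonneg (n : ℕ) : 0 ≤ RnLog n := by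
  rw [RnLog_apply]; split_ifs
  · exact le_rfl
  · exact mul_nonneg (R_zero_nonneg _) (ppLog_nonneg n)

lemma Rpp_split (n : ℕ) : (RA 0).pmul ppLog n = RpLog n + RnLog n := by
  rw [ArithmeticFunction.pmul_apply, RpLog_apply, RnLog_apply]
  change R 0 n * _ = _
  split_ifs with h
  · rw [ppLog_apply, if_pos h.isPrimePow, add_zero]
  · rw [zero_add]

lemma sum_RnLog : ∃ C : ℝ, 0 < C ∧ ∀ y : ℕ,
    ∑ n ∈ Finset.Ioc 0 y, RnLog n ≤ C * (y : ℝ) ^ (3 / 4 : ℝ) := by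
  obtain ⟨D, hD⟩ := Chebyshev.psi_sub_theta_le_mul_sqrt
  refine ⟨156 * (|D| + 1), by positivity, fun y => ?_⟩
  rcases Nat.eq_zero_or_pos y with rfl | hy
  · simp
  have hy1 : (1 : ℝ) ≤ y := by exact_mod_cast hy
  have hl2 := Real.log_pos one_lt_two
  have hl2' : (2 / 3 : ℝ) < Real.log 2 := lt_trans (by norm_num) Real.log_two_gt_d9
  set u : ℝ := (y : ℝ) ^ (1 / 8 : ℝ) with hu
  have hu1 : 1 ≤ u := Real.one_le_rpow hy1 (by norm_num)
  have hL0 : 0 ≤ Real.log y := Real.log_nonneg hy1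
  have hL : Real.log y / Real.log 2 ≤ 12 * u := by
    have := Real.log_le_rpow_div (by positivity : (0 : ℝ) ≤ y) (by norm_num : (0 : ℝ) < 1 / 8)
    rw [div_le_iff₀ hl2]
    nlinarith
  have hterm : ∀ n ∈ Finset.Ioc 0 y, RnLog n ≤
      156 * u ^ 2 * (if ¬ n.Prime then ArithmeticFunction.vonMangoldt n else 0) := by
    intro n hn
    obtain ⟨hn0, hny⟩ := Finset.mem_Ioc.1 hn
    have hle := ppLog_le (x := y) (n := n) (by exact_mod_cast hny) hn0.ne'
    rw [RnLog_apply]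
    split_ifs with hp
    · simp
    · have hL0' : 0 ≤ ArithmeticFunction.vonMangoldt n := ArithmeticFunction.vonMangoldt_nonneg
      simp only [hp, if_false, not_false_eq_true, if_true, zero_add] at hle
      have hR : R 0 n ≤ 13 * u ∨ ppLog n = 0 := by
        by_cases hpp : IsPrimePow n
        · left
          obtain ⟨p, j, hpr, -, rfl⟩ := (isPrimePow_nat_iff _).1 hpp
          have h1 := R_zero_prime_pow_le hpr j
          have h2 : (j : ℝ) * Real.log 2 ≤ Real.log y := by
            rw [← Real.log_pow]
            apply Real.log_le_log (by positivity)
            calc (2 : ℝ) ^ j ≤ (p : ℝ) ^ j := by gcongr; exact_mod_cast hpr.two_le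
              _ ≤ y := by exact_mod_cast hny
          have h3 : (j : ℝ) ≤ 12 * u := by
            rw [← le_div_iff₀ hl2] at h2; exact h2.trans hL
          linarith
        · right; rw [ppLog_apply, if_neg hpp]
      rcases hR with hR | hR
      · calc R 0 n * ppLog n ≤ 13 * u * (12 * u * ArithmeticFunction.vonMangoldt n) := by
              refine mul_le_mul hR (hle.trans ?_) (ppLog_nonneg n) (by positivity)
              exact mul_le_mul_of_nonneg_right hL hL0'
          _ = _ := by ring
      · rw [hR, mul_zero]; positivity
  refine (Finset.sum_le_sum hterm).trans ?_
  rw [← Finset.mul_sum, ← Finset.sum_filter]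
  have := Chebyshev.psi_sub_theta_eq_sum_not_prime (y : ℝ)
  rw [Nat.floor_natCast] at this
  rw [← this]
  have h1 : Chebyshev.psi y - Chebyshev.theta y ≤ (|D| + 1) * √y :=
    (hD y).trans (mul_le_mul_of_nonneg_right (by linarith [le_abs_self D]) (Real.sqrt_nonneg _))
  have h2 : u ^ 2 * √y = (y : ℝ) ^ (3 / 4 : ℝ) := by
    rw [hu, ← Real.rpow_natCast, ← Real.rpow_mul (by linarith), Real.sqrt_eq_rpow,
      ← Real.rpow_add (by linarith)]
    norm_num
  calc 156 * u ^ 2 * (Chebyshev.psi y - Chebyshev.theta y)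
      ≤ 156 * u ^ 2 * ((|D| + 1) * √y) := by gcongr
    _ = 156 * (|D| + 1) * (u ^ 2 * √y) := by ring
    _ = _ := by rw [h2]

lemma rpow_le_self {y : ℕ} {s : ℝ} (hs0 : 0 < s) (hs : s ≤ 1) : (y : ℝ) ^ s ≤ y := by
  rcases Nat.eq_zero_or_pos y with rfl | hy
  · simp [Real.zero_rpow hs0.ne']
  · have hy1 : (1 : ℝ) ≤ y := by exact_mod_cast hy
    simpa using Real.rpow_le_rpow_of_exponent_le hy1 hs

lemma sum_RpLog (y : ℕ) : ∑ n ∈ Finset.Ioc 0 y, RpLog n ≤ 2 * Real.log 4 * y := by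
  have h := Chebyshev.theta_le_log4_mul_x (x := (y : ℝ)) (by positivity)
  rw [Chebyshev.theta, Nat.floor_natCast, Finset.sum_filter] at h
  have : ∑ n ∈ Finset.Ioc 0 y, RpLog n ≤
      2 * ∑ n ∈ Finset.Ioc 0 y, (if n.Prime then Real.log n else 0) := by
    rw [Finset.mul_sum]
    refine Finset.sum_le_sum fun n _ => ?_
    rw [RpLog_apply]
    split_ifs with hp
    · have h1 := R_zero_prime_pow_le hp 1
      rw [pow_one] at h1
      have := Real.log_natCast_nonneg n
      have h2 : R 0 n ≤ 2 := by norm_num at h1; exact h1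
      gcongr
    · simp
  linarith

lemma sum_Rpp : ∃ C : ℝ, 0 < C ∧ ∀ y : ℕ,
    ∑ n ∈ Finset.Ioc 0 y, (RA 0).pmul ppLog n ≤ C * y := by
  obtain ⟨C, hC, h⟩ := sum_RnLog
  have hl4 := Real.log_pos (by norm_num : (1 : ℝ) < 4)
  refine ⟨2 * Real.log 4 + C, by positivity, fun y => ?_⟩
  simp only [Rpp_split]
  rw [Finset.sum_add_distrib]
  have h1 := sum_RpLog y
  have h2 := (h y).trans (mul_le_mul_of_nonneg_left
    (rpow_le_self (y := y) (by norm_num) (by norm_num : (3 / 4 : ℝ) ≤ 1)) hC.le)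
  linarith

/-- The sum of the nonprime contributions `R 0 q * log q / q` converges. -/
lemma sum_RnLog_div : ∃ C : ℝ, 0 < C ∧ ∀ N : ℕ, ∑ n ∈ Finset.Ioc 0 N, RnLog n / n ≤ C := by
  obtain ⟨C, hC, h⟩ := sum_RnLog
  have hs : Summable fun n : ℕ => (n : ℝ) ^ (-(5 / 4) : ℝ) :=
    Real.summable_nat_rpow.2 (by norm_num)
  have hS0 : 0 ≤ ∑' n : ℕ, (n : ℝ) ^ (-(5 / 4) : ℝ) := tsum_nonneg fun n => by positivity
  refine ⟨C + C * ∑' n : ℕ, (n : ℝ) ^ (-(5 / 4) : ℝ), by positivity, fun N => ?_⟩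
  rw [sum_div_eq]
  refine add_le_add ?_ ?_
  · rw [div_le_iff₀ (by positivity)]
    have h2 := (h N).trans (mul_le_mul_of_nonneg_left
      (rpow_le_self (y := N) (by norm_num) (by norm_num : (3 / 4 : ℝ) ≤ 1)) hC.le)
    linarith
  · refine le_trans (Finset.sum_le_sum (g := fun m : ℕ => C * (m : ℝ) ^ (-(5 / 4) : ℝ))
      fun m hm => ?_) ?_
    · have hm0 : 0 < (m : ℝ) := by exact_mod_cast (Finset.mem_Ioc.1 hm).1
      rw [div_le_iff₀ (by positivity)]
      refine (h m).trans ?_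
      rw [mul_assoc]
      refine mul_le_mul_of_nonneg_left ?_ hC.le
      have e : (m : ℝ) ^ (3 / 4 : ℝ) = (m : ℝ) ^ (-(5 / 4) : ℝ) * (m * m) := by
        rw [show (m : ℝ) * m = (m : ℝ) ^ (2 : ℝ) by rw [Real.rpow_two]; ring,
          ← Real.rpow_add hm0]
        norm_num
      rw [e]
      gcongr
      linarith
    · rw [← Finset.mul_sum]
      exact mul_le_mul_of_nonneg_left (hs.sum_le_tsum _ fun n _ => by positivity) hC.le

/-! ### Mertens and Chebyshev estimates for the primes that are sums of two squares -/

lemma sumR_div : ∃ C : ℝ, 0 < C ∧ ∀ N n : ℕ, 0 < n → n ≤ N →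
    |∑ m ∈ Finset.Ioc 0 (N / n), R 0 m - π / 4 * ((N : ℝ) / n)| ≤ C * ((N : ℝ) / n) ^ (3 / 4 : ℝ) := by
  obtain ⟨C, hC, h⟩ := sum_R_bound
  refine ⟨C, hC, fun N n hn hnN => ?_⟩
  have hn' : (0 : ℝ) < n := by exact_mod_cast hn
  have h1 : (1 : ℝ) ≤ (N : ℝ) / n := by
    rw [one_le_div hn']; exact_mod_cast hnN
  have := h 0 _ h1
  rw [Nat.floor_div_natCast, Nat.floor_natCast] at this
  have e : Finset.Icc 1 (N / n) = Finset.Ioc 0 (N / n) := by ext; simp; omega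
  simpa [e] using this

lemma sumR_one : ∃ C : ℝ, 0 < C ∧ ∀ N : ℕ, 1 ≤ N →
    |∑ m ∈ Finset.Ioc 0 N, R 0 m - π / 4 * N| ≤ C * (N : ℝ) ^ (3 / 4 : ℝ) := by
  obtain ⟨C, hC, h⟩ := sumR_div
  refine ⟨C, hC, fun N hN => ?_⟩
  simpa using h N 1 one_pos hN

lemma sumR_lin : ∃ C : ℝ, 0 < C ∧ ∀ N : ℕ, ∑ m ∈ Finset.Ioc 0 N, RA 0 m ≤ C * N := by
  obtain ⟨C, hC, h⟩ := sumR_one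
  refine ⟨π / 4 + C, by positivity, fun N => ?_⟩
  rcases Nat.eq_zero_or_pos N with rfl | hN
  · simp
  have h1 := (abs_le.1 (h N hN)).2
  have h2 := mul_le_mul_of_nonneg_left
    (rpow_le_self (y := N) (by norm_num) (by norm_num : (3 / 4 : ℝ) ≤ 1)) hC.le
  change ∑ m ∈ Finset.Ioc 0 N, R 0 m ≤ _
  linarith

/-- `∑_{n ≤ N} R 0 n log n = (π/4) N log N + O(N)`. -/
lemma sumR_log : ∃ C : ℝ, 0 < C ∧ ∀ N : ℕ, 1 ≤ N →
    |∑ n ∈ Finset.Ioc 0 N, R 0 n * Real.log n - π / 4 * N * Real.log N| ≤ C * N := by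
  obtain ⟨C1, hC1, h1⟩ := sumR_one
  obtain ⟨C2, hC2, h2⟩ := sumR_lin
  obtain ⟨K, hK, h3⟩ := sum_weight
  refine ⟨4 * C1 + 2 * (K * C2), by positivity, fun N hN => ?_⟩
  have hN0 : (0 : ℝ) < N := by exact_mod_cast hN
  have hL : 0 ≤ Real.log N := Real.log_natCast_nonneg N
  set A := ∑ m ∈ Finset.Ioc 0 N, R 0 m
  have e1 : |A * Real.log N - π / 4 * N * Real.log N| ≤ 4 * C1 * N := by
    rw [← sub_mul, abs_mul, abs_of_nonneg hL]
    calc _ ≤ C1 * (N : ℝ) ^ (3 / 4 : ℝ) * (4 * (N : ℝ) ^ (1 / 4 : ℝ)) :=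
          mul_le_mul (h1 N hN) (log_le_quarter hN0) hL (by positivity)
      _ = 4 * C1 * ((N : ℝ) ^ (3 / 4 : ℝ) * (N : ℝ) ^ (1 / 4 : ℝ)) := by ring
      _ = _ := by rw [← Real.rpow_add hN0]; norm_num
  have hw := h3 (RA 0) C2 hC2 R_zero_nonneg h2 N
  have e2 : A * Real.log N - ∑ n ∈ Finset.Ioc 0 N, R 0 n * Real.log n =
      ∑ n ∈ Finset.Ioc 0 N, R 0 n * (Real.log N - Real.log n) := by
    rw [Finset.sum_mul, ← Finset.sum_sub_distrib]
    exact Finset.sum_congr rfl fun n _ => by ring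
  have e3 : 0 ≤ ∑ n ∈ Finset.Ioc 0 N, R 0 n * (Real.log N - Real.log n) := by
    refine Finset.sum_nonneg fun n hn => mul_nonneg (R_zero_nonneg n) (sub_nonneg.2 ?_)
    obtain ⟨hn0, hnN⟩ := Finset.mem_Ioc.1 hn
    exact Real.log_le_log (by exact_mod_cast hn0) (by exact_mod_cast hnN)
  have e4 : ∑ n ∈ Finset.Ioc 0 N, R 0 n * (Real.log N - Real.log n) ≤ 2 * (K * C2) * N := by
    calc _ ≤ ∑ n ∈ Finset.Ioc 0 N, 2 * (RA 0 n * ((N : ℝ) / n) ^ (3 / 4 : ℝ)) := by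
          refine Finset.sum_le_sum fun n hn => ?_
          obtain ⟨hn0, hnN⟩ := Finset.mem_Ioc.1 hn
          have hn0' : (0 : ℝ) < n := by exact_mod_cast hn0
          rw [← Real.log_div hN0.ne' hn0'.ne']
          have := Real.log_le_rpow_div (x := (N : ℝ) / n) (by positivity)
            (by norm_num : (0 : ℝ) < 3 / 4)
          have h5 : 0 ≤ ((N : ℝ) / n) ^ (3 / 4 : ℝ) := by positivity
          have := mul_le_mul_of_nonneg_left (show Real.log ((N : ℝ) / n) ≤
            2 * ((N : ℝ) / n) ^ (3 / 4 : ℝ) by linarith) (R_zero_nonneg n)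
          change _ ≤ 2 * (R 0 n * _)
          linarith
      _ ≤ _ := by rw [← Finset.mul_sum]; linarith
  have := abs_le.1 e1
  rw [abs_le]; constructor <;> nlinarith

/-- A Mertens estimate: `∑_{q ≤ N} R 0 q log q / q = log N + O(1)` over primes `q`. -/
lemma mertens : ∃ K : ℝ, 0 < K ∧ ∀ N : ℕ, 1 ≤ N →
    |∑ n ∈ Finset.Ioc 0 N, RpLog n / n - Real.log N| ≤ K := by
  obtain ⟨C1, hC1, hA⟩ := sumR_div
  obtain ⟨C2, hC2, hS⟩ := sumR_log
  obtain ⟨C3, hC3, hP⟩ := sum_Rpp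
  obtain ⟨C4, hC4, hn⟩ := sum_RnLog_div
  obtain ⟨Kw, hKw, hw⟩ := sum_weight
  have hpi := Real.pi_gt_three
  refine ⟨2 * (C2 + C1 * (Kw * C3)) + C4, by positivity, fun N hN => ?_⟩
  have hN0 : (0 : ℝ) < N := by exact_mod_cast hN
  -- the convolution of `R 0` with a function `g` dominated by `R 0 * ppLog`
  have conv : ∀ g : ArithmeticFunction ℝ, (∀ n, 0 ≤ g n) → (∀ n, g n ≤ (RA 0).pmul ppLog n) →
      |∑ n ∈ Finset.Ioc 0 N, (RA 0 * g) n - π / 4 * N * ∑ n ∈ Finset.Ioc 0 N, g n / n| ≤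
        C1 * (Kw * C3) * N := by
    intro g hg0 hg
    have hgs : ∀ x : ℕ, ∑ n ∈ Finset.Ioc 0 x, g n ≤ C3 * x := fun x =>
      (Finset.sum_le_sum fun n _ => hg n).trans (hP x)
    rw [mul_comm (RA 0) g, ArithmeticFunction.sum_Ioc_mul_eq_sum_sum, Finset.mul_sum,
      ← Finset.sum_sub_distrib]
    refine (Finset.abs_sum_le_sum_abs _ _).trans ?_
    refine le_trans (Finset.sum_le_sum (g := fun n : ℕ => C1 * (g n * ((N : ℝ) / n) ^ (3 / 4 : ℝ)))
      fun n hn => ?_) ?_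
    · obtain ⟨hn0, hnN⟩ := Finset.mem_Ioc.1 hn
      have := mul_le_mul_of_nonneg_left (hA N n hn0 hnN) (hg0 n)
      have e : g n * ∑ m ∈ Finset.Ioc 0 (N / n), RA 0 m - π / 4 * N * (g n / n) =
          g n * (∑ m ∈ Finset.Ioc 0 (N / n), R 0 m - π / 4 * ((N : ℝ) / n)) := by
        change g n * ∑ m ∈ Finset.Ioc 0 (N / n), R 0 m - _ = _
        ring
      rw [e, abs_mul, abs_of_nonneg (hg0 n)]
      linarith
    · rw [← Finset.mul_sum, mul_assoc C1]
      exact mul_le_mul_of_nonneg_left (hw g C3 hC3 hg0 hgs N) hC1.le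
  have hpp0 : ∀ n, 0 ≤ (RA 0).pmul ppLog n := fun n => mul_nonneg (R_zero_nonneg n) (ppLog_nonneg n)
  have c1 := abs_le.1 (conv RpLog RpLog_nonneg (fun n => by rw [Rpp_split]; linarith [RnLog_nonneg n]))
  have c2 := abs_le.1 (conv ((RA 0).pmul ppLog) hpp0 (fun n => le_rfl))
  have s := abs_le.1 (hS N hN)
  have i1 : ∑ n ∈ Finset.Ioc 0 N, (RA 0 * RpLog) n ≤ ∑ n ∈ Finset.Ioc 0 N, R 0 n * Real.log n :=
    Finset.sum_le_sum fun n hn => conv_RpLog_le n (Finset.mem_Ioc.1 hn).1.ne'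
  have i2 : ∑ n ∈ Finset.Ioc 0 N, R 0 n * Real.log n ≤
      ∑ n ∈ Finset.Ioc 0 N, (RA 0 * (RA 0).pmul ppLog) n :=
    Finset.sum_le_sum fun n hn =>
      mul_log_le_conv (RA_mult 0) R_zero_nonneg n (Finset.mem_Ioc.1 hn).1.ne'
  have e : ∑ n ∈ Finset.Ioc 0 N, (RA 0).pmul ppLog n / n =
      ∑ n ∈ Finset.Ioc 0 N, RpLog n / n + ∑ n ∈ Finset.Ioc 0 N, RnLog n / n := by
    rw [← Finset.sum_add_distrib]
    exact Finset.sum_congr rfl fun n _ => by rw [Rpp_split, add_div]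
  rw [e] at c2
  have hnN := hn N
  set D := ∑ n ∈ Finset.Ioc 0 N, RpLog n / n
  set E := ∑ n ∈ Finset.Ioc 0 N, RnLog n / n
  set Q := C2 + C1 * (Kw * C3) with hQ
  have hQ0 : 0 < Q := by positivity
  have u1 : π / 4 * N * (D - Real.log N) ≤ Q * N := by rw [hQ]; linarith
  have u2 : π / 4 * N * (Real.log N - D - E) ≤ Q * N := by rw [hQ]; linarith
  have cancel : ∀ x : ℝ, π / 4 * N * x ≤ Q * N → x ≤ 2 * Q := by
    intro x hx
    have h1 : π / 4 * x ≤ Q := by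
      by_contra h
      have := mul_lt_mul_of_pos_right (not_le.1 h) hN0
      linarith
    nlinarith
  have v1 := cancel _ u1
  have v2 := cancel _ u2
  rw [abs_le]
  constructor <;> linarith

/-- A Chebyshev lower bound for primes that are sums of two squares. -/
lemma theta_lower : ∃ c : ℝ, 0 < c ∧ ∀ N : ℕ, 2 ≤ N →
    c * N ≤ ∑ n ∈ Finset.Ioc 0 N, RpLog n := by
  obtain ⟨K, hK, h⟩ := mertens
  obtain ⟨A, hA⟩ := exists_nat_gt (Real.exp (2 * K + 2))
  have hA1 : 1 < A := by
    have : (1 : ℝ) < A := lt_trans (by rw [Real.one_lt_exp_iff]; linarith) hA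
    exact_mod_cast this
  have hA0 : (0 : ℝ) < A := by exact_mod_cast (by omega : 0 < A)
  have hAl : 2 * K + 2 < Real.log A := (Real.lt_log_iff_exp_lt hA0).2 hA
  have hl2 := Real.log_pos one_lt_two
  have h02 : 0 < R 0 2 := R_zero_pos_iff.2 ⟨by norm_num, 1, 1, by norm_num⟩
  set b := R 0 2 * Real.log 2 with hb
  have hb0 : 0 < b := by positivity
  refine ⟨min (1 / (2 * (A : ℝ))) (b / A), lt_min (by positivity) (by positivity), fun N hN => ?_⟩
  have hN0 : (0 : ℝ) < N := by exact_mod_cast (by omega : 0 < N)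
  -- `A` is so large that by `mertens` the integers in `(N / A, N]` contribute at least `1` to the
  -- harmonic sum of `RpLog`; for `N < A` the prime `2` alone suffices
  rcases lt_or_ge N A with hlt | hge
  · have hmem : 2 ∈ Finset.Ioc 0 N := Finset.mem_Ioc.2 ⟨by norm_num, hN⟩
    have h3 := Finset.single_le_sum (f := fun n => RpLog n) (fun n _ => RpLog_nonneg n) hmem
    have h4 : RpLog 2 = b := by
      rw [RpLog_apply, if_pos Nat.prime_two]; simp [hb]
    have h5 : min (1 / (2 * (A : ℝ))) (b / A) * N ≤ b / A * N :=
      mul_le_mul_of_nonneg_right (min_le_right _ _) hN0.le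
    have h6 : b / A * N ≤ b := by
      rw [div_mul_eq_mul_div, div_le_iff₀ hA0]
      have : (N : ℝ) ≤ A := by exact_mod_cast hlt.le
      gcongr
    linarith
  · set M := N / A with hM
    have hM1 : 1 ≤ M := (Nat.one_le_div_iff (by omega)).2 hge
    have hM0 : (0 : ℝ) < M := by exact_mod_cast hM1
    have hMN : M ≤ N := Nat.div_le_self _ _
    have d1 := (abs_le.1 (h N (by omega))).1
    have d2 := (abs_le.1 (h M hM1)).2
    have hlog : Real.log M + Real.log A ≤ Real.log N := by
      rw [← Real.log_mul hM0.ne' hA0.ne']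
      exact Real.log_le_log (by positivity) (by exact_mod_cast Nat.div_mul_le_self N A)
    have hN2 : (N : ℝ) ≤ 2 * A * M := by
      have h1 : N < A * (M + 1) := Nat.lt_mul_div_succ N (by omega)
      have : N ≤ 2 * A * M := by nlinarith
      exact_mod_cast this
    have split : ∑ n ∈ Finset.Ioc 0 N, RpLog n / n =
        ∑ n ∈ Finset.Ioc 0 M, RpLog n / n + ∑ n ∈ Finset.Ioc M N, RpLog n / n :=
      (Finset.sum_Ioc_consecutive _ (Nat.zero_le _) hMN).symm
    have h3 : 1 ≤ ∑ n ∈ Finset.Ioc M N, RpLog n / n := by linarith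
    have h4 : ∑ n ∈ Finset.Ioc M N, RpLog n / n ≤ (∑ n ∈ Finset.Ioc 0 N, RpLog n) / M := by
      rw [Finset.sum_div]
      calc _ ≤ ∑ n ∈ Finset.Ioc M N, RpLog n / M := by
            refine Finset.sum_le_sum fun n hn => ?_
            have : (M : ℝ) ≤ n := by exact_mod_cast (Finset.mem_Ioc.1 hn).1.le
            exact div_le_div_of_nonneg_left (RpLog_nonneg n) hM0 this
        _ ≤ _ := Finset.sum_le_sum_of_subset_of_nonneg
            (Finset.Ioc_subset_Ioc_left (Nat.zero_le _))
            (fun n _ _ => div_nonneg (RpLog_nonneg n) hM0.le)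
    have h5 : (M : ℝ) ≤ ∑ n ∈ Finset.Ioc 0 N, RpLog n := by
      have := h3.trans h4
      rwa [one_le_div hM0] at this
    have h6 : min (1 / (2 * (A : ℝ))) (b / A) * N ≤ 1 / (2 * (A : ℝ)) * N :=
      mul_le_mul_of_nonneg_right (min_le_left _ _) hN0.le
    have h7 : 1 / (2 * (A : ℝ)) * N ≤ (M : ℝ) := by
      rw [one_div_mul_eq_div, div_le_iff₀ (by positivity)]; linarith
    linarith

/-! ### Counting sums of two squares from below -/

/-- `sInd * log` dominates its convolution with the primes that are sums of two squares, up to the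
factor `R 0 p ≤ 2`. -/
lemma sA_conv_le (n : ℕ) : (sA * RpLog) n ≤ 2 * (sInd n * Real.log n) := by
  rw [ArithmeticFunction.mul_apply]
  have key : ∀ x ∈ n.divisorsAntidiagonal, sA x.1 * RpLog x.2 ≤
      2 * sInd n * ArithmeticFunction.vonMangoldt x.2 := by
    intro x hx
    have hx' := (Nat.mem_divisorsAntidiagonal.1 hx).1
    have hr : 0 ≤ 2 * sInd n * ArithmeticFunction.vonMangoldt x.2 := by
      have := sInd_nonneg n
      have := @ArithmeticFunction.vonMangoldt_nonneg x.2
      positivity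
    by_cases hp : x.2.Prime
    swap
    · rw [RpLog_apply, if_neg hp, mul_zero]; exact hr
    by_cases h2 : x.2 ∈ S₂
    swap
    · have h0 : R 0 x.2 = 0 := le_antisymm (not_lt.1 fun h => h2 (R_zero_pos_iff.1 h))
        (R_zero_nonneg _)
      rw [RpLog_apply, if_pos hp, h0, zero_mul, mul_zero]; exact hr
    have h1 : sInd x.1 ≤ sInd n := by
      by_cases h : x.1 ∈ S₂
      · rw [sInd_of_mem h, sInd_of_mem]
        rw [← hx', mul_comm]
        exact R_zero_pos_iff.1 (lt_of_lt_of_le (R_zero_pos_iff.2 h) (R_le_R_mul h2 _))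
      · rw [sInd_of_notMem h]; exact sInd_nonneg _
    rw [RpLog_apply, if_pos hp, ArithmeticFunction.vonMangoldt_apply_prime hp]
    have h3 : R 0 x.2 ≤ 2 := by
      have := R_zero_prime_pow_le hp 1
      norm_num at this; exact this
    have hl : 0 ≤ Real.log x.2 := Real.log_natCast_nonneg _
    change sInd x.1 * _ ≤ _
    calc _ ≤ sInd n * (2 * Real.log x.2) :=
          mul_le_mul h1 (mul_le_mul_of_nonneg_right h3 hl)
            (mul_nonneg (R_zero_nonneg _) hl) (sInd_nonneg _)
      _ = _ := by ring
  refine (Finset.sum_le_sum key).trans (le_of_eq ?_)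
  rw [← Finset.mul_sum, Nat.sum_divisorsAntidiagonal'
    (fun _ b => (ArithmeticFunction.vonMangoldt b : ℝ)), ArithmeticFunction.vonMangoldt_sum]
  ring

lemma sum_R_div_lower : ∃ c C : ℝ, 0 < c ∧ ∀ N : ℕ, 1 ≤ N →
    c * Real.log N - C ≤ ∑ n ∈ Finset.Ioc 0 N, R 0 n / n := by
  obtain ⟨C2, hC2, hS⟩ := sumR_log
  obtain ⟨C3, hC3, hP⟩ := sum_Rpp
  refine ⟨π / 4 / C3, C2 / C3, by positivity, fun N hN => ?_⟩
  have hN0 : (0 : ℝ) < N := by exact_mod_cast hN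
  have s := (abs_le.1 (hS N hN)).1
  have i2 : ∑ n ∈ Finset.Ioc 0 N, R 0 n * Real.log n ≤
      ∑ n ∈ Finset.Ioc 0 N, (RA 0 * (RA 0).pmul ppLog) n :=
    Finset.sum_le_sum fun n hn =>
      mul_log_le_conv (RA_mult 0) R_zero_nonneg n (Finset.mem_Ioc.1 hn).1.ne'
  have i3 := sum_conv_le (f := RA 0) R_zero_nonneg hP hC3 N
  change _ ≤ C3 * N * ∑ n ∈ Finset.Ioc 0 N, R 0 n / n at i3
  set T := ∑ n ∈ Finset.Ioc 0 N, R 0 n / n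
  have h : N * (π / 4 * Real.log N - C2) ≤ N * (C3 * T) := by linarith
  have h' := le_of_mul_le_mul_left h hN0
  rw [div_mul_eq_mul_div, ← sub_div, div_le_iff₀ hC3]
  linarith

/-- As `R 0 ≤ sA * sA`, the harmonic sum of `R 0` is at most the square of the harmonic sum over
sums of two squares; with `sum_R_div_lower` the latter is at least of order `√(log M)`. -/
lemma sum_R_div_le_sq (M : ℕ) :
    ∑ n ∈ Finset.Ioc 0 M, R 0 n / n ≤ (∑ n ∈ Finset.Ioc 0 M, sInd n / n) ^ 2 := by
  set g : ArithmeticFunction ℝ := ⟨fun n => sInd n / n, by simp⟩ with hg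
  have hg0 : ∀ n, 0 ≤ g n := fun n => div_nonneg (sInd_nonneg n) (Nat.cast_nonneg n)
  have e : ∀ n : ℕ, (sA * sA) n / n = (g * g) n := by
    intro n
    rw [ArithmeticFunction.mul_apply, ArithmeticFunction.mul_apply, Finset.sum_div]
    refine Finset.sum_congr rfl fun x hx => ?_
    rw [← (Nat.mem_divisorsAntidiagonal.1 hx).1]
    change sInd _ * sInd _ / _ = sInd _ / _ * (sInd _ / _)
    push_cast
    rw [div_mul_div_comm]
  calc _ ≤ ∑ n ∈ Finset.Ioc 0 M, (g * g) n := by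
        refine Finset.sum_le_sum fun n _ => ?_
        rw [← e]
        exact div_le_div_of_nonneg_right (R_le_conv n) (Nat.cast_nonneg n)
    _ ≤ ∑ n ∈ Finset.Ioc 0 M, g n * ∑ m ∈ Finset.Ioc 0 M, g m := by
        rw [ArithmeticFunction.sum_Ioc_mul_eq_sum_sum]
        refine Finset.sum_le_sum fun n _ => mul_le_mul_of_nonneg_left ?_ (hg0 n)
        exact Finset.sum_le_sum_of_subset_of_nonneg
          (Finset.Ioc_subset_Ioc_right (Nat.div_le_self _ _)) (fun m _ _ => hg0 m)
    _ = _ := by rw [← Finset.sum_mul, sq]; rfl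

lemma sum_sInd_log : ∃ c : ℝ, 0 < c ∧ ∀ N : ℕ, 2 ≤ N →
    c * N * ∑ n ∈ Finset.Ioc 0 (N / 2), sInd n / n ≤
      Real.log N * ∑ n ∈ Finset.Ioc 0 N, sInd n := by
  obtain ⟨c, hc, h⟩ := theta_lower
  refine ⟨c / 4, by positivity, fun N hN => ?_⟩
  have h1 : ∑ n ∈ Finset.Ioc 0 N, (sA * RpLog) n ≤ 2 * (Real.log N * ∑ n ∈ Finset.Ioc 0 N, sInd n) := by
    rw [Finset.mul_sum, Finset.mul_sum]
    refine Finset.sum_le_sum fun n hn => (sA_conv_le n).trans ?_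
    obtain ⟨hn0, hnN⟩ := Finset.mem_Ioc.1 hn
    rw [mul_comm (Real.log N)]
    have := Real.log_le_log (by exact_mod_cast hn0 : (0 : ℝ) < n) (by exact_mod_cast hnN : (n : ℝ) ≤ N)
    have := mul_le_mul_of_nonneg_left this (sInd_nonneg n)
    linarith
  -- for `n ≤ N / 2` the inner sum runs over primes up to `N / n ≥ 2`, where `theta_lower` applies
  have h2 : ∑ n ∈ Finset.Ioc 0 (N / 2), c / 2 * N * (sInd n / n) ≤
      ∑ n ∈ Finset.Ioc 0 N, (sA * RpLog) n := by
    rw [ArithmeticFunction.sum_Ioc_mul_eq_sum_sum]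
    refine le_trans ?_ (Finset.sum_le_sum_of_subset_of_nonneg
      (Finset.Ioc_subset_Ioc_right (Nat.div_le_self N 2))
      (fun m _ _ => mul_nonneg (sInd_nonneg m) (Finset.sum_nonneg fun p _ => RpLog_nonneg p)))
    refine Finset.sum_le_sum fun n hn => ?_
    obtain ⟨hn0, hnN⟩ := Finset.mem_Ioc.1 hn
    have hn0' : (0 : ℝ) < n := by exact_mod_cast hn0
    have h2n : 2 ≤ N / n := by
      rw [Nat.le_div_iff_mul_le hn0]; omega
    have hN2 : (N : ℝ) / n ≤ 2 * (N / n : ℕ) := by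
      rw [div_le_iff₀ hn0']
      have h3 := Nat.lt_mul_div_succ N hn0
      have : N ≤ 2 * (N / n) * n := by nlinarith
      exact_mod_cast this
    have h4 := mul_le_mul_of_nonneg_left (h _ h2n) (sInd_nonneg n)
    have h5 := mul_le_mul_of_nonneg_left hN2 (mul_nonneg hc.le (sInd_nonneg n))
    change _ ≤ sInd n * _
    have e : c / 2 * N * (sInd n / n) = 1 / 2 * (c * sInd n * ((N : ℝ) / n)) := by ring
    rw [e]
    linarith
  rw [← Finset.mul_sum] at h2
  linarith

/-- A lower bound, of the true order of magnitude, for the counting function of `S₂`. -/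
lemma count_lower : ∃ c : ℝ, 0 < c ∧ ∀ᶠ N : ℕ in atTop,
    c * N / Real.sqrt (Real.log N) ≤ ∑ n ∈ Finset.Ioc 0 N, sInd n := by
  obtain ⟨a, C, ha, h1⟩ := sum_R_div_lower
  obtain ⟨c, hc, h2⟩ := sum_sInd_log
  refine ⟨c * Real.sqrt (a / 2), by positivity, ?_⟩
  have ht : Tendsto (fun N : ℕ => Real.log N) atTop atTop :=
    Real.tendsto_log_atTop.comp tendsto_natCast_atTop_atTop
  filter_upwards [ht.eventually_ge_atTop (2 * (C + a * Real.log 4) / a), ht.eventually_ge_atTop 1,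
    eventually_ge_atTop 2] with N hN hN1 hN2
  have hN0 : (0 : ℝ) < N := by exact_mod_cast (by omega : 0 < N)
  have hM1 : 1 ≤ N / 2 := by omega
  have hM : Real.log N - Real.log 4 ≤ Real.log (N / 2 : ℕ) := by
    rw [← Real.log_div hN0.ne' (by norm_num)]
    refine Real.log_le_log (by positivity) ?_
    rw [div_le_iff₀ (by norm_num)]
    exact_mod_cast (by omega : N ≤ N / 2 * 4)
  have h3 : Real.sqrt (a / 2 * Real.log N) ≤ ∑ n ∈ Finset.Ioc 0 (N / 2), sInd n / n := by
    refine Real.sqrt_le_iff.2 ⟨Finset.sum_nonneg fun n _ =>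
      div_nonneg (sInd_nonneg n) (Nat.cast_nonneg n), ?_⟩
    refine le_trans ?_ ((h1 _ hM1).trans (sum_R_div_le_sq _))
    rw [div_le_iff₀ ha] at hN
    nlinarith
  have h4 := h2 N hN2
  have hL : 0 < Real.log N := by linarith
  rw [Real.sqrt_mul (by positivity)] at h3
  have hs : 0 < Real.sqrt (Real.log N) := Real.sqrt_pos.2 hL
  have h5 := mul_le_mul_of_nonneg_left h3 (by positivity : 0 ≤ c * N)
  rw [div_le_iff₀ hs]
  have hss := Real.mul_self_sqrt hL.le
  set F := ∑ n ∈ Finset.Ioc 0 N, sInd n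
  set s := Real.sqrt (Real.log N)
  rw [← hss] at h4
  have h6 : s * (c * Real.sqrt (a / 2) * N) ≤ s * (F * s) := by nlinarith
  exact le_of_mul_le_mul_left h6 hs

/-! ### Upper bounds on average over sums of two squares -/

/-- The multiplicative function `n ↦ y ^ ω(n)`. -/
def yom (y : ℝ) : ArithmeticFunction ℝ :=
  ⟨fun n => if n = 0 then 0 else y ^ n.primeFactors.card, if_pos rfl⟩

lemma yom_apply (y : ℝ) {n : ℕ} (hn : n ≠ 0) : yom y n = y ^ n.primeFactors.card := if_neg hn

lemma yom_mult (y : ℝ) : (yom y).IsMultiplicative := by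
  refine ArithmeticFunction.IsMultiplicative.iff_ne_zero.2 ⟨by rw [yom_apply y one_ne_zero]; simp, ?_⟩
  intro m n hm hn h
  rw [yom_apply y (mul_ne_zero hm hn), yom_apply y hm, yom_apply y hn, h.primeFactors_mul,
    Finset.card_union_of_disjoint h.disjoint_primeFactors, pow_add]

lemma yom_nonneg {y : ℝ} (hy : 0 ≤ y) (n : ℕ) : 0 ≤ yom y n := by
  rcases eq_or_ne n 0 with rfl | h
  · simp
  · rw [yom_apply y h]; positivity

lemma yom_prime_pow (y : ℝ) {p : ℕ} (hp : p.Prime) (j : ℕ) :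
    yom y (p ^ j) = if j = 0 then 1 else y := by
  rw [yom_apply y (pow_ne_zero _ hp.ne_zero)]
  split_ifs with h
  · simp [h]
  · rw [Nat.primeFactors_prime_pow h hp]; simp

lemma yom_prime (y : ℝ) {p : ℕ} (hp : p.Prime) : yom y p = y := by
  simpa using yom_prime_pow y hp 1

/-- The absolute value of the `4l`-th Fourier coefficient of the measure on `Λ_m`. -/
def gl (l : ℕ) : ArithmeticFunction ℝ :=
  ⟨fun n => |R l n| / R 0 n, by rw [R_at_zero, R_at_zero]; simp⟩

lemma gl_apply (l n : ℕ) : gl l n = |R l n| / R 0 n := rfl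

lemma gl_nonneg (l n : ℕ) : 0 ≤ gl l n := div_nonneg (abs_nonneg _) (R_zero_nonneg n)

lemma gl_le_one (l n : ℕ) : gl l n ≤ 1 := div_le_one_of_le₀ (abs_R_le _ _) (R_zero_nonneg n)

lemma gl_mult (l : ℕ) : (gl l).IsMultiplicative := by
  refine ⟨by rw [gl_apply, R_one, R_one]; simp, ?_⟩
  intro m n h
  rw [gl_apply, gl_apply, gl_apply, R_mul l h, R_mul 0 h, abs_mul, mul_div_mul_comm]

/-- Comparison of two sums over primes up to an exception at `p = 2`. -/
lemma tsum_primes_le {F G : Nat.Primes → ℝ} {K : ℝ} (h0 : ∀ p, 0 ≤ F p) (hG : Summable G)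
    (h : ∀ p, F p ≤ G p + if (p : ℕ) = 2 then K else 0) :
    ∑' p, F p ≤ ∑' p, G p + K := by
  have h1 : HasSum (fun p : Nat.Primes => if (p : ℕ) = 2 then K else 0) K := by
    have := hasSum_single (f := fun p : Nat.Primes => if (p : ℕ) = 2 then K else 0)
      ⟨2, Nat.prime_two⟩ (fun b hb => if_neg fun h => hb (Subtype.ext h))
    simpa using this
  have h2 := hG.hasSum.add h1
  rw [← h2.tsum_eq]
  exact (Summable.of_nonneg_of_le h0 h h2.summable).tsum_le_tsum h h2.summable

/-- Passing from an exponential of a prime sum to a power of `log N`. -/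
lemma exp_log_bound {L a b : ℝ} (hL : 0 < L) (N : ℝ) :
    N / L * Real.exp (a * Real.log L + b) = Real.exp b * (N * L ^ (a - 1)) := by
  rw [Real.exp_add, Real.rpow_sub_one hL.ne', Real.rpow_def_of_pos hL, mul_comm a]
  ring

lemma one_le_log_nat {N : ℕ} (hN : 3 ≤ N) : 1 ≤ Real.log N := by
  rw [Real.le_log_iff_exp_le (by exact_mod_cast (by omega : 0 < N))]
  have : (3 : ℝ) ≤ N := by exact_mod_cast hN
  linarith [Real.exp_one_lt_d9]

/-- The sums of two squares, weighted by `y ^ ω`. The exponent reflects that half of the primes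
are sums of two squares. -/
lemma sum_sInd_pow {y : ℝ} (hy0 : 0 < y) (hy1 : y ≤ 1) : ∃ C : ℝ, 0 < C ∧ ∀ N : ℕ, 3 ≤ N →
    ∑ n ∈ Finset.Ioc 0 N, sInd n * y ^ n.primeFactors.card ≤ C * (N * Real.log N ^ (y / 2 - 1)) := by
  obtain ⟨C, hC, h⟩ := sum_mult_le (B := 1) zero_le_one
  obtain ⟨C1, hC1, h1⟩ := PR_zero_le
  refine ⟨C * Real.exp (y / 2 * C1 + 1), by positivity, fun N hN => ?_⟩
  have hL := one_le_log_nat hN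
  have hf := h (sA.pmul (yom y)) (sA_mult.pmul (yom_mult y))
    (fun n => mul_nonneg (sInd_nonneg n) (yom_nonneg hy0.le n))
    (fun p j hp => by
      refine mul_le_one₀ (sInd_le_one _) (yom_nonneg hy0.le _) ?_
      rw [yom_prime_pow y hp]
      split_ifs <;> linarith) N (by omega)
  have e : ∑ n ∈ Finset.Ioc 0 N, sInd n * y ^ n.primeFactors.card =
      ∑ n ∈ Finset.Ioc 0 N, sA.pmul (yom y) n := by
    refine Finset.sum_congr rfl fun n hn => ?_
    rw [ArithmeticFunction.pmul_apply, yom_apply y (Finset.mem_Ioc.1 hn).1.ne']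
    rfl
  rw [e]
  refine hf.trans ?_
  set L := Real.log N
  have hL0 : 0 < L := by linarith
  have hσ : 1 < 1 + 1 / L := by simpa using hL0
  have hσ2 : 1 + 1 / L ≤ 2 := by
    have := (div_le_one hL0).2 hL
    linarith
  have hs := (summable_PR 0 hσ).mul_left (y / 2)
  have hts : ∑' p : Nat.Primes, sA.pmul (yom y) p * ((p : ℕ) : ℝ) ^ (-(1 + 1 / L)) ≤
      (∑' p : Nat.Primes, y / 2 * (R 0 p * ((p : ℕ) : ℝ) ^ (-(1 + 1 / L)))) + 1 := by
    refine tsum_primes_le (fun p => mul_nonneg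
      (mul_nonneg (sInd_nonneg _) (yom_nonneg hy0.le _)) (by positivity)) hs fun p => ?_
    obtain ⟨p, hp⟩ := p
    change sInd p * yom y p * _ ≤ y / 2 * (R 0 p * _) + _
    rw [yom_prime y hp]
    change sInd p * y * (p : ℝ) ^ (-(1 + 1 / L)) ≤ y / 2 * (R 0 p * (p : ℝ) ^ (-(1 + 1 / L))) + _
    have hx0 : 0 ≤ (p : ℝ) ^ (-(1 + 1 / L)) := by positivity
    have hx1 : (p : ℝ) ^ (-(1 + 1 / L)) ≤ 1 :=
      Real.rpow_le_one_of_one_le_of_nonpos (by exact_mod_cast hp.one_lt.le) (by linarith)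
    have hR := R_zero_nonneg p
    by_cases h2 : p = 2
    · rw [if_pos h2]
      have := mul_le_one₀ (mul_le_one₀ (sInd_le_one p) hy0.le hy1) hx0 hx1
      have : 0 ≤ y / 2 * (R 0 p * (p : ℝ) ^ (-(1 + 1 / L))) := by positivity
      linarith
    · rw [if_neg h2]
      by_cases hS : p ∈ S₂
      · rw [sInd_of_mem hS, R_zero_odd_prime hp h2 hS]
        linarith
      · rw [sInd_of_notMem hS]
        simp only [zero_mul]
        positivity
  rw [tsum_mul_left] at hts
  have h3 := h1 _ hσ hσ2
  unfold PR at h3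
  rw [add_sub_cancel_left, one_div_one_div] at h3
  have h4 := mul_le_mul_of_nonneg_left h3 (by positivity : 0 ≤ y / 2)
  have h5 : ∑' p : Nat.Primes, sA.pmul (yom y) p * ((p : ℕ) : ℝ) ^ (-(1 + 1 / L)) ≤
      y / 2 * Real.log L + (y / 2 * C1 + 1) := by linarith
  calc _ ≤ C * (N / L) * Real.exp (y / 2 * Real.log L + (y / 2 * C1 + 1)) := by gcongr
    _ = _ := by rw [mul_assoc, exp_log_bound hL0, mul_assoc]

/-- The Fourier coefficients weighted by `(π / 2) ^ ω`. On average over primes `|cos|` equals `2 / π`,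
which the weight cancels; hence the exponent `-1 / 2`, that of the counting function of `S₂`. -/
lemma sum_gl {δ : ℝ} (hδ : 0 < δ) : ∃ C : ℝ, 0 < C ∧ ∀ k N : ℕ, 1 ≤ k → 3 ≤ N →
    ∑ n ∈ Finset.Ioc 0 N, gl k n * (π / 2) ^ n.primeFactors.card ≤
      C * (k : ℝ) ^ δ * (N * Real.log N ^ (-(1 / 2) + δ)) := by
  obtain ⟨C, hC, h⟩ := sum_mult_le (B := 2) zero_le_two
  obtain ⟨C1, hC1, h1⟩ := sum_abs_R hδ
  have hpi := Real.pi_gt_three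
  have hpi4 := Real.pi_le_four
  refine ⟨C * Real.exp (C1 + 2), by positivity, fun k N hk hN => ?_⟩
  have hL := one_le_log_nat hN
  have hk1 : (1 : ℝ) ≤ k := by exact_mod_cast hk
  have hlk : 0 ≤ Real.log k := Real.log_natCast_nonneg k
  have hy0 : 0 ≤ π / 2 := by positivity
  have hf := h ((gl k).pmul (yom (π / 2))) ((gl_mult k).pmul (yom_mult _))
    (fun n => mul_nonneg (gl_nonneg k n) (yom_nonneg hy0 n))
    (fun p j hp => by
      have h2 : yom (π / 2) (p ^ j) ≤ 2 := by
        rw [yom_prime_pow _ hp]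
        split_ifs <;> linarith
      have := mul_le_mul (gl_le_one k (p ^ j)) h2 (yom_nonneg hy0 _) zero_le_one
      rw [ArithmeticFunction.pmul_apply]
      linarith) N (by omega)
  have e : ∑ n ∈ Finset.Ioc 0 N, gl k n * (π / 2) ^ n.primeFactors.card =
      ∑ n ∈ Finset.Ioc 0 N, (gl k).pmul (yom (π / 2)) n := by
    refine Finset.sum_congr rfl fun n hn => ?_
    rw [ArithmeticFunction.pmul_apply, yom_apply _ (Finset.mem_Ioc.1 hn).1.ne']
  rw [e]
  refine hf.trans ?_
  set L := Real.log N
  have hL0 : 0 < L := by linarith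
  have hlL : 0 ≤ Real.log L := Real.log_nonneg hL
  have hσ : 1 < 1 + 1 / L := by simpa using hL0
  have hσ2 : 1 + 1 / L ≤ 2 := by
    have := (div_le_one hL0).2 hL
    linarith
  have hs : Summable fun p : Nat.Primes => π / 4 * (|R k p| * ((p : ℕ) : ℝ) ^ (-(1 + 1 / L))) := by
    refine ((Summable.of_nonneg_of_le (fun p => by positivity) (fun p => ?_)
      (summable_PR 0 hσ))).mul_left _
    exact mul_le_mul_of_nonneg_right (abs_R_le _ _) (by positivity)
  have hts : ∑' p : Nat.Primes, (gl k).pmul (yom (π / 2)) p * ((p : ℕ) : ℝ) ^ (-(1 + 1 / L)) ≤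
      (∑' p : Nat.Primes, π / 4 * (|R k p| * ((p : ℕ) : ℝ) ^ (-(1 + 1 / L)))) + 2 := by
    refine tsum_primes_le (fun p => mul_nonneg
      (mul_nonneg (gl_nonneg _ _) (yom_nonneg hy0 _)) (by positivity)) hs fun p => ?_
    obtain ⟨p, hp⟩ := p
    change gl k p * yom (π / 2) p * _ ≤ _ + _
    rw [yom_prime _ hp]
    change gl k p * (π / 2) * (p : ℝ) ^ (-(1 + 1 / L)) ≤
      π / 4 * (|R k p| * (p : ℝ) ^ (-(1 + 1 / L))) + _
    have hx0 : 0 ≤ (p : ℝ) ^ (-(1 + 1 / L)) := by positivity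
    have hx1 : (p : ℝ) ^ (-(1 + 1 / L)) ≤ 1 :=
      Real.rpow_le_one_of_one_le_of_nonpos (by exact_mod_cast hp.one_lt.le) (by linarith)
    by_cases h2 : p = 2
    · rw [if_pos h2]
      have h3 := mul_le_mul (gl_le_one k p) (by linarith : π / 2 ≤ 2) hy0 zero_le_one
      have h4 := mul_le_mul h3 hx1 hx0 (by norm_num)
      have : 0 ≤ π / 4 * (|R k p| * (p : ℝ) ^ (-(1 + 1 / L))) := by positivity
      linarith
    · rw [if_neg h2, gl_apply]
      by_cases hS : p ∈ S₂
      · rw [R_zero_odd_prime hp h2 hS]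
        linarith
      · have h0 : R 0 p = 0 := le_antisymm (not_lt.1 fun h => hS (R_zero_pos_iff.1 h))
          (R_zero_nonneg _)
        rw [h0]
        simp only [div_zero, zero_mul]
        positivity
  rw [tsum_mul_left] at hts
  have h3 := h1 k hk _ hσ hσ2
  rw [add_sub_cancel_left, one_div_one_div] at h3
  have h4 := mul_le_mul_of_nonneg_left h3 (by positivity : 0 ≤ π / 4)
  -- a split prime has `R 0 p = 2`, so the weight is `gl k p * (π / 2) = (π / 4) * |R k p|`; its mean is
  -- `(π / 4) * (2 / π) = 1 / 2`
  have h6 : π / 4 * (2 / π) = 1 / 2 := by field_simp; norm_num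
  have h5 : ∑' p : Nat.Primes, (gl k).pmul (yom (π / 2)) p * ((p : ℕ) : ℝ) ^ (-(1 + 1 / L)) ≤
      (1 / 2 + δ) * Real.log L + (δ * Real.log k + (C1 + 2)) := by
    have h7 : π / 4 * ((2 / π + δ) * Real.log L + δ * Real.log k + C1) =
      π / 4 * (2 / π) * Real.log L + π / 4 * (δ * Real.log L + δ * Real.log k + C1) := by ring
    have h8 : π / 4 * (δ * Real.log L + δ * Real.log k + C1) ≤
        1 * (δ * Real.log L + δ * Real.log k + C1) :=
      mul_le_mul_of_nonneg_right (by linarith) (by positivity)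
    rw [h7, h6] at h4
    linarith
  calc _ ≤ C * (N / L) * Real.exp ((1 / 2 + δ) * Real.log L + (δ * Real.log k + (C1 + 2))) := by
        gcongr
    _ = _ := by
      rw [mul_assoc, exp_log_bound hL0, Real.exp_add (δ * Real.log k),
        Real.rpow_def_of_pos (by linarith : (0 : ℝ) < k), mul_comm δ,
        show 1 / 2 + δ - 1 = -(1 / 2) + δ by ring]
      ring

/-! ### Discrepancy and Fourier coefficients -/

/-- The sawtooth function `1/2 - {u}`. -/
def psi (u : ℝ) : ℝ := 1 / 2 - Int.fract u

/-- The periodic second Bernoulli function, an antiderivative of `-2 psi`. -/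
def bern (u : ℝ) : ℝ := Int.fract u ^ 2 - Int.fract u + 1 / 6

/-- The sawtooth is bounded by a difference quotient of its antiderivative, with an error `s ^ 2`
caused by the slope of `psi`. -/
lemma psi_upper {s : ℝ} (hs : 0 < s) (hs1 : s ≤ 1) (u : ℝ) :
    2 * s * psi u ≤ bern u - bern (u + s) + s ^ 2 := by
  have h0 := Int.fract_nonneg u
  have h1 := Int.fract_lt_one u
  have hu := Int.floor_add_fract u
  unfold psi bern
  rcases lt_or_ge (Int.fract u + s) 1 with h | h
  · have : Int.fract (u + s) = Int.fract u + s := by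
      rw [Int.fract_eq_iff]
      exact ⟨by linarith, h, ⌊u⌋, by linarith⟩
    rw [this]; nlinarith
  · have : Int.fract (u + s) = Int.fract u + s - 1 := by
      rw [Int.fract_eq_iff]
      exact ⟨by linarith, by linarith, ⌊u⌋ + 1, by push_cast; linarith⟩
    rw [this]; nlinarith

lemma psi_lower {s : ℝ} (hs : 0 < s) (hs1 : s ≤ 1) (u : ℝ) :
    bern (u - s) - bern u - s ^ 2 ≤ 2 * s * psi u := by
  have h0 := Int.fract_nonneg u
  have h1 := Int.fract_lt_one u
  have hu := Int.floor_add_fract u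
  unfold psi bern
  rcases le_or_gt 0 (Int.fract u - s) with h | h
  · have : Int.fract (u - s) = Int.fract u - s := by
      rw [Int.fract_eq_iff]
      exact ⟨h, by linarith, ⌊u⌋, by linarith⟩
    rw [this]; nlinarith
  · have : Int.fract (u - s) = Int.fract u - s + 1 := by
      rw [Int.fract_eq_iff]
      exact ⟨by linarith, by linarith, ⌊u⌋ - 1, by push_cast; linarith⟩
    rw [this]; nlinarith

lemma hasSum_bern (u : ℝ) :
    HasSum (fun n : ℕ => 1 / (n : ℝ) ^ 2 * Real.cos (2 * π * n * u)) (π ^ 2 * bern u) := by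
  have h := hasSum_one_div_nat_pow_mul_cos (k := 1) one_ne_zero (x := Int.fract u)
    ⟨Int.fract_nonneg u, (Int.fract_lt_one u).le⟩
  convert h using 1
  · funext n
    have hu : u = Int.fract u + ⌊u⌋ := (Int.fract_add_floor u).symm
    have e : 2 * π * n * u = 2 * π * n * Int.fract u + ((n * ⌊u⌋ : ℤ) : ℝ) * (2 * π) := by
      conv_lhs => rw [hu]
      push_cast; ring
    rw [e, Real.cos_add_int_mul_two_pi]
  · have hb : (Polynomial.map (algebraMap ℚ ℝ) (Polynomial.bernoulli (2 * 1))).eval (Int.fract u) =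
        Int.fract u ^ 2 - Int.fract u + 1 / 6 := by
      simp [Polynomial.bernoulli, Finset.sum_range_succ, bernoulli_one, bernoulli_two,
        Polynomial.eval_monomial]
      ring
    rw [hb]
    unfold bern
    have : ((2 * 1).factorial : ℝ) = 2 := by norm_num [Nat.factorial]
    rw [this]
    ring

/-- Fourier expansion of an increment of `bern` over a finite family: frequencies up to `K` are
bounded by the exponential sums, higher ones trivially by the tail of `∑ 1 / n ^ 2`. -/
lemma sum_bern_sub {ι : Type*} (Z : Finset ι) (y : ι → ℝ) (c : ℕ → ℝ) (M : ℝ)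
    (hc0 : ∀ k, 0 ≤ c k) (hc1 : ∀ k, c k ≤ 1) (hM : 0 ≤ M)
    (hc : ∀ k : ℕ, 1 ≤ k → ∀ τ : ℝ, |∑ z ∈ Z, Real.cos (2 * π * k * y z + τ)| ≤ c k * M)
    {s : ℝ} (hs : 0 < s) (α : ℝ) (K : ℕ) (hK : 1 ≤ K) :
    |∑ z ∈ Z, (bern (y z + α) - bern (y z + α + s))| ≤
      M * (s * ∑ k ∈ Finset.Icc 1 K, c k / k + 1 / K) := by
  have hpi := Real.pi_gt_three
  set F : ℕ → ℝ := fun n => ∑ z ∈ Z, (1 / (n : ℝ) ^ 2 * Real.cos (2 * π * n * (y z + α)) -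
    1 / (n : ℝ) ^ 2 * Real.cos (2 * π * n * (y z + α + s))) with hF
  have hsum : HasSum F (∑ z ∈ Z, (π ^ 2 * bern (y z + α) - π ^ 2 * bern (y z + α + s))) :=
    hasSum_sum fun z _ => (hasSum_bern _).sub (hasSum_bern _)
  have hFn : ∀ n : ℕ, 1 ≤ n → |F n| ≤ 1 / (n : ℝ) ^ 2 * (2 * |Real.sin (π * n * s)| * (c n * M)) := by
    intro n hn
    have e : F n = 1 / (n : ℝ) ^ 2 * (2 * Real.sin (π * n * s) *
        ∑ z ∈ Z, Real.cos (2 * π * n * y z + (2 * π * n * α + π * n * s - π / 2))) := by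
      rw [hF, Finset.mul_sum, Finset.mul_sum]
      refine Finset.sum_congr rfl fun z _ => ?_
      rw [← mul_sub, ← add_sub_assoc, Real.cos_sub_pi_div_two, Real.cos_sub_cos]
      rw [show (2 * π * n * (y z + α) + 2 * π * n * (y z + α + s)) / 2 =
        2 * π * n * y z + (2 * π * n * α + π * n * s) by ring,
        show (2 * π * n * (y z + α) - 2 * π * n * (y z + α + s)) / 2 = -(π * n * s) by ring,
        Real.sin_neg]
      ring
    rw [e, abs_mul, abs_mul, abs_mul, abs_of_pos (by norm_num : (0 : ℝ) < 2),
      abs_of_nonneg (by positivity : (0 : ℝ) ≤ 1 / (n : ℝ) ^ 2)]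
    gcongr
    exact hc n hn _
  -- low frequencies: `|sin x| ≤ x` gains a factor `s`
  have hA : ∀ n ∈ Finset.Icc 1 K, |F n| ≤ 2 * π * s * M * (c n / n) := by
    intro n hn
    have hn1 := (Finset.mem_Icc.1 hn).1
    have hn0 : (0 : ℝ) < n := by exact_mod_cast hn1
    have h1 : |Real.sin (π * n * s)| ≤ π * n * s := by
      have := Real.abs_sin_le_abs (x := π * n * s)
      rwa [abs_of_nonneg (by positivity : 0 ≤ π * n * s)] at this
    calc |F n| ≤ 1 / (n : ℝ) ^ 2 * (2 * (π * n * s) * (c n * M)) := by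
          refine (hFn n hn1).trans ?_
          have := hc0 n
          gcongr
      _ = _ := by field_simp
  -- high frequencies: the trivial bound
  have hB : ∀ n : ℕ, K < n → |F n| ≤ 2 * M * ((n : ℝ) ^ 2)⁻¹ := by
    intro n hn
    calc |F n| ≤ 1 / (n : ℝ) ^ 2 * (2 * 1 * (1 * M)) := by
          refine (hFn n (by omega)).trans ?_
          have := hc0 n
          gcongr
          · exact Real.abs_sin_le_one _
          · exact hc1 n
      _ = _ := by ring
  have hF0 : F 0 = 0 := by simp [hF]
  have hK0 : (0 : ℝ) < K := by exact_mod_cast hK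
  have hpart : ∀ N : ℕ, K ≤ N → |∑ n ∈ Finset.range (N + 1), F n| ≤
      2 * π * s * M * (∑ k ∈ Finset.Icc 1 K, c k / k) + 2 * M / K := by
    intro N hN
    have e : ∑ n ∈ Finset.range (N + 1), F n =
        ∑ n ∈ Finset.Icc 1 K, F n + ∑ n ∈ Finset.Ioc K N, F n := by
      have e1 : Finset.Icc 1 K = Finset.Ioc 0 K := by ext; simp; omega
      have e2 : Finset.range (N + 1) = insert 0 (Finset.Ioc 0 N) := by
        ext n; simp only [Finset.mem_range, Finset.mem_insert, Finset.mem_Ioc]; omega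
      rw [e1, Finset.sum_Ioc_consecutive _ (Nat.zero_le _) hN, e2, Finset.sum_insert (by simp), hF0,
        zero_add]
    rw [e]
    refine (abs_add_le _ _).trans (add_le_add ?_ ?_)
    · rw [Finset.mul_sum]
      exact (Finset.abs_sum_le_sum_abs _ _).trans (Finset.sum_le_sum hA)
    · refine (Finset.abs_sum_le_sum_abs _ _).trans
        ((Finset.sum_le_sum fun n hn => hB n (Finset.mem_Ioc.1 hn).1).trans ?_)
      rw [← Finset.mul_sum, div_eq_mul_inv]
      refine mul_le_mul_of_nonneg_left ?_ (by positivity)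
      have := sum_Ioc_inv_sq_le_sub (α := ℝ) (by omega : K ≠ 0) hN
      have h0 : (0 : ℝ) ≤ (N : ℝ)⁻¹ := by positivity
      linarith
  have hlim := (hsum.tendsto_sum_nat.comp (tendsto_add_atTop_nat 1)).abs
  have hle := le_of_tendsto hlim (Filter.eventually_atTop.2 ⟨K, fun N hN => hpart N hN⟩)
  rw [← Finset.sum_congr rfl (fun z _ => mul_sub (π ^ 2) (bern (y z + α)) (bern (y z + α + s))),
    ← Finset.mul_sum, abs_mul, abs_of_pos (by positivity : 0 < π ^ 2)] at hle
  set D := |∑ z ∈ Z, (bern (y z + α) - bern (y z + α + s))|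
  set E := ∑ k ∈ Finset.Icc 1 K, c k / k
  have hE : 0 ≤ E := Finset.sum_nonneg fun k _ => div_nonneg (hc0 k) (Nat.cast_nonneg k)
  have h1 : 2 * π * s * M * E ≤ π ^ 2 * (M * (s * E)) := by
    have h0 : 0 ≤ M * (s * E) := by positivity
    calc _ = 2 * π * (M * (s * E)) := by ring
      _ ≤ _ := mul_le_mul_of_nonneg_right (by nlinarith) h0
  have h2 : 2 * M / K ≤ π ^ 2 * (M * (1 / K)) := by
    have h0 : 0 ≤ M * (1 / K) := by positivity
    calc _ = 2 * (M * (1 / K)) := by ring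
      _ ≤ _ := mul_le_mul_of_nonneg_right (by nlinarith) h0
  refine le_of_mul_le_mul_left (?_ : π ^ 2 * D ≤ π ^ 2 * _) (by positivity)
  linarith

lemma sum_psi {ι : Type*} (Z : Finset ι) (y : ι → ℝ) (c : ℕ → ℝ)
    (hc0 : ∀ k, 0 ≤ c k) (hc1 : ∀ k, c k ≤ 1)
    (hc : ∀ k : ℕ, 1 ≤ k → ∀ τ : ℝ, |∑ z ∈ Z, Real.cos (2 * π * k * y z + τ)| ≤ c k * Z.card)
    {s : ℝ} (hs : 0 < s) (hs1 : s ≤ 1) (α : ℝ) (K : ℕ) (hK : 1 ≤ K) :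
    |∑ z ∈ Z, psi (y z + α)| ≤
      Z.card * (s + ∑ k ∈ Finset.Icc 1 K, c k / k + 1 / (s * K)) / 2 := by
  have h1 := (abs_le.1 (sum_bern_sub Z y c Z.card hc0 hc1 (Nat.cast_nonneg _) hc hs α K hK)).2
  have h2 := (abs_le.1 (sum_bern_sub Z y c Z.card hc0 hc1 (Nat.cast_nonneg _) hc hs (α - s) K hK)).1
  have u1 : ∑ z ∈ Z, 2 * s * psi (y z + α) ≤
      ∑ z ∈ Z, (bern (y z + α) - bern (y z + α + s)) + Z.card * s ^ 2 := by
    rw [← nsmul_eq_mul, ← Finset.sum_const, ← Finset.sum_add_distrib]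
    exact Finset.sum_le_sum fun z _ => psi_upper hs hs1 _
  have u2 : ∑ z ∈ Z, (bern (y z + (α - s)) - bern (y z + (α - s) + s)) - Z.card * s ^ 2 ≤
      ∑ z ∈ Z, 2 * s * psi (y z + α) := by
    rw [← nsmul_eq_mul, ← Finset.sum_const, ← Finset.sum_sub_distrib]
    refine Finset.sum_le_sum fun z _ => ?_
    have := psi_lower hs hs1 (y z + α)
    rwa [show y z + (α - s) + s = y z + α by ring, ← add_sub_assoc]
  rw [← Finset.mul_sum] at u1 u2
  set E := ∑ k ∈ Finset.Icc 1 K, c k / k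
  set P := ∑ z ∈ Z, psi (y z + α)
  have hK0 : (0 : ℝ) < K := by exact_mod_cast hK
  have e : (2 * s) * (Z.card * (s + E + 1 / (s * K)) / 2) =
      Z.card * (s * E + 1 / K) + Z.card * s ^ 2 := by field_simp; ring
  have h2s : 0 < 2 * s := by positivity
  rw [abs_le]
  constructor
  · refine le_of_mul_le_mul_left (?_ : (2 * s) * _ ≤ (2 * s) * P) h2s
    rw [mul_neg, e]; linarith
  · refine le_of_mul_le_mul_left (?_ : (2 * s) * P ≤ (2 * s) * _) h2s
    rw [e]; linarith

/-- The number of turns `x` whose direction lies in an arc of length `β - α < 1` turns, expressed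
through the sawtooth function. -/
lemma indicator_psi {α β : ℝ} (hαβ : α ≤ β) (h1 : β - α < 1) (x : ℝ) :
    (Set.indicator {x : ℝ | ∃ n : ℤ, x + n ∈ Set.Icc α β} (fun _ => (1 : ℝ)) x) =
      (β - α) + psi (x - α) + psi (β - x) := by
  have f0 := Int.fract_nonneg (x - α)
  have f1 := Int.fract_lt_one (x - α)
  have g0 := Int.fract_nonneg (β - x)
  have g1 := Int.fract_lt_one (β - x)
  have ef := Int.floor_add_fract (x - α)
  unfold psi
  by_cases h : Int.fract (x - α) ≤ β - α
  · have hg : Int.fract (β - x) = β - α - Int.fract (x - α) := by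
      rw [Int.fract_eq_iff]
      exact ⟨by linarith, by linarith, -⌊x - α⌋, by push_cast; linarith⟩
    rw [Set.indicator_of_mem, hg]
    · ring
    · exact ⟨-⌊x - α⌋, by push_cast; linarith, by push_cast; linarith⟩
  · have hg : Int.fract (β - x) = β - α - Int.fract (x - α) + 1 := by
      rw [Int.fract_eq_iff]
      exact ⟨by linarith, by linarith, -⌊x - α⌋ - 1, by push_cast; linarith⟩
    rw [Set.indicator_of_notMem, hg]
    · ring
    · rintro ⟨n, hn1, hn2⟩
      refine h ?_
      have : Int.fract (x - α) = x + n - α := by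
        rw [Int.fract_eq_iff]
        exact ⟨by linarith, by linarith, -n, by push_cast; ring⟩
      linarith

/-- An Erdős–Turán inequality with smoothing parameter `s`: the discrepancy of the points `x z` modulo `1`
is controlled by bounds `c k` for their normalised exponential sums. -/
lemma discrepancy {ι : Type*} (Z : Finset ι) (x : ι → ℝ) (c : ℕ → ℝ)
    (hc0 : ∀ k, 0 ≤ c k) (hc1 : ∀ k, c k ≤ 1)
    (hc : ∀ k : ℕ, 1 ≤ k → ∀ τ : ℝ, |∑ z ∈ Z, Real.cos (2 * π * k * x z + τ)| ≤ c k * Z.card)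
    {s : ℝ} (hs : 0 < s) (hs1 : s ≤ 1) (K : ℕ) (hK : 1 ≤ K) {α β : ℝ} (hαβ : α ≤ β)
    (h1 : β - α < 1) :
    |∑ z ∈ Z, Set.indicator {x : ℝ | ∃ n : ℤ, x + n ∈ Set.Icc α β} (fun _ => (1 : ℝ)) (x z) -
        Z.card * (β - α)| ≤
      Z.card * (s + ∑ k ∈ Finset.Icc 1 K, c k / k + 1 / (s * K)) := by
  have a1 := sum_psi Z x c hc0 hc1 hc hs hs1 (-α) K hK
  have a2 := sum_psi Z (fun z => -x z) c hc0 hc1 (fun k hk τ => by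
    rw [← Finset.sum_congr rfl fun z _ => Real.cos_neg (2 * π * k * -x z + τ)]
    convert hc k hk (-τ) using 4
    ring) hs hs1 β K hK
  have e : ∑ z ∈ Z, Set.indicator {x : ℝ | ∃ n : ℤ, x + n ∈ Set.Icc α β} (fun _ => (1 : ℝ)) (x z) -
        Z.card * (β - α) = ∑ z ∈ Z, psi (x z + -α) + ∑ z ∈ Z, psi (-x z + β) := by
    rw [← nsmul_eq_mul, ← Finset.sum_const, ← Finset.sum_sub_distrib, ← Finset.sum_add_distrib]
    refine Finset.sum_congr rfl fun z _ => ?_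
    rw [indicator_psi hαβ h1, neg_add_eq_sub, ← sub_eq_add_neg]
    ring
  rw [e]
  refine (abs_add_le _ _).trans ?_
  linarith

/-! ### Discrepancy of Gaussian integers of a given norm -/

/-- The direction of a Gaussian integer, in turns. -/
def turn (z : GaussianInt) : ℝ := Complex.arg (z : ℂ) / (2 * π)

/-- Invariance under multiplication by `i` kills the Fourier coefficients of order not divisible
by `4`. -/
lemma sum_ang_zero {k : ℕ} (hk : ¬ 4 ∣ k) (m : ℕ) : ∑ z ∈ gs m, ang k z = 0 := by
  have hi : (⟨0, 1⟩ : GaussianInt) ∈ gs 1 := by rw [gs_one]; simp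
  have hi' : (⟨0, -1⟩ : GaussianInt) ∈ gs 1 := by rw [gs_one]; simp
  have hmul : (⟨0, 1⟩ : GaussianInt) * ⟨0, -1⟩ = 1 := by decide
  have h1 : ∑ z ∈ gs m, ang k z = ∑ z ∈ gs m, ang k (⟨0, 1⟩ * z) := by
    refine Finset.sum_bij' (fun z _ => (⟨0, -1⟩ : GaussianInt) * z) (fun z _ => ⟨0, 1⟩ * z)
      (fun z hz => by simpa using mul_mem_gs hi' hz) (fun z hz => by simpa using mul_mem_gs hi hz)
      (fun z _ => ?_) (fun z _ => ?_) (fun z _ => ?_)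
    · rw [← mul_assoc, hmul, one_mul]
    · rw [← mul_assoc, mul_comm (⟨0, -1⟩ : GaussianInt), hmul, one_mul]
    · rw [← mul_assoc, hmul, one_mul]
  have hI : ang k ⟨0, 1⟩ = Complex.I ^ k := by
    have : ((⟨0, 1⟩ : GaussianInt) : ℂ) = Complex.I := by
      rw [GaussianInt.toComplex_def]; simp
    unfold ang
    rw [this]; simp
  have h2 : Complex.I ^ k ≠ 1 := by
    rw [← Nat.mod_add_div k 4, pow_add, pow_mul, Complex.I_pow_four, one_pow, mul_one]
    have h4 : k % 4 < 4 := Nat.mod_lt _ (by norm_num)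
    have h0 : k % 4 ≠ 0 := fun h => hk (Nat.dvd_of_mod_eq_zero h)
    interval_cases k % 4
    · exact absurd rfl h0
    · intro h; have := congrArg Complex.im h; simp at this
    · intro h; have := congrArg Complex.re h; norm_num at this
    · intro h; have := congrArg Complex.im h; simp [pow_succ] at this
  simp_rw [ang_mul] at h1
  rw [← Finset.mul_sum, hI] at h1
  have h3 : (1 - Complex.I ^ k) * ∑ z ∈ gs m, ang k z = 0 := by
    rw [sub_mul, one_mul, ← h1, sub_self]
  exact (mul_eq_zero.1 h3).resolve_left (sub_ne_zero.2 h2.symm)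

lemma abs_sum_cos_turn (m k : ℕ) (τ : ℝ) :
    |∑ z ∈ gs m, Real.cos (2 * π * k * turn z + τ)| ≤
      (if 4 ∣ k then gl (k / 4) m else 0) * (gs m).card := by
  have e : ∑ z ∈ gs m, Real.cos (2 * π * k * turn z + τ) =
      (Complex.exp (τ * Complex.I) * ∑ z ∈ gs m, ang k z).re := by
    rw [Finset.mul_sum, Complex.re_sum]
    refine Finset.sum_congr rfl fun z hz => ?_
    rw [ang_eq_exp k (gs_ne_zero hz), ← Complex.exp_add, ← add_mul, ← Complex.ofReal_add,
      Complex.exp_ofReal_mul_I_re]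
    congr 1
    unfold turn
    field_simp
    ring
  rw [e]
  refine (Complex.abs_re_le_norm _).trans ?_
  rw [norm_mul, Complex.norm_exp_ofReal_mul_I, one_mul]
  split_ifs with h
  · obtain ⟨l, rfl⟩ := h
    rw [sum_ang_eq, Complex.norm_real, Nat.mul_div_cancel_left _ (by norm_num), gl_apply,
      Real.norm_eq_abs, abs_mul, abs_of_pos (by norm_num : (0 : ℝ) < 4),
      show ((gs m).card : ℝ) = 4 * R 0 m by rw [R_zero_eq]; ring]
    rcases (R_zero_nonneg m).eq_or_lt with h0 | h0
    · have := abs_R_le l m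
      rw [← h0] at this ⊢
      linarith
    · rw [div_mul_eq_mul_div, mul_left_comm, ← mul_assoc, mul_div_cancel_right₀ _ h0.ne']
  · rw [sum_ang_zero h]; simp

/-- The inequality `discrepancy` for directions of Gaussian integers; only frequencies `k = 4 l`
contribute, and `∑ 1 / k` over them is dominated by `∑ 1 / l`. -/
lemma disc_gs (m : ℕ) {s : ℝ} (hs : 0 < s) (hs1 : s ≤ 1) (H : ℕ) (hH : 1 ≤ H) {α β : ℝ}
    (hαβ : α ≤ β) (h1 : β - α < 1) :
    |∑ z ∈ gs m, Set.indicator {x : ℝ | ∃ n : ℤ, x + n ∈ Set.Icc α β} (fun _ => (1 : ℝ)) (turn z) -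
        (gs m).card * (β - α)| ≤
      (gs m).card * (s + ∑ l ∈ Finset.Icc 1 H, gl l m / l + 1 / (s * H)) := by
  set c : ℕ → ℝ := fun k => if 4 ∣ k then gl (k / 4) m else 0 with hc
  have hc0 : ∀ k, 0 ≤ c k := fun k => by
    simp only [hc]; split_ifs
    · exact gl_nonneg _ _
    · exact le_rfl
  have hc1 : ∀ k, c k ≤ 1 := fun k => by
    simp only [hc]; split_ifs
    · exact gl_le_one _ _
    · exact zero_le_one
  have h := discrepancy (gs m) turn c hc0 hc1 (fun k _ τ => abs_sum_cos_turn m k τ) hs hs1 (4 * H)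
    (by omega) hαβ h1
  refine h.trans (mul_le_mul_of_nonneg_left ?_ (Nat.cast_nonneg _))
  have e : ∑ k ∈ Finset.Icc 1 (4 * H), c k / k = ∑ l ∈ Finset.Icc 1 H, gl l m / (4 * l) := by
    have hinj : Set.InjOn (fun l : ℕ => 4 * l) (Finset.Icc 1 H) := fun a _ b _ h => by
      simp only at h; omega
    have : ∑ l ∈ Finset.Icc 1 H, gl l m / (4 * l) =
        ∑ k ∈ (Finset.Icc 1 H).image (fun l => 4 * l), c k / k := by
      rw [Finset.sum_image hinj]
      refine Finset.sum_congr rfl fun l _ => ?_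
      simp only [hc]
      rw [if_pos (Dvd.intro _ rfl), Nat.mul_div_cancel_left _ (by norm_num)]
      push_cast; rfl
    rw [this]
    symm
    refine Finset.sum_subset ?_ ?_
    · intro k hk
      obtain ⟨l, hl, rfl⟩ := Finset.mem_image.1 hk
      rw [Finset.mem_Icc] at hl ⊢
      omega
    · intro k hk hk'
      have : ¬ 4 ∣ k := by
        rintro ⟨l, rfl⟩
        refine hk' (Finset.mem_image.2 ⟨l, ?_, rfl⟩)
        rw [Finset.mem_Icc] at hk ⊢
        omega
      simp only [hc]
      rw [if_neg this, zero_div]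
  have hH0 : (0 : ℝ) < H := by exact_mod_cast hH
  rw [e]
  refine add_le_add (add_le_add le_rfl (Finset.sum_le_sum fun l hl => ?_)) ?_
  · have hl0 : (0 : ℝ) < l := by exact_mod_cast (Finset.mem_Icc.1 hl).1
    exact div_le_div_of_nonneg_left (gl_nonneg _ _) hl0 (by linarith)
  · refine one_div_le_one_div_of_le (by positivity) (mul_le_mul_of_nonneg_left ?_ hs.le)
    push_cast; linarith

/-! ### The uniform measure of an arc -/

/-- The point of the unit circle of a given angle. -/
def pt (θ : ℝ) : En 2 := (EuclideanSpace.equiv (Fin 2) ℝ).symm ![Real.cos θ, Real.sin θ]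

lemma pt_zero (θ : ℝ) : pt θ 0 = Real.cos θ := rfl

lemma pt_one (θ : ℝ) : pt θ 1 = Real.sin θ := rfl

lemma arc_eq (a b : ℝ) : arc a b = pt '' Set.Icc a b := rfl

lemma en_ext {x y : En 2} (h0 : x 0 = y 0) (h1 : x 1 = y 1) : x = y := by
  ext i
  fin_cases i
  · exact h0
  · exact h1

lemma mem_sphere_iff {x : En 2} : x ∈ Metric.sphere (0 : En 2) 1 ↔ x 0 ^ 2 + x 1 ^ 2 = 1 := by
  rw [mem_sphere_zero_iff_norm, EuclideanSpace.norm_eq, Real.sqrt_eq_one, Fin.sum_univ_two]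
  simp

lemma pt_lipschitz : LipschitzWith 2 pt := by
  refine LipschitzWith.of_dist_le_mul fun a b => ?_
  rw [EuclideanSpace.dist_eq, Fin.sum_univ_two, pt_zero, pt_zero, pt_one, pt_one]
  have h1 : dist (Real.cos a) (Real.cos b) ≤ dist a b := by
    simpa using Real.lipschitzWith_cos.dist_le_mul a b
  have h2 : dist (Real.sin a) (Real.sin b) ≤ dist a b := by
    simpa using Real.lipschitzWith_sin.dist_le_mul a b
  have h0 := dist_nonneg (x := a) (y := b)
  refine Real.sqrt_le_iff.2 ⟨by positivity, ?_⟩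
  have h3 := pow_le_pow_left₀ dist_nonneg h1 2
  have h4 := pow_le_pow_left₀ dist_nonneg h2 2
  push_cast
  nlinarith

/-- The circle, parametrised by angles modulo `2π`. -/
def cpt (θ : AddCircle (2 * π)) : En 2 := (EuclideanSpace.equiv (Fin 2) ℝ).symm
  ![Real.Angle.cos θ, Real.Angle.sin θ]

lemma cpt_coe (θ : ℝ) : cpt (θ : AddCircle (2 * π)) = pt θ := rfl

lemma cpt_continuous : Continuous cpt := by
  refine (EuclideanSpace.equiv (Fin 2) ℝ).symm.continuous.comp (continuous_pi fun i => ?_)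
  fin_cases i
  · exact Real.Angle.continuous_cos
  · exact Real.Angle.continuous_sin

lemma cpt_injective : Function.Injective cpt := by
  intro x y h
  obtain ⟨a, rfl⟩ := QuotientAddGroup.mk_surjective x
  obtain ⟨b, rfl⟩ := QuotientAddGroup.mk_surjective y
  rw [cpt_coe, cpt_coe] at h
  have h0 := congrArg (fun v : En 2 => v 0) h
  have h1 := congrArg (fun v : En 2 => v 1) h
  exact Real.Angle.cos_sin_inj h0 h1

lemma range_cpt : Set.range cpt = Metric.sphere (0 : En 2) 1 := by
  ext x
  rw [mem_sphere_iff]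
  constructor
  · rintro ⟨t, rfl⟩
    obtain ⟨a, rfl⟩ := QuotientAddGroup.mk_surjective t
    rw [cpt_coe, pt_zero, pt_one]
    exact Real.cos_sq_add_sin_sq a
  · intro h
    set w : ℂ := ⟨x 0, x 1⟩ with hw
    have hn : ‖w‖ = 1 := by
      rw [Complex.norm_eq_sqrt_sq_add_sq, Real.sqrt_eq_one]; exact h
    have hw0 : w ≠ 0 := by
      rintro h0; rw [h0] at hn; simp at hn
    refine ⟨(Complex.arg w : ℝ), ?_⟩
    rw [cpt_coe]
    refine en_ext ?_ ?_
    · rw [pt_zero, Complex.cos_arg hw0, hn, div_one]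
    · rw [pt_one, Complex.sin_arg, hn, div_one]

/-- Rotation of the plane. -/
def rot (t : ℝ) (v : En 2) : En 2 := (EuclideanSpace.equiv (Fin 2) ℝ).symm
  ![Real.cos t * v 0 - Real.sin t * v 1, Real.sin t * v 0 + Real.cos t * v 1]

lemma rot_isometry (t : ℝ) : Isometry (rot t) := by
  refine Isometry.of_dist_eq fun v w => ?_
  rw [EuclideanSpace.dist_eq, EuclideanSpace.dist_eq, Fin.sum_univ_two, Fin.sum_univ_two]
  congr 1
  simp only [Real.dist_eq, sq_abs]
  change (Real.cos t * v 0 - Real.sin t * v 1 - (Real.cos t * w 0 - Real.sin t * w 1)) ^ 2 +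
    (Real.sin t * v 0 + Real.cos t * v 1 - (Real.sin t * w 0 + Real.cos t * w 1)) ^ 2 = _
  linear_combination ((v 0 - w 0) ^ 2 + (v 1 - w 1) ^ 2) * Real.cos_sq_add_sin_sq t

lemma rot_cpt (t : ℝ) (x : AddCircle (2 * π)) : rot t (cpt x) = cpt (t + x) := by
  obtain ⟨a, rfl⟩ := QuotientAddGroup.mk_surjective x
  rw [← QuotientAddGroup.mk_add, cpt_coe, cpt_coe]
  refine en_ext ?_ ?_
  · change Real.cos t * Real.cos a - Real.sin t * Real.sin a = Real.cos (t + a)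
    rw [Real.cos_add]
  · change Real.sin t * Real.cos a + Real.cos t * Real.sin a = Real.sin (t + a)
    rw [Real.sin_add]

instance : Fact (0 < 2 * π) := ⟨Real.two_pi_pos⟩

/-- One-dimensional Hausdorff measure of the circle, transported to angles modulo `2π`. -/
def hau : Measure (AddCircle (2 * π)) := Measure.comap cpt (μH[(1 : ℝ)])

lemma cpt_emb : MeasurableEmbedding cpt :=
  (Continuous.isClosedEmbedding cpt_continuous
    cpt_injective).measurableEmbedding

lemma hau_apply (E : Set (AddCircle (2 * π))) : hau E = μH[(1 : ℝ)] (cpt '' E) :=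
  cpt_emb.comap_apply _ _

lemma hau_univ : hau Set.univ = μH[(1 : ℝ)] (Metric.sphere (0 : En 2) 1) := by
  rw [hau_apply, Set.image_univ, range_cpt]

lemma hau_univ_lt_top : hau Set.univ < ⊤ := by
  have h1 : cpt '' (Set.univ : Set (AddCircle (2 * π))) ⊆ pt '' Set.Icc 0 (2 * π) := by
    rintro _ ⟨x, -, rfl⟩
    obtain ⟨y, hy, hyx⟩ : x ∈ ((↑) : ℝ → AddCircle (2 * π)) '' Set.Ico 0 (0 + 2 * π) := by
      rw [AddCircle.coe_image_Ico_eq]; trivial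
    rw [zero_add] at hy
    exact ⟨y, ⟨hy.1, hy.2.le⟩, by rw [← hyx]; exact (cpt_coe y).symm⟩
  rw [hau_apply]
  refine (measure_mono h1).trans_lt ?_
  refine (pt_lipschitz.hausdorffMeasure_image_le zero_le_one _).trans_lt ?_
  rw [hausdorffMeasure_real, Real.volume_Icc]
  exact ENNReal.mul_lt_top (by simp) ENNReal.ofReal_lt_top

/-- The projection of the circle to the first axis has positive length. -/
lemma hau_univ_pos : 0 < hau Set.univ := by
  rw [hau_univ]
  have hp : LipschitzWith 1 (fun v : En 2 => v 0) := by
    refine LipschitzWith.of_dist_le_mul fun v w => ?_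
    rw [EuclideanSpace.dist_eq, Fin.sum_univ_two, NNReal.coe_one, one_mul]
    refine Real.le_sqrt_of_sq_le ?_
    have := sq_nonneg (dist (v 1) (w 1))
    linarith
  have h := hp.hausdorffMeasure_image_le zero_le_one (Metric.sphere (0 : En 2) 1)
  have h2 : Set.Icc (-1 : ℝ) 1 ⊆ (fun v : En 2 => v 0) '' Metric.sphere (0 : En 2) 1 := by
    intro x hx
    refine ⟨pt (Real.arccos x), ?_, Real.cos_arccos hx.1 hx.2⟩
    rw [mem_sphere_iff, pt_zero, pt_one]
    exact Real.cos_sq_add_sin_sq _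
  have h3 := (measure_mono h2).trans h
  rw [hausdorffMeasure_real, Real.volume_Icc] at h3
  simp only [ENNReal.coe_one, ENNReal.one_rpow, one_mul] at h3
  refine lt_of_lt_of_le ?_ h3
  norm_num

instance : IsFiniteMeasure hau := ⟨hau_univ_lt_top⟩

instance : hau.IsAddLeftInvariant := by
  refine ⟨fun g => ?_⟩
  obtain ⟨t, rfl⟩ := QuotientAddGroup.mk_surjective g
  ext E hE
  rw [Measure.map_apply (measurable_const_add _) hE, hau_apply, hau_apply,
    ← (rot_isometry t).hausdorffMeasure_image (Or.inl zero_le_one)]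
  congr 1
  ext v
  constructor
  · rintro ⟨_, ⟨x, hx, rfl⟩, rfl⟩
    exact ⟨_, hx, (rot_cpt t x).symm⟩
  · rintro ⟨x, hx, rfl⟩
    refine ⟨_, ⟨-(t : AddCircle (2 * π)) + x, ?_, rfl⟩, ?_⟩
    · change (t : AddCircle (2 * π)) + (-(t : AddCircle (2 * π)) + x) ∈ E
      rwa [add_neg_cancel_left]
    · rw [rot_cpt]
      congr 1
      exact add_neg_cancel_left _ _

lemma coe_image_Icc (a b : ℝ) :
    ((↑) : ℝ → AddCircle (2 * π)) '' Set.Icc a b =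
      Metric.closedBall (((a + b) / 2 : ℝ) : AddCircle (2 * π)) ((b - a) / 2) := by
  have hI : Set.Icc a b = Metric.closedBall ((a + b) / 2) ((b - a) / 2) := by
    rw [Real.closedBall_eq_Icc]; congr 1 <;> ring
  ext x
  obtain ⟨y, rfl⟩ := QuotientAddGroup.mk_surjective x
  have h := AddCircle.coe_real_preimage_closedBall_eq_iUnion (2 * π) ((a + b) / 2) ((b - a) / 2)
  have h' : (y : AddCircle (2 * π)) ∈ Metric.closedBall (((a + b) / 2 : ℝ) : AddCircle (2 * π))
      ((b - a) / 2) ↔ ∃ z : ℤ, y ∈ Metric.closedBall ((a + b) / 2 + z • (2 * π)) ((b - a) / 2) := by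
    rw [← Set.mem_iUnion, ← h]; rfl
  refine Iff.trans ?_ h'.symm
  constructor
  · rintro ⟨u, hu, huy⟩
    obtain ⟨n, hn⟩ := (Real.Angle.angle_eq_iff_two_pi_dvd_sub).1 huy.symm
    refine ⟨n, ?_⟩
    rw [hI, Metric.mem_closedBall, Real.dist_eq] at hu
    rw [Metric.mem_closedBall, Real.dist_eq]
    convert hu using 2
    simp only [zsmul_eq_mul]
    linarith
  · rintro ⟨n, hn⟩
    refine ⟨y - n • (2 * π), ?_, ?_⟩
    · rw [hI, Metric.mem_closedBall, Real.dist_eq]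
      rw [Metric.mem_closedBall, Real.dist_eq] at hn
      convert hn using 2
      ring
    · refine (Real.Angle.angle_eq_iff_two_pi_dvd_sub).2 ⟨-n, ?_⟩
      simp only [zsmul_eq_mul]; push_cast; ring

/-- The uniform measure of an arc, from uniqueness of Haar measure on `AddCircle (2 * π)`:
one-dimensional Hausdorff measure on the circle is rotation invariant, finite and nonzero. -/
lemma unif_arc {a b : ℝ} (hab : a ≤ b) :
    (unifSphere 2 (arc a b)).toReal = min 1 ((b - a) / (2 * π)) := by
  have hd : ((2 : ℕ) : ℝ) - 1 = 1 := by norm_num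
  have hsub : arc a b ⊆ Metric.sphere (0 : En 2) 1 := by
    rintro _ ⟨θ, -, rfl⟩
    rw [mem_sphere_iff]
    exact Real.cos_sq_add_sin_sq θ
  have harc : μH[(1 : ℝ)] (arc a b) = hau (((↑) : ℝ → AddCircle (2 * π)) '' Set.Icc a b) := by
    rw [hau_apply, arc_eq, Set.image_image]
    congr 1
  have hs := Measure.isAddLeftInvariant_eq_smul hau (volume : Measure (AddCircle (2 * π)))
  set c := Measure.addHaarScalarFactor hau (volume : Measure (AddCircle (2 * π)))
  have hU : hau Set.univ = c * ENNReal.ofReal (2 * π) := by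
    rw [hs, Measure.smul_apply, AddCircle.measure_univ]; rfl
  have hE : hau (((↑) : ℝ → AddCircle (2 * π)) '' Set.Icc a b) =
      c * ENNReal.ofReal (min (2 * π) (b - a)) := by
    rw [hs, coe_image_Icc, Measure.smul_apply, AddCircle.volume_closedBall]
    rw [show 2 * ((b - a) / 2) = b - a by ring]; rfl
  unfold unifSphere
  rw [hd, Measure.smul_apply, Measure.restrict_eq_self _ hsub, harc, ← hau_univ, smul_eq_mul,
    ENNReal.toReal_mul, ENNReal.toReal_inv, hU, hE, ENNReal.toReal_mul, ENNReal.toReal_mul,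
    ENNReal.toReal_ofReal Real.two_pi_pos.le,
    ENNReal.toReal_ofReal (le_min Real.two_pi_pos.le (by linarith))]
  have hc : (c : ENNReal).toReal ≠ 0 := by
    intro h
    have h0 := hau_univ_pos
    have : (c : ENNReal) = 0 := by simpa using h
    rw [hU, this, zero_mul] at h0
    exact lt_irrefl _ h0
  have hpi := Real.two_pi_pos
  rw [mul_inv, mul_mul_mul_comm, inv_mul_cancel₀ hc, one_mul, inv_mul_eq_div,
    ← min_div_div_right hpi.le, div_self hpi.ne']

/-! ### The counting measure of an arc -/

/-- The rescaled lattice point of a Gaussian integer of norm `m`. -/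
def lpt (m : ℕ) (z : GaussianInt) : En 2 := (EuclideanSpace.equiv (Fin 2) ℝ).symm
  ![z.re / Real.sqrt m, z.im / Real.sqrt m]

lemma lpt_zero (m : ℕ) (z : GaussianInt) : lpt m z 0 = z.re / Real.sqrt m := rfl

lemma lpt_one (m : ℕ) (z : GaussianInt) : lpt m z 1 = z.im / Real.sqrt m := rfl

lemma lpt_injective {m : ℕ} (hm : m ≠ 0) : Function.Injective (lpt m) := by
  intro z w h
  have hs : Real.sqrt m ≠ 0 := (Real.sqrt_pos.2 (by positivity)).ne'
  have h0 := congrArg (fun v : En 2 => v 0) h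
  have h1 := congrArg (fun v : En 2 => v 1) h
  simp only [lpt_zero, lpt_one, div_left_inj' hs, Int.cast_inj] at h0 h1
  exact Zsqrtd.ext h0 h1

lemma Lam_eq {m : ℕ} (hm : m ≠ 0) : Lam 2 m = lpt m '' (gs m : Set GaussianInt) := by
  have hm0 : (0 : ℝ) < m := by positivity
  have key : ∀ z : GaussianInt, lpt m z 0 ^ 2 + lpt m z 1 ^ 2 = 1 ↔ z.norm = m := by
    intro z
    rw [lpt_zero, lpt_one, div_pow, div_pow, Real.sq_sqrt hm0.le, ← add_div,
      div_eq_one_iff_eq hm0.ne', gnorm_eq]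
    rw [← Int.cast_inj (α := ℝ)]
    push_cast
    rw [sq, sq]
  ext x
  constructor
  · rintro ⟨h1, h2⟩
    obtain ⟨a, ha⟩ := h2 0
    obtain ⟨b, hb⟩ := h2 1
    have hx : lpt m ⟨a, b⟩ = x := en_ext ha.symm hb.symm
    refine ⟨⟨a, b⟩, Finset.mem_coe.2 (mem_gs.2 ⟨(key _).1 ?_, hm⟩), hx⟩
    rw [hx]
    exact mem_sphere_iff.1 (mem_sphere_zero_iff_norm.2 h1)
  · rintro ⟨z, hz, rfl⟩
    refine ⟨mem_sphere_zero_iff_norm.1 (mem_sphere_iff.2 ((key z).2 (mem_gs.1 hz).1)), fun i => ?_⟩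
    fin_cases i
    · exact ⟨z.re, rfl⟩
    · exact ⟨z.im, rfl⟩

lemma lpt_mem_arc {m : ℕ} {z : GaussianInt} (hz : z ∈ gs m) (a b : ℝ) :
    lpt m z ∈ arc a b ↔ ∃ n : ℤ, turn z + n ∈ Set.Icc (a / (2 * π)) (b / (2 * π)) := by
  have hpi := Real.two_pi_pos
  obtain ⟨hn, hm⟩ := mem_gs.1 hz
  have hz0 : (z : ℂ) ≠ 0 := by simpa using gs_ne_zero hz
  have hnorm : ‖(z : ℂ)‖ = Real.sqrt m := by
    rw [Complex.norm_eq_sqrt_sq_add_sq]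
    congr 1
    have h1 : ((z.norm : ℤ) : ℝ) = m := by rw [hn]; norm_cast
    rw [gnorm_eq] at h1
    push_cast at h1
    rw [← GaussianInt.intCast_re, ← GaussianInt.intCast_im]
    linarith
  have hl : lpt m z = pt (Complex.arg z) := by
    refine en_ext ?_ ?_
    · rw [lpt_zero, pt_zero, Complex.cos_arg hz0, hnorm, ← GaussianInt.intCast_re]
    · rw [lpt_one, pt_one, Complex.sin_arg, hnorm, ← GaussianInt.intCast_im]
  have hturn : ∀ n : ℤ, (turn z + n ∈ Set.Icc (a / (2 * π)) (b / (2 * π)) ↔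
      Complex.arg z + 2 * π * n ∈ Set.Icc a b) := by
    intro n
    have e : turn z + n = (Complex.arg z + 2 * π * n) / (2 * π) := by
      unfold turn; field_simp
    rw [e, Set.mem_Icc, Set.mem_Icc, div_le_div_iff_of_pos_right hpi,
      div_le_div_iff_of_pos_right hpi]
  simp_rw [hturn]
  rw [hl, arc_eq]
  constructor
  · rintro ⟨θ, hθ, h⟩
    rw [← cpt_coe, ← cpt_coe] at h
    obtain ⟨n, hn⟩ := (Real.Angle.angle_eq_iff_two_pi_dvd_sub).1 (cpt_injective h)
    refine ⟨n, ?_⟩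
    rw [← hn, add_sub_cancel]; exact hθ
  · rintro ⟨n, hn⟩
    refine ⟨_, hn, ?_⟩
    rw [← cpt_coe, ← cpt_coe]
    congr 1
    exact (Real.Angle.angle_eq_iff_two_pi_dvd_sub).2 ⟨n, by ring⟩

lemma rho_arc {m : ℕ} (hm : m ≠ 0) (a b : ℝ) : (rhoM 2 m (arc a b)).toReal =
    (∑ z ∈ gs m, Set.indicator {x : ℝ | ∃ n : ℤ, x + n ∈ Set.Icc (a / (2 * π)) (b / (2 * π))}
      (fun _ => (1 : ℝ)) (turn z)) / (gs m).card := by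
  classical
  have hr : rcnt 2 m = (gs m).card := by
    unfold rcnt
    rw [Lam_eq hm, Nat.card_image_of_injective (lpt_injective hm), Nat.card_eq_card_toFinset]
    simp
  have hmeas : MeasurableSet (arc a b) := by
    rw [arc_eq]
    exact (isCompact_Icc.image pt_lipschitz.continuous).isClosed.measurableSet
  have hset : arc a b ∩ Lam 2 m =
      (((gs m).filter fun z => lpt m z ∈ arc a b).image (lpt m) : Finset (En 2)) := by
    rw [Lam_eq hm]
    ext x
    simp only [Set.mem_inter_iff, Set.mem_image, Finset.coe_image, Finset.coe_filter, Set.mem_ofPred_eq,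
      Finset.mem_coe]
    constructor
    · rintro ⟨h1, z, hz, rfl⟩
      exact ⟨z, ⟨hz, h1⟩, rfl⟩
    · rintro ⟨z, ⟨hz, h1⟩, rfl⟩
      exact ⟨h1, z, hz, rfl⟩
  unfold rhoM
  rw [hr, Measure.smul_apply, Measure.restrict_apply hmeas, hset, Measure.count_apply_finset,
    Finset.card_image_of_injective _ (lpt_injective hm), smul_eq_mul, ENNReal.toReal_mul,
    ENNReal.toReal_inv, ENNReal.toReal_natCast, ENNReal.toReal_natCast, inv_mul_eq_div]
  congr 1
  rw [Finset.card_filter, Nat.cast_sum]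
  refine Finset.sum_congr rfl fun z hz => ?_
  rw [Set.indicator_apply, Nat.cast_ite, Nat.cast_one, Nat.cast_zero]
  exact if_congr (lpt_mem_arc hz a b) rfl rfl

/-- The discrepancy of `Λ_m` is controlled by the first Fourier coefficients. -/
lemma disc_main {m : ℕ} (hm : m ∈ S₂) {s : ℝ} (hs : 0 < s) (hs1 : s ≤ 1) (H : ℕ) (hH : 1 ≤ H)
    {a b : ℝ} (hab : a ≤ b) :
    |(rhoM 2 m (arc a b)).toReal - (unifSphere 2 (arc a b)).toReal| ≤
      s + ∑ l ∈ Finset.Icc 1 H, gl l m / l + 1 / (s * H) := by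
  have hpi := Real.two_pi_pos
  have hm0 : m ≠ 0 := by have := hm.1; omega
  have hcard : (0 : ℝ) < (gs m).card := by
    exact_mod_cast Finset.card_pos.2 (gs_nonempty_iff.2 hm)
  rw [rho_arc hm0, unif_arc hab]
  rcases lt_or_ge (b / (2 * π) - a / (2 * π)) 1 with h | h
  · have hd := disc_gs m hs hs1 H hH (div_le_div_of_nonneg_right hab hpi.le) h
    rw [← sub_div] at h hd
    rw [min_eq_right h.le]
    set D := ∑ z ∈ gs m, Set.indicator {x : ℝ | ∃ n : ℤ, x + n ∈ Set.Icc (a / (2 * π)) (b / (2 * π))}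
      (fun _ => (1 : ℝ)) (turn z)
    have e : D / (gs m).card - (b - a) / (2 * π) =
        (D - (gs m).card * ((b - a) / (2 * π))) / (gs m).card := by field_simp
    rw [e, abs_div, abs_of_pos hcard, div_le_iff₀ hcard]
    exact hd.trans (le_of_eq (mul_comm _ _))
  · have hone : ∀ z ∈ gs m, Set.indicator {x : ℝ | ∃ n : ℤ, x + n ∈
        Set.Icc (a / (2 * π)) (b / (2 * π))} (fun _ => (1 : ℝ)) (turn z) = 1 := by
      intro z _
      have hmem : turn z ∈ {x : ℝ | ∃ n : ℤ, x + n ∈ Set.Icc (a / (2 * π)) (b / (2 * π))} :=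
        ⟨⌈a / (2 * π) - turn z⌉, by linarith [Int.le_ceil (a / (2 * π) - turn z)],
          by linarith [Int.ceil_lt_add_one (a / (2 * π) - turn z)]⟩
      exact Set.indicator_of_mem hmem _
    rw [← sub_div] at h
    rw [Finset.sum_congr rfl hone, min_eq_left h, Finset.sum_const, nsmul_eq_mul, mul_one, div_self hcard.ne', sub_self, abs_zero]
    have : 0 ≤ ∑ l ∈ Finset.Icc 1 H, gl l m / l :=
      Finset.sum_nonneg fun l _ => div_nonneg (gl_nonneg l m) (Nat.cast_nonneg l)
    positivity

/-! ### Exceptional sets -/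

lemma exponent_lt {y : ℝ} (hy0 : 0 < y) (hy1 : y < 1) :
    y / 2 - 1 - y / 2 * Real.log y < -(1 / 2) := by
  have h := Real.log_lt_sub_one_of_pos (inv_pos.2 hy0) (by rw [Ne, inv_eq_one]; exact hy1.ne)
  rw [Real.log_inv] at h
  have h2 := mul_lt_mul_of_pos_left h hy0
  rw [mul_sub, mul_inv_cancel₀ hy0.ne'] at h2
  linarith

open Classical in
/-- Sums of two squares with noticeably fewer than `(log log N) / 2` prime factors are rare
(Rankin's trick). -/
lemma few_primes {y : ℝ} (hy0 : 0 < y) (hy1 : y < 1) : ∃ C, 0 < C ∧ ∀ N : ℕ, 3 ≤ N →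
    (((Finset.Ioc 0 N).filter fun m => m ∈ S₂ ∧
      (m.primeFactors.card : ℝ) < y / 2 * Real.log (Real.log N)).card : ℝ) ≤
      C * (N * Real.log N ^ (y / 2 - 1 - y / 2 * Real.log y)) := by
  classical
  obtain ⟨C, hC, h⟩ := sum_sInd_pow hy0 hy1.le
  refine ⟨C, hC, fun N hN => ?_⟩
  have hL : 0 < Real.log N := by linarith [one_le_log_nat hN]
  set L := Real.log N
  set t := y / 2 * Real.log L
  have hyt : (0 : ℝ) < y ^ t := Real.rpow_pos_of_pos hy0 _
  have e : y ^ t = L ^ (y / 2 * Real.log y) := by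
    rw [Real.rpow_def_of_pos hy0, Real.rpow_def_of_pos hL]; congr 1; simp only [t]; ring
  -- since `y ≤ 1`, an `m` with fewer than `t` prime factors has `y ^ ω(m) ≥ y ^ t`
  have h1 : (((Finset.Ioc 0 N).filter fun m => m ∈ S₂ ∧
      (m.primeFactors.card : ℝ) < t).card : ℝ) * y ^ t ≤
      ∑ n ∈ Finset.Ioc 0 N, sInd n * y ^ n.primeFactors.card := by
    rw [← nsmul_eq_mul, ← Finset.sum_const, Finset.sum_filter]
    refine Finset.sum_le_sum fun m _ => ?_
    split_ifs with hm
    · rw [sInd_of_mem hm.1, one_mul, ← Real.rpow_natCast]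
      exact Real.rpow_le_rpow_of_exponent_ge hy0 hy1.le hm.2.le
    · exact mul_nonneg (sInd_nonneg m) (pow_nonneg hy0.le _)
  have h2 := h1.trans (h N hN)
  rw [← le_div_iff₀ hyt] at h2
  refine h2.trans (le_of_eq ?_)
  rw [e, Real.rpow_sub hL (y / 2 - 1)]
  ring

/-- Among integers with at least `(y/2) log log N` prime factors, the normalised exponential sums
of frequency up to `H` are rarely large on average (Markov's inequality). -/
lemma many_primes {y δ : ℝ} (hδ : 0 < δ) : ∃ C, 0 < C ∧ ∀ (N H : ℕ) (X : ℝ), 3 ≤ N → 0 < X →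
    (((Finset.Ioc 0 N).filter fun m => y / 2 * Real.log (Real.log N) ≤ m.primeFactors.card ∧
      X ≤ ∑ l ∈ Finset.Icc 1 H, gl l m / l).card : ℝ) ≤
      C * ((H : ℝ) ^ (2 * δ) * (N * Real.log N ^ (-(1 / 2) + δ)) /
        (X * Real.log N ^ (y / 2 * Real.log (π / 2)))) := by
  classical
  obtain ⟨C, hC, h⟩ := sum_gl hδ
  have hsum : Summable fun n : ℕ => (n : ℝ) ^ (-1 - δ) := Real.summable_nat_rpow.2 (by linarith)
  have hK0 : 0 ≤ ∑' n : ℕ, (n : ℝ) ^ (-1 - δ) :=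
    tsum_nonneg fun n => Real.rpow_nonneg (Nat.cast_nonneg n) _
  set K := ∑' n : ℕ, (n : ℝ) ^ (-1 - δ)
  refine ⟨C * (K + 1), by positivity, fun N H X hN hX => ?_⟩
  have hL : 0 < Real.log N := by linarith [one_le_log_nat hN]
  set L := Real.log N
  set t := y / 2 * Real.log L
  have hp : (0 : ℝ) < π / 2 := by positivity
  have hp1 : 1 ≤ π / 2 := by linarith [Real.pi_gt_three]
  have e : (π / 2) ^ t = L ^ (y / 2 * Real.log (π / 2)) := by
    rw [Real.rpow_def_of_pos hp, Real.rpow_def_of_pos hL]; congr 1; simp only [t]; ring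
  rw [← e]
  have hD : 0 < X * (π / 2) ^ t := mul_pos hX (Real.rpow_pos_of_pos hp _)
  rw [mul_div_assoc', le_div_iff₀ hD]
  -- Markov, with the weight `(π / 2) ^ ω(m) ≥ (π / 2) ^ t`
  have h1 : (((Finset.Ioc 0 N).filter fun m => t ≤ m.primeFactors.card ∧
      X ≤ ∑ l ∈ Finset.Icc 1 H, gl l m / l).card : ℝ) * (X * (π / 2) ^ t) ≤
      ∑ n ∈ Finset.Ioc 0 N, (∑ l ∈ Finset.Icc 1 H, gl l n / l) * (π / 2) ^ n.primeFactors.card := by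
    rw [← nsmul_eq_mul, ← Finset.sum_const, Finset.sum_filter]
    refine Finset.sum_le_sum fun m _ => ?_
    have h0 : 0 ≤ ∑ l ∈ Finset.Icc 1 H, gl l m / l :=
      Finset.sum_nonneg fun l _ => div_nonneg (gl_nonneg l m) (Nat.cast_nonneg l)
    split_ifs with hm
    · refine mul_le_mul hm.2 ?_ (Real.rpow_nonneg hp.le _) h0
      rw [← Real.rpow_natCast]
      exact Real.rpow_le_rpow_of_exponent_le hp1 hm.1
    · exact mul_nonneg h0 (pow_nonneg hp.le _)
  refine h1.trans ?_
  have hA : 0 ≤ (N : ℝ) * L ^ (-(1 / 2) + δ) :=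
    mul_nonneg (Nat.cast_nonneg N) (Real.rpow_nonneg hL.le _)
  calc ∑ n ∈ Finset.Ioc 0 N, (∑ l ∈ Finset.Icc 1 H, gl l n / l) * (π / 2) ^ n.primeFactors.card
      = ∑ l ∈ Finset.Icc 1 H, (∑ n ∈ Finset.Ioc 0 N, gl l n * (π / 2) ^ n.primeFactors.card) / l := by
        simp_rw [Finset.sum_mul, Finset.sum_div]
        rw [Finset.sum_comm]
        exact Finset.sum_congr rfl fun l _ => Finset.sum_congr rfl fun n _ => by ring
    _ ≤ ∑ l ∈ Finset.Icc 1 H,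
          (l : ℝ) ^ (-1 - δ) * (C * ((H : ℝ) ^ (2 * δ) * (N * L ^ (-(1 / 2) + δ)))) := by
        refine Finset.sum_le_sum fun l hl => ?_
        obtain ⟨hl1, hlH⟩ := Finset.mem_Icc.1 hl
        have hl0 : (0 : ℝ) < l := by exact_mod_cast hl1
        rw [div_le_iff₀ hl0]
        refine (h l N hl1 hN).trans ?_
        -- `l ^ δ / l = l ^ (-1 - δ) * l ^ (2 * δ)`, and `∑ l ^ (-1 - δ)` converges
        have e2 : (l : ℝ) ^ δ = (l : ℝ) ^ (-1 - δ) * (l : ℝ) ^ (2 * δ) * l := by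
          rw [← Real.rpow_add hl0]
          conv_rhs => rw [← Real.rpow_add_one hl0.ne']
          congr 1; ring
        have e3 : (l : ℝ) ^ (2 * δ) ≤ (H : ℝ) ^ (2 * δ) :=
          Real.rpow_le_rpow hl0.le (by exact_mod_cast hlH) (by positivity)
        have e4 : 0 ≤ (l : ℝ) ^ (-1 - δ) := Real.rpow_nonneg hl0.le _
        rw [e2]
        have e5 := mul_le_mul_of_nonneg_right (mul_le_mul_of_nonneg_left e3 e4)
          (mul_nonneg (mul_nonneg hC.le hA) hl0.le)
        linarith
    _ ≤ C * (K + 1) * ((H : ℝ) ^ (2 * δ) * (N * L ^ (-(1 / 2) + δ))) := by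
        rw [← Finset.sum_mul]
        have h3 : ∑ l ∈ Finset.Icc 1 H, (l : ℝ) ^ (-1 - δ) ≤ K + 1 :=
          (hsum.sum_le_tsum _ fun n _ => Real.rpow_nonneg (Nat.cast_nonneg n) _).trans
            (by simp only [K]; linarith)
        have h4 : 0 ≤ C * ((H : ℝ) ^ (2 * δ) * (N * L ^ (-(1 / 2) + δ))) :=
          mul_nonneg hC.le (mul_nonneg (Real.rpow_nonneg (Nat.cast_nonneg H) _) hA)
        have h5 := mul_le_mul_of_nonneg_right h3 h4
        linarith

/-- Density one follows from a bound `o(N / √log N)` for the exceptional set. -/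
lemma density_one {A : Set ℕ} (hA : A ⊆ S₂) {f : ℕ → ℝ} (hf : Tendsto f atTop (nhds 0))
    (h : ∀ᶠ N : ℕ in atTop, (((S₂ \ A) ∩ Set.Icc 1 N).ncard : ℝ) ≤
      f N * (N / Real.sqrt (Real.log N))) :
    HasRelDensityOne A S₂ := by
  classical
  obtain ⟨c, hc, hcount⟩ := count_lower
  unfold HasRelDensityOne
  have hlim : Tendsto (fun N => 1 - f N / c) atTop (nhds 1) := by
    have := (hf.div_const c).const_sub 1
    simpa using this
  have hS : ∀ N : ℕ, ((S₂ ∩ Set.Icc 1 N).ncard : ℝ) = ∑ n ∈ Finset.Ioc 0 N, sInd n := by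
    intro N
    have e : S₂ ∩ Set.Icc 1 N = ((Finset.Ioc 0 N).filter (· ∈ S₂) : Finset ℕ) := by
      ext m
      simp only [Set.mem_inter_iff, Set.mem_Icc, Finset.coe_filter, Finset.mem_Ioc, Set.mem_ofPred_eq,
        Nat.succ_le_iff]
      tauto
    rw [e, Set.ncard_coe_finset, Finset.card_filter, Nat.cast_sum]
    refine Finset.sum_congr rfl fun m _ => ?_
    split_ifs with hm
    · rw [sInd_of_mem hm, Nat.cast_one]
    · rw [sInd_of_notMem hm, Nat.cast_zero]
  have hsplit : ∀ N : ℕ, ((A ∩ Set.Icc 1 N).ncard : ℝ) + ((S₂ \ A) ∩ Set.Icc 1 N).ncard =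
      (S₂ ∩ Set.Icc 1 N).ncard := by
    intro N
    have fin : ∀ B : Set ℕ, (B ∩ Set.Icc 1 N).Finite := fun B =>
      (Set.finite_Icc 1 N).subset Set.inter_subset_right
    rw [← Nat.cast_add, ← Set.ncard_union_eq _ (fin _) (fin _), ← Set.union_inter_distrib_right,
      Set.union_sdiff_cancel hA]
    rw [Set.disjoint_left]
    rintro x ⟨hx, _⟩ ⟨⟨_, hx2⟩, _⟩
    exact hx2 hx
  refine tendsto_of_tendsto_of_tendsto_of_le_of_le' hlim tendsto_const_nhds ?_ ?_
  · filter_upwards [h, hcount, eventually_ge_atTop 3] with N h1 h2 h3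
    have hL : 0 < Real.log N := by linarith [one_le_log_nat h3]
    have hN : (0 : ℝ) < N := by positivity
    have hq : 0 < (N : ℝ) / Real.sqrt (Real.log N) := div_pos hN (Real.sqrt_pos.2 hL)
    rw [Nat.card_coe_set_eq, Nat.card_coe_set_eq]
    rw [mul_div_assoc, ← hS] at h2
    have hpos : (0 : ℝ) < (S₂ ∩ Set.Icc 1 N).ncard := (mul_pos hc hq).trans_le h2
    rw [le_div_iff₀ hpos]
    have hfN : 0 ≤ f N := by
      have : 0 ≤ f N * (N / Real.sqrt (Real.log N)) := le_trans (Nat.cast_nonneg _) h1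
      exact nonneg_of_mul_nonneg_left this hq
    have h4 : f N * (N / Real.sqrt (Real.log N)) ≤ f N / c * (S₂ ∩ Set.Icc 1 N).ncard := by
      rw [div_mul_eq_mul_div, le_div_iff₀ hc, mul_assoc]
      refine mul_le_mul_of_nonneg_left ?_ hfN
      linarith
    have := hsplit N
    linarith
  · filter_upwards with N
    rw [Nat.card_coe_set_eq, Nat.card_coe_set_eq]
    refine div_le_one_of_le₀ ?_ (Nat.cast_nonneg _)
    have := hsplit N
    have h5 : (0 : ℝ) ≤ ((S₂ \ A) ∩ Set.Icc 1 N).ncard := Nat.cast_nonneg _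
    linarith

/-- The set of `m ∈ S₂` whose discrepancy over arcs is less than `(log m) ^ e`. -/
def goodSet (e : ℝ) : Set ℕ :=
  {m ∈ S₂ | ∀ a b : ℝ, a ≤ b →
    |(rhoM 2 m (arc a b)).toReal - (unifSphere 2 (arc a b)).toReal| < Real.log m ^ e}

/-- Large discrepancy of `m ≤ N` forces large exponential sums of frequency up to `log N`. -/
lemma exceptional {κ ε e : ℝ} (hκ : 2 * κ ≤ 1) (hκ0 : 0 < κ) (hεκ : ε ≤ κ) (he : ε ≤ e) {m N : ℕ} (hm : m ∈ S₂)
    (hm3 : 3 ≤ m) (hmN : m ≤ N) (hN : 4 ≤ Real.log N ^ ε) (hbad : m ∉ goodSet (-κ + e)) :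
    Real.log N ^ (-κ + ε) / 2 ≤ ∑ l ∈ Finset.Icc 1 ⌈Real.log N⌉₊, gl l m / l := by
  have hL1 : 1 ≤ Real.log N := one_le_log_nat (hm3.trans hmN)
  have hm1 : 1 ≤ Real.log m := one_le_log_nat hm3
  have hLm : Real.log m ≤ Real.log N :=
    Real.log_le_log (by positivity) (by exact_mod_cast hmN)
  set L := Real.log N
  have hL : 0 < L := by linarith
  have h1 : ∃ a b : ℝ, a ≤ b ∧ Real.log m ^ (-κ + e) ≤
      |(rhoM 2 m (arc a b)).toReal - (unifSphere 2 (arc a b)).toReal| := by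
    by_contra! hcon
    exact hbad ⟨hm, hcon⟩
  obtain ⟨a, b, hab, h2⟩ := h1
  have h3 : L ^ (-κ + ε) ≤ Real.log m ^ (-κ + ε) :=
    Real.rpow_le_rpow_of_nonpos (by linarith) hLm (by linarith)
  have h3' : Real.log m ^ (-κ + ε) ≤ Real.log m ^ (-κ + e) :=
    Real.rpow_le_rpow_of_exponent_le hm1 (by linarith)
  have hs : 0 < L ^ (-κ) := Real.rpow_pos_of_pos hL _
  have hs1 : L ^ (-κ) ≤ 1 := Real.rpow_le_one_of_one_le_of_nonpos hL1 (by linarith)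
  have hH : L ≤ ⌈L⌉₊ := Nat.le_ceil L
  -- Erdős–Turán with smoothing length `s = L ^ (-κ)` and `⌈L⌉` frequencies; the error `1 / (s * ⌈L⌉)`
  -- is at most `s` because `2 * κ ≤ 1`
  have h4 := disc_main hm hs hs1 ⌈L⌉₊ (Nat.one_le_ceil_iff.2 hL) hab
  have h5 : 1 / (L ^ (-κ) * ⌈L⌉₊) ≤ L ^ (-κ) := by
    rw [div_le_iff₀ (mul_pos hs (hL.trans_le hH))]
    have h6 : L ^ (-κ) * L ^ (-κ) * L = L ^ (1 - 2 * κ) := by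
      rw [← Real.rpow_add hL, ← Real.rpow_add_one hL.ne']; congr 1; ring
    have h7 : 1 ≤ L ^ (1 - 2 * κ) := Real.one_le_rpow hL1 (by linarith)
    have h8 := mul_le_mul_of_nonneg_left hH (mul_pos hs hs).le
    linarith
  have h9 : 4 * L ^ (-κ) ≤ L ^ (-κ + ε) := by
    rw [Real.rpow_add hL, mul_comm]
    exact mul_le_mul_of_nonneg_left hN hs.le
  linarith

/-- Density one of `goodSet`. The parameter `ε ≤ κ` may be smaller than the final exponent `e`,
since the estimates need a nonpositive power of `log m`. -/
lemma main_small {κ ε e : ℝ} (hκ : κ = Real.log (π / 2) / 2) (hε : 0 < ε) (hεκ : ε ≤ κ) (he : ε ≤ e) :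
    HasRelDensityOne (goodSet (-κ + e)) S₂ := by
  classical
  have hp1 : 1 < π / 2 := by linarith [Real.pi_gt_three]
  have hκ0 : 0 < κ := hε.trans_le hεκ
  have hκ1 : 2 * κ ≤ 1 := by
    have := Real.log_le_sub_one_of_pos (show 0 < π / 2 by linarith)
    linarith [Real.pi_lt_four]
  -- with `δ = ε / 8`, the factors `H ^ (2 * δ)` and `(log N) ^ δ` in `many_primes` and the loss from
  -- `y = 1 - 2 * δ` together cost at most `(log N) ^ (ε / 2)`
  set δ := ε / 8 with hδdef
  have hδ : 0 < δ := by positivity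
  have hy0 : 0 < 1 - 2 * δ := by linarith
  have hy1 : 1 - 2 * δ < 1 := by linarith
  obtain ⟨C₁, hC₁, hfew⟩ := few_primes hy0 hy1
  obtain ⟨C₂, hC₂, hmany⟩ := many_primes (y := 1 - 2 * δ) hδ
  set y := 1 - 2 * δ with hydef
  set η := -(1 / 2) - (y / 2 - 1 - y / 2 * Real.log y) with hηdef
  have hη : 0 < η := by have := exponent_lt hy0 hy1; linarith
  set C₃ := C₂ * (2 * 2 ^ (2 * δ)) with hC₃def
  have hlog : Tendsto (fun N : ℕ => Real.log N) atTop atTop :=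
    Real.tendsto_log_atTop.comp tendsto_natCast_atTop_atTop
  refine density_one (f := fun N : ℕ => 2 * (Real.log N / N) + C₁ * Real.log N ^ (-η) +
    C₃ * Real.log N ^ (-(ε / 2))) (fun m hm => hm.1) ?_ ?_
  · have t1 : Tendsto (fun N : ℕ => Real.log N / N) atTop (nhds 0) :=
      Real.isLittleO_log_id_atTop.tendsto_div_nhds_zero.comp tendsto_natCast_atTop_atTop
    have t2 := (tendsto_rpow_neg_atTop hη).comp hlog
    have t3 := (tendsto_rpow_neg_atTop (half_pos hε)).comp hlog
    have t := ((t1.const_mul 2).add (t2.const_mul C₁)).add (t3.const_mul C₃)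
    simpa using t
  · filter_upwards [eventually_ge_atTop 3,
      ((tendsto_rpow_atTop hε).comp hlog).eventually_ge_atTop 4] with N hN hN4
    have hL1 : 1 ≤ Real.log N := one_le_log_nat hN
    have hN0 : (0 : ℝ) < N := by positivity
    simp only [Function.comp_apply] at hN4
    set L := Real.log N with hLdef
    have hL : 0 < L := by linarith
    set X := L ^ (-κ + ε) / 2 with hXdef
    have hX : 0 < X := half_pos (Real.rpow_pos_of_pos hL _)
    set F₁ := (Finset.Ioc 0 N).filter fun m => m ∈ S₂ ∧
      (m.primeFactors.card : ℝ) < y / 2 * Real.log L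
    set F₂ := (Finset.Ioc 0 N).filter fun m => y / 2 * Real.log L ≤ m.primeFactors.card ∧
      X ≤ ∑ l ∈ Finset.Icc 1 ⌈L⌉₊, gl l m / l
    -- `m < 3` is set aside because `1 ≤ log m` fails there
    have hsub : (S₂ \ goodSet (-κ + e)) ∩ Set.Icc 1 N ⊆
        (({1, 2} ∪ F₁ ∪ F₂ : Finset ℕ) : Set ℕ) := by
      rintro m ⟨⟨hm, hbad⟩, h1, h2⟩
      have hIoc : m ∈ Finset.Ioc 0 N := Finset.mem_Ioc.2 ⟨h1, h2⟩
      rw [Finset.mem_coe, Finset.mem_union, Finset.mem_union]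
      rcases lt_or_ge m 3 with h3 | h3
      · left; left
        interval_cases m <;> simp
      · rcases lt_or_ge (m.primeFactors.card : ℝ) (y / 2 * Real.log L) with h4 | h4
        · exact Or.inl (Or.inr (Finset.mem_filter.2 ⟨hIoc, hm, h4⟩))
        · exact Or.inr (Finset.mem_filter.2 ⟨hIoc, h4,
            exceptional hκ1 hκ0 hεκ he hm h3 h2 hN4 hbad⟩)
    have hcard : (((S₂ \ goodSet (-κ + e)) ∩ Set.Icc 1 N).ncard : ℝ) ≤
        2 + F₁.card + F₂.card := by
      have h1 := Set.ncard_le_ncard hsub (Finset.finite_toSet _)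
      rw [Set.ncard_coe_finset] at h1
      have h2 := h1.trans ((Finset.card_union_le _ _).trans
        (add_le_add_left (Finset.card_union_le _ _) _))
      have h3 : ({1, 2} : Finset ℕ).card = 2 := by simp
      rw [h3] at h2
      exact_mod_cast h2
    have hq : (N : ℝ) / Real.sqrt L = N * L ^ (-(1 / 2 : ℝ)) := by
      rw [Real.rpow_neg hL.le, ← Real.sqrt_eq_rpow]; rfl
    have b0 : 2 ≤ 2 * (L / N) * (N * L ^ (-(1 / 2 : ℝ))) := by
      have : 2 * (L / N) * (N * L ^ (-(1 / 2 : ℝ))) = 2 * L ^ (1 / 2 : ℝ) := by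
        have : L ^ (1 / 2 : ℝ) = L * L ^ (-(1 / 2 : ℝ)) := by
          rw [mul_comm, ← Real.rpow_add_one hL.ne']; norm_num
        rw [this]; field_simp
      rw [this]
      linarith [Real.one_le_rpow hL1 (show (0 : ℝ) ≤ 1 / 2 by norm_num)]
    have b1 : (F₁.card : ℝ) ≤ C₁ * L ^ (-η) * (N * L ^ (-(1 / 2 : ℝ))) := by
      refine (hfew N hN).trans (le_of_eq ?_)
      have : L ^ (y / 2 - 1 - y / 2 * Real.log y) = L ^ (-η) * L ^ (-(1 / 2 : ℝ)) := by
        rw [← Real.rpow_add hL]; congr 1; rw [hηdef]; ring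
      rw [← hLdef, this]; ring
    have b2 : (F₂.card : ℝ) ≤ C₃ * L ^ (-(ε / 2)) * (N * L ^ (-(1 / 2 : ℝ))) := by
      refine (hmany N ⌈L⌉₊ X hN hX).trans ?_
      have hceil : ((⌈L⌉₊ : ℕ) : ℝ) ≤ 2 * L := by linarith [Nat.ceil_lt_add_one hL.le]
      have hc1 : ((⌈L⌉₊ : ℕ) : ℝ) ^ (2 * δ) ≤ 2 ^ (2 * δ) * L ^ (2 * δ) := by
        rw [← Real.mul_rpow (by norm_num) hL.le]
        exact Real.rpow_le_rpow (Nat.cast_nonneg _) hceil (by positivity)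
      have hden : X * L ^ (y / 2 * Real.log (π / 2)) = L ^ (ε - 2 * δ * κ) / 2 := by
        rw [hXdef, div_mul_eq_mul_div, ← Real.rpow_add hL]
        congr 2
        rw [hκ, hydef]; ring
      have hexp : L ^ (2 * δ) * L ^ (-(1 / 2) + δ) ≤
          L ^ (-(ε / 2)) * L ^ (-(1 / 2 : ℝ)) * L ^ (ε - 2 * δ * κ) := by
        rw [← Real.rpow_add hL, ← Real.rpow_add hL, ← Real.rpow_add hL]
        refine Real.rpow_le_rpow_of_exponent_le hL1 ?_
        have := mul_le_mul_of_nonneg_left hκ1 hδ.le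
        linarith
      have hpos : 0 < L ^ (ε - 2 * δ * κ) := Real.rpow_pos_of_pos hL _
      rw [← hLdef, hden, hC₃def, mul_assoc C₂, mul_assoc C₂]
      refine mul_le_mul_of_nonneg_left ?_ hC₂.le
      rw [div_le_iff₀ (half_pos hpos)]
      have hA : 0 ≤ (N : ℝ) * L ^ (-(1 / 2) + δ) :=
        mul_nonneg hN0.le (Real.rpow_nonneg hL.le _)
      have h2 : (0 : ℝ) ≤ 2 ^ (2 * δ) * N := by positivity
      calc _ ≤ 2 ^ (2 * δ) * L ^ (2 * δ) * (N * L ^ (-(1 / 2) + δ)) :=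
            mul_le_mul_of_nonneg_right hc1 hA
        _ = 2 ^ (2 * δ) * N * (L ^ (2 * δ) * L ^ (-(1 / 2) + δ)) := by ring
        _ ≤ _ := mul_le_mul_of_nonneg_left hexp h2
        _ = _ := by ring
    rw [hq]
    linarith

end EH

theorem stmt9 (κ : ℝ) (hκ : κ = Real.log (Real.pi / 2) / 2) (ε : ℝ) (hε : 0 < ε) :
    HasRelDensityOne
      {m ∈ S₂ | ∀ a b : ℝ, a ≤ b →
        |(rhoM 2 m (arc a b)).toReal - (unifSphere 2 (arc a b)).toReal| <
          Real.log m ^ (-κ + ε)}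
      S₂ := by
  have hκ0 : 0 < κ := by rw [hκ]; exact half_pos (Real.log_pos (by linarith [Real.pi_gt_three]))
  exact EH.main_small hκ (lt_min hε hκ0) (min_le_right ε κ) (min_le_left ε κ)

end
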